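/- For every n ≥ 1 and every sequence (ε₁,…,ε_n) ∈ {0,1}^n, the gauge-transformed boundary solution S̃₀^{1,1}(z) commutes with the type-B generalized quantum group action: with the type-B actions π_x on the first tensor factor and π_y on the second, specialized at x = z, y = 1 (scalars in the field of formal Laurent series in z over ℂ(q^{1/2})), one has Δ'(g) ∘ S̃₀^{1,1}(z) = S̃₀^{1,1}(z) ∘ Δ(g) as endomorphisms of 𝒲⊗𝒲 for every g ∈ {e_i, f_i, k_i^{±1} : 0 ≤ i ≤ n}. -/

import Mathlib

/-!
Why the intertwining holds. Up to the diagonal gauge factors, `S̃₀^{1,1}(z)` is a chain of `n`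
one-site weights `S^(ε)` (the 3D `R` or the 3D `L`) glued along the third index, closed by boundary
vectors with coefficients `(q²;q²)_N/(q;q)_N` on the left and `1/(q;q)_m` on the right. Both
coproducts of `e_r` and of `f_r` are sums of two tensor products of weighted shifts of the basis, so
each commutation relation is an identity with four terms between matrix elements, in which only the
sites touched by the generator matter.

* One site. Both `R` and `L` satisfy the same eight three-term relations (`SZ_rels`), which trade
  a shift of the outputs `a, b` for shifts of the inputs `i, j, k`, or a shift of the inputs `i, j`
  for shifts of the outputs `a, b, c`. For `L` they are a finite check (`SZ_L_rels`). For `R` they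
  are the intertwining relations for the `q`-oscillator algebra. They are proved by induction on
  the input `j`: the function `rr` is defined by the recursion in `j` coming from one of these
  relations, starting from the explicit product `rb` at `j = 0`, and it agrees with the defining
  double sum because the summands satisfy the same recursion up to a telescoping term (`tm_rec`,
  `tX_tY`, `R3_eq`).
* Two neighbouring sites. For `e_r, f_r` with `0 < r < n`, applying the one-site relations on the
  left site to one side of the identity and on the right site to the other side produces the same
  four products (`mid_e`, `mid_f`).
* The boundaries. For `r = 0` and `r = n` the one-site relations combine with the ratios `1 + q^N`
  and `1 - q^m` of consecutive boundary coefficients (`left_e`, `left_f`, `right_e`, `right_f`).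
  The condition `p² = -q⁻¹` on the gauge parameter enters here, for `e₀` and `e_n`.
* The chain. By conservation `b + c = j + k` at each site, the third indices are determined by the
  external ones and by `N`, so that the coefficient of `z^N` is the single product `bdZ`
  (`bdCoef_eq`), and the local identities extend to it (`bdZ_mid_e` and its companions). All labels
  are taken in `ℤ`, with weights extended by zero, so that out-of-range kets need no special case.
* The generators `k_r` are diagonal, with eigenvalues depending only on `a + b` (`comm_diag`).
-/

open scoped BigOperators

set_option synthInstance.maxHeartbeats 1000000
set_option maxHeartbeats 1000000

noncomputable section

namespace TetraGQ

/-! ## Scalar ingredients -/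

/-- `(a;qb)_m = ∏_{k=0}^{m-1} (1 - a qb^k)`. -/
def poch (qb a : ℂ) (m : ℕ) : ℂ := ∏ k ∈ Finset.range m, (1 - a * qb ^ k)

/-- The `q`-binomial `binom(m,k)_qb`, zero unless `k ≤ m`. -/
def qbinom (qb : ℂ) (m k : ℕ) : ℂ :=
  if k ≤ m then poch qb qb m / (poch qb qb k * poch qb qb (m - k)) else 0

/-- `[m] = (q^m - q^{-m})/(q - q^{-1})`. -/
def qnum (q : ℂ) (m : ℕ) : ℂ := (q ^ m - q⁻¹ ^ m) / (q - q⁻¹)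

/-- `[m]! = ∏_{k=1}^m [k]`. -/
def qfac (q : ℂ) (m : ℕ) : ℂ := ∏ k ∈ Finset.range m, qnum q (k + 1)

/-- The symmetric `q`-binomial `[m choose k]`, zero unless `k ≤ m`. -/
def qbin (q : ℂ) (m k : ℕ) : ℂ :=
  if k ≤ m then qfac q m / (qfac q k * qfac q (m - k)) else 0

/-- The 3D `R` matrix entry `R^{a,b,c}_{i,j,k}`. -/
def R3 (q : ℂ) (a b c i j k : ℕ) : ℂ :=
  (if a + b = i + j ∧ b + c = j + k then (1 : ℂ) else 0) *
    ∑ lam ∈ Finset.range (b + 1),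
      (-1 : ℂ) ^ lam *
        q ^ ((i : ℤ) * ((c : ℤ) - (j : ℤ)) + ((k : ℤ) + 1) * (lam : ℤ) +
            ((b : ℤ) - (lam : ℤ)) * ((b : ℤ) - (lam : ℤ) - (k : ℤ))) *
        (poch (q ^ 2) (q ^ 2) (c + (b - lam)) / poch (q ^ 2) (q ^ 2) c) *
        qbinom (q ^ 2) i (b - lam) * qbinom (q ^ 2) j lam

/-- The 3D `L` matrix entry `L^{a,b,c}_{i,j,k}`. -/
def L3 (q : ℂ) (a b c i j k : ℕ) : ℂ :=
  if a = 0 ∧ b = 0 ∧ i = 0 ∧ j = 0 ∧ c = k then 1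
  else if a = 1 ∧ b = 1 ∧ i = 1 ∧ j = 1 ∧ c = k then 1
  else if a = 0 ∧ b = 1 ∧ i = 0 ∧ j = 1 ∧ c = k then -q ^ (k + 1)
  else if a = 1 ∧ b = 0 ∧ i = 1 ∧ j = 0 ∧ c = k then q ^ k
  else if a = 0 ∧ b = 1 ∧ i = 1 ∧ j = 0 ∧ c + 1 = k then 1 - q ^ (2 * k)
  else if a = 1 ∧ b = 0 ∧ i = 0 ∧ j = 1 ∧ c = k + 1 then 1
  else 0

/-- `S^(0) = R`, `S^(1) = L`. -/
def Sg (q : ℂ) (e : Bool) (a b c i j k : ℕ) : ℂ :=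
  if e then L3 q a b c i j k else R3 q a b c i j k

/-- Coefficient of `z^{c0}` in the trace solution matrix element
`S₀(z)^{a,b}_{i,j}`. -/
def trCoef (q : ℂ) {n : ℕ} [NeZero n] (ε : Fin n → Bool) (a b i j : Fin n → ℕ)
    (c0 : ℕ) : ℂ :=
  ∑ᶠ c : Fin n → ℕ,
    if c 0 = c0 then
      ∏ t : Fin n, Sg q (ε t) (a t) (b t) (c t) (i t) (j t) (c (t + 1))
    else 0

/-- Coefficient of `z^{c0}` in the boundary solution matrix element
`S₀^{1,1}(z)^{a,b}_{i,j}`. -/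
def bdCoef (q : ℂ) {n : ℕ} (ε : Fin n → Bool) (a b i j : Fin n → ℕ) (c0 : ℕ) : ℂ :=
  ∑ᶠ c : Fin (n + 1) → ℕ,
    if c 0 = c0 then
      poch (q ^ 2) (q ^ 2) c0 / (poch q q c0 * poch q q (c (Fin.last n))) *
        ∏ t : Fin n, Sg q (ε t) (a t) (b t) (c t.castSucc) (i t) (j t) (c t.succ)
    else 0

/-- Coefficient of `z^{c0}` in the boundary solution matrix element
`S₀^{s,t}(z)^{a,b}_{i,j}`. -/
def bdCoefST (q : ℂ) (s t : ℕ) {n : ℕ} (ε : Fin n → Bool) (a b i j : Fin n → ℕ)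
    (c0 : ℕ) : ℂ :=
  ∑ᶠ c : Fin (n + 1) → ℕ,
    if c 0 = c0 then
      poch (q ^ 2) (q ^ 2) (s * c0) /
          (poch (q ^ s ^ 2) (q ^ s ^ 2) c0 * poch (q ^ t ^ 2) (q ^ t ^ 2) (c (Fin.last n))) *
        ∏ u : Fin n,
          Sg q (ε u) (a u) (b u)
            (if u.castSucc = 0 then s * c0 else c u.castSucc) (i u) (j u)
            (if u.succ = Fin.last n then t * c (Fin.last n) else c u.succ)
    else 0

/-! ## The spaces `𝒲` and `𝒲⊗𝒲` -/

/-- `m` is an admissible occupation vector: at positions with `ε = 1` the entry is `≤ 1`. -/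
def Ok {n : ℕ} (ε : Fin n → Bool) (m : Fin n → ℕ) : Prop := ∀ t, ε t = true → m t ≤ 1

instance {n : ℕ} (ε : Fin n → Bool) : DecidablePred (Ok ε) := fun m =>
  decidable_of_iff (∀ t, ε t = true → m t ≤ 1) Iff.rfl

/-- Basis labels of `𝒲`. -/
def Idx {n : ℕ} (ε : Fin n → Bool) : Type := {m : Fin n → ℕ // Ok ε m}

/-- The space `𝒲` with basis `|m⟩`, over the field `L`. -/
abbrev W (L : Type) [Field L] {n : ℕ} (ε : Fin n → Bool) : Type := Idx ε →₀ L

/-- The space `𝒲 ⊗ 𝒲` with basis `|a⟩⊗|b⟩`, over the field `L`. -/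
abbrev WW (L : Type) [Field L] {n : ℕ} (ε : Fin n → Bool) : Type := (Idx ε × Idx ε) →₀ L

/-- The ket `|m⟩ ∈ 𝒲`; it is `0` if any coordinate is out of range. -/
def ket (L : Type) [Field L] {n : ℕ} (ε : Fin n → Bool) (m : Fin n → ℤ) : W L ε :=
  if h : (∀ t, 0 ≤ m t) ∧ Ok ε (fun t => (m t).toNat) then
    Finsupp.single ⟨fun t => (m t).toNat, h.2⟩ 1
  else 0

/-- The ket `|a⟩⊗|b⟩ ∈ 𝒲⊗𝒲`; it is `0` if any coordinate is out of range. -/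
def kk (L : Type) [Field L] {n : ℕ} (ε : Fin n → Bool) (a b : Fin n → ℤ) : WW L ε :=
  if h : ((∀ t, 0 ≤ a t) ∧ Ok ε (fun t => (a t).toNat)) ∧
      ((∀ t, 0 ≤ b t) ∧ Ok ε (fun t => (b t).toNat)) then
    Finsupp.single (⟨fun t => (a t).toNat, h.1.2⟩, ⟨fun t => (b t).toNat, h.2.2⟩) 1
  else 0

/-- The linear endomorphism of a free module determined by images of basis vectors. -/
def mkEnd (L : Type) [Field L] {α : Type} (v : α → (α →₀ L)) :
    (α →₀ L) →ₗ[L] (α →₀ L) :=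
  Finsupp.lsum L fun m => LinearMap.toSpanSingleton L (α →₀ L) (v m)

/-- Product of vectors of `𝒲`, landing in `𝒲⊗𝒲`. -/
def tens (L : Type) [Field L] {n : ℕ} {ε : Fin n → Bool} (u v : W L ε) : WW L ε :=
  u.sum fun a ca => v.sum fun b cb => Finsupp.single (a, b) (ca * cb)

/-- The operator `A ⊗ B` on `𝒲⊗𝒲`. -/
def opT (L : Type) [Field L] {n : ℕ} {ε : Fin n → Bool}
    (A B : W L ε →ₗ[L] W L ε) : WW L ε →ₗ[L] WW L ε :=
  mkEnd L fun mm => tens L (A (Finsupp.single mm.1 1)) (B (Finsupp.single mm.2 1))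

/-- The subspace `𝒲_l ⊗ 𝒲_m` of `𝒲⊗𝒲`. -/
def WWlm (L : Type) [Field L] {n : ℕ} (ε : Fin n → Bool) (l m : ℕ) :
    Submodule L (WW L ε) :=
  Submodule.span L {v | ∃ p : Idx ε × Idx ε,
    (∑ t, p.1.1 t) = l ∧ (∑ t, p.2.1 t) = m ∧ v = Finsupp.single p 1}

/-- The subspace `𝒲_l` of `𝒲`. -/
def Wl (L : Type) [Field L] {n : ℕ} (ε : Fin n → Bool) (l : ℕ) : Submodule L (W L ε) :=
  Submodule.span L {v | ∃ p : Idx ε, (∑ t, p.1 t) = l ∧ v = Finsupp.single p 1}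

/-! ## The scalar field of formal Laurent series in `z` over `ℂ` -/

abbrev K : Type := LaurentSeries ℂ

/-- The power series `Σ_{c≥0} f(c) z^c` as an element of `K`. -/
def mkS (f : ℕ → ℂ) : K := HahnSeries.ofPowerSeries ℤ ℂ (PowerSeries.mk f)

/-- Constants `ℂ → K`. -/
def cK : ℂ →+* K := HahnSeries.C

/-- The variable `z ∈ K`. -/
def zK : K := mkS fun c => if c = 1 then 1 else 0

/-! ## The solutions of the Yang-Baxter equation -/

/-- The unnormalized trace solution `S₀(z)` acting on `𝒲⊗𝒲`. -/
def S0tr (q : ℂ) {n : ℕ} [NeZero n] (ε : Fin n → Bool) : WW K ε →ₗ[K] WW K ε :=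
  mkEnd K fun ij =>
    ∑ a ∈ Fintype.piFinset (fun t => Finset.range (ij.1.1 t + ij.2.1 t + 1)),
      mkS (trCoef q ε a (fun t => ij.1.1 t + ij.2.1 t - a t) ij.1.1 ij.2.1) •
        kk K ε (fun t => (a t : ℤ)) (fun t => (ij.1.1 t : ℤ) + (ij.2.1 t : ℤ) - (a t : ℤ))

/-- The unnormalized boundary solution `S₀^{1,1}(z)` acting on `𝒲⊗𝒲`. -/
def S0bd (q : ℂ) {n : ℕ} (ε : Fin n → Bool) : WW K ε →ₗ[K] WW K ε :=
  mkEnd K fun ij =>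
    ∑ a ∈ Fintype.piFinset (fun t => Finset.range (ij.1.1 t + ij.2.1 t + 1)),
      mkS (bdCoef q ε a (fun t => ij.1.1 t + ij.2.1 t - a t) ij.1.1 ij.2.1) •
        kk K ε (fun t => (a t : ℤ)) (fun t => (ij.1.1 t : ℤ) + (ij.2.1 t : ℤ) - (a t : ℤ))

/-- The unnormalized boundary solution `S₀^{s,t}(z)` acting on `𝒲⊗𝒲`. -/
def S0bdST (q : ℂ) (s t : ℕ) {n : ℕ} (ε : Fin n → Bool) : WW K ε →ₗ[K] WW K ε :=
  mkEnd K fun ij =>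
    ∑ a ∈ Fintype.piFinset (fun u => Finset.range (ij.1.1 u + ij.2.1 u + 1)),
      mkS (bdCoefST q s t ε a (fun u => ij.1.1 u + ij.2.1 u - a u) ij.1.1 ij.2.1) •
        kk K ε (fun u => (a u : ℤ)) (fun u => (ij.1.1 u : ℤ) + (ij.2.1 u : ℤ) - (a u : ℤ))

/-- The diagonal gauge operator; `Kdiag pc ε s |m⟩ = pc^{s·(m₁+⋯+m_n)} |m⟩`
(`s = -1` gives `K`, `s = 1` gives `K⁻¹`). -/
def Kdiag (pc : ℂ) {n : ℕ} (ε : Fin n → Bool) (s : ℤ) : W K ε →ₗ[K] W K ε :=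
  mkEnd K fun m => cK (pc ^ (s * ∑ t, (m.1 t : ℤ))) • Finsupp.single m 1

/-- The gauge transformed boundary solution `S̃₀^{1,1}(z) = (K⊗1) S₀^{1,1}(z) (1⊗K⁻¹)`. -/
def S0bdT (q pc : ℂ) {n : ℕ} (ε : Fin n → Bool) : WW K ε →ₗ[K] WW K ε :=
  opT K (Kdiag pc ε (-1)) LinearMap.id ∘ₗ S0bd q ε ∘ₗ opT K LinearMap.id (Kdiag pc ε 1)

/-! ## The generalized quantum group actions -/

/-- Value of an occupation vector at a natural-number position. -/
def av {n : ℕ} (m : Fin n → ℕ) (p : ℕ) : ℕ := if h : p < n then m ⟨p, h⟩ else 0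

/-- Unit coordinate vector at a natural-number position. -/
def dlt {n : ℕ} (p : ℕ) : Fin n → ℤ := fun t => if (t : ℕ) = p then 1 else 0

/-- `q_i = q` if `ε_i = 0` and `-q⁻¹` if `ε_i = 1` (0-based positions). -/
def qc (q : ℂ) {n : ℕ} (ε : Fin n → Bool) (p : ℕ) : ℂ :=
  if h : p < n then (if ε ⟨p, h⟩ then -q⁻¹ else q) else q

/-- Type A generator `e_r` of the action `π_x`. -/
def eA (q : ℂ) {L : Type} [Field L] (ι : ℂ →+* L) {n : ℕ} (ε : Fin n → Bool) (x : L)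
    (r : Fin n) : W L ε →ₗ[L] W L ε :=
  mkEnd L fun m =>
    (x ^ (if (r : ℕ) = 0 then 1 else 0) * ι (qnum q (av m.1 (((r : ℕ) + n - 1) % n)))) •
      ket L ε fun t => (m.1 t : ℤ) - dlt (((r : ℕ) + n - 1) % n) t + dlt (r : ℕ) t

/-- Type A generator `f_r` of the action `π_x`. -/
def fA (q : ℂ) {L : Type} [Field L] (ι : ℂ →+* L) {n : ℕ} (ε : Fin n → Bool) (x : L)
    (r : Fin n) : W L ε →ₗ[L] W L ε :=
  mkEnd L fun m =>
    (x ^ (if (r : ℕ) = 0 then (-1 : ℤ) else 0) * ι (qnum q (av m.1 (r : ℕ)))) •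
      ket L ε fun t => (m.1 t : ℤ) + dlt (((r : ℕ) + n - 1) % n) t - dlt (r : ℕ) t

/-- Type A generator `k_r^{s}` (`s = ±1`) of the action `π_x`. -/
def kA (q : ℂ) {L : Type} [Field L] (ι : ℂ →+* L) {n : ℕ} (ε : Fin n → Bool) (s : ℤ)
    (r : Fin n) : W L ε →ₗ[L] W L ε :=
  mkEnd L fun m =>
    ι ((qc q ε (((r : ℕ) + n - 1) % n) ^ (-(av m.1 (((r : ℕ) + n - 1) % n) : ℤ)) *
        qc q ε (r : ℕ) ^ (av m.1 (r : ℕ) : ℤ)) ^ s) • Finsupp.single m 1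

/-- Type B generator `e_r` of the action `π_x`. -/
def eB (q : ℂ) {L : Type} [Field L] (ι : ℂ →+* L) {n : ℕ} (ε : Fin n → Bool) (x : L)
    (r : Fin (n + 1)) : W L ε →ₗ[L] W L ε :=
  mkEnd L fun m =>
    if (r : ℕ) = 0 then x • ket L ε (fun t => (m.1 t : ℤ) + dlt 0 t)
    else if (r : ℕ) = n then
      ι (qnum q (av m.1 (n - 1))) • ket L ε (fun t => (m.1 t : ℤ) - dlt (n - 1) t)
    else
      ι (qnum q (av m.1 ((r : ℕ) - 1))) •
        ket L ε (fun t => (m.1 t : ℤ) - dlt ((r : ℕ) - 1) t + dlt (r : ℕ) t)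

/-- Type B generator `f_r` of the action `π_x`. -/
def fB (q : ℂ) {L : Type} [Field L] (ι : ℂ →+* L) {n : ℕ} (ε : Fin n → Bool) (x : L)
    (r : Fin (n + 1)) : W L ε →ₗ[L] W L ε :=
  mkEnd L fun m =>
    if (r : ℕ) = 0 then
      (x⁻¹ * ι (qnum q (av m.1 0))) • ket L ε (fun t => (m.1 t : ℤ) - dlt 0 t)
    else if (r : ℕ) = n then ket L ε (fun t => (m.1 t : ℤ) + dlt (n - 1) t)
    else
      ι (qnum q (av m.1 (r : ℕ))) •
        ket L ε (fun t => (m.1 t : ℤ) + dlt ((r : ℕ) - 1) t - dlt (r : ℕ) t)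

/-- Type B generator `k_r^{s}` (`s = ±1`) of the action `π_x`; `pc = i q^{-1/2}`. -/
def kB (q pc : ℂ) {L : Type} [Field L] (ι : ℂ →+* L) {n : ℕ} (ε : Fin n → Bool) (s : ℤ)
    (r : Fin (n + 1)) : W L ε →ₗ[L] W L ε :=
  mkEnd L fun m =>
    ι ((if (r : ℕ) = 0 then pc⁻¹ * qc q ε 0 ^ (av m.1 0 : ℤ)
        else if (r : ℕ) = n then pc * qc q ε (n - 1) ^ (-(av m.1 (n - 1) : ℤ))
        else qc q ε ((r : ℕ) - 1) ^ (-(av m.1 ((r : ℕ) - 1) : ℤ)) *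
          qc q ε (r : ℕ) ^ (av m.1 (r : ℕ) : ℤ)) ^ s) • Finsupp.single m 1

/-! ## Coproduct actions on `𝒲⊗𝒲` (type A) -/

/-- `Δ(e_r) = 1⊗e_r + e_r⊗k_r`, with `π_x` on the first factor, `π_y` on the second. -/
def dE (q : ℂ) {L : Type} [Field L] (ι : ℂ →+* L) {n : ℕ} (ε : Fin n → Bool) (x y : L)
    (r : Fin n) : WW L ε →ₗ[L] WW L ε :=
  opT L LinearMap.id (eA q ι ε y r) + opT L (eA q ι ε x r) (kA q ι ε 1 r)

/-- `Δ'(e_r) = e_r⊗1 + k_r⊗e_r`. -/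
def dE' (q : ℂ) {L : Type} [Field L] (ι : ℂ →+* L) {n : ℕ} (ε : Fin n → Bool) (x y : L)
    (r : Fin n) : WW L ε →ₗ[L] WW L ε :=
  opT L (eA q ι ε x r) LinearMap.id + opT L (kA q ι ε 1 r) (eA q ι ε y r)

/-- `Δ(f_r) = f_r⊗1 + k_r⁻¹⊗f_r`. -/
def dF (q : ℂ) {L : Type} [Field L] (ι : ℂ →+* L) {n : ℕ} (ε : Fin n → Bool) (x y : L)
    (r : Fin n) : WW L ε →ₗ[L] WW L ε :=
  opT L (fA q ι ε x r) LinearMap.id + opT L (kA q ι ε (-1) r) (fA q ι ε y r)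

/-- `Δ'(f_r) = 1⊗f_r + f_r⊗k_r⁻¹`. -/
def dF' (q : ℂ) {L : Type} [Field L] (ι : ℂ →+* L) {n : ℕ} (ε : Fin n → Bool) (x y : L)
    (r : Fin n) : WW L ε →ₗ[L] WW L ε :=
  opT L LinearMap.id (fA q ι ε y r) + opT L (fA q ι ε x r) (kA q ι ε (-1) r)

/-- `Δ(k_r^s) = Δ'(k_r^s) = k_r^s ⊗ k_r^s`. -/
def dK (q : ℂ) {L : Type} [Field L] (ι : ℂ →+* L) {n : ℕ} (ε : Fin n → Bool) (s : ℤ)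
    (r : Fin n) : WW L ε →ₗ[L] WW L ε :=
  opT L (kA q ι ε s r) (kA q ι ε s r)

/-! ## Coproduct actions on `𝒲⊗𝒲` (type B) -/

def dEB (q pc : ℂ) {L : Type} [Field L] (ι : ℂ →+* L) {n : ℕ} (ε : Fin n → Bool) (x y : L)
    (r : Fin (n + 1)) : WW L ε →ₗ[L] WW L ε :=
  opT L LinearMap.id (eB q ι ε y r) + opT L (eB q ι ε x r) (kB q pc ι ε 1 r)

def dEB' (q pc : ℂ) {L : Type} [Field L] (ι : ℂ →+* L) {n : ℕ} (ε : Fin n → Bool) (x y : L)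
    (r : Fin (n + 1)) : WW L ε →ₗ[L] WW L ε :=
  opT L (eB q ι ε x r) LinearMap.id + opT L (kB q pc ι ε 1 r) (eB q ι ε y r)

def dFB (q pc : ℂ) {L : Type} [Field L] (ι : ℂ →+* L) {n : ℕ} (ε : Fin n → Bool) (x y : L)
    (r : Fin (n + 1)) : WW L ε →ₗ[L] WW L ε :=
  opT L (fB q ι ε x r) LinearMap.id + opT L (kB q pc ι ε (-1) r) (fB q ι ε y r)

def dFB' (q pc : ℂ) {L : Type} [Field L] (ι : ℂ →+* L) {n : ℕ} (ε : Fin n → Bool) (x y : L)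
    (r : Fin (n + 1)) : WW L ε →ₗ[L] WW L ε :=
  opT L LinearMap.id (fB q ι ε y r) + opT L (fB q ι ε x r) (kB q pc ι ε (-1) r)

def dKB (q pc : ℂ) {L : Type} [Field L] (ι : ℂ →+* L) {n : ℕ} (ε : Fin n → Bool) (s : ℤ)
    (r : Fin (n + 1)) : WW L ε →ₗ[L] WW L ε :=
  opT L (kB q pc ι ε s r) (kB q pc ι ε s r)

/-! ## Structure constants -/

/-- Type A structure constant `D_{i,j}` (as a product over 0-based positions). -/
def DA (q : ℂ) {n : ℕ} (ε : Fin n → Bool) (i j : Fin n) : ℂ :=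
  ∏ p ∈ (({((i : ℕ) + n - 1) % n, (i : ℕ)} : Finset ℕ) ∩
      ({((j : ℕ) + n - 1) % n, (j : ℕ)} : Finset ℕ)),
    qc q ε p ^ (if i = j then (1 : ℤ) else -1)

/-- The set `⟨i⟩ = {i, i+1} ∩ [1,n]` of type B, translated to 0-based positions. -/
def nodeB (n i : ℕ) : Finset ℕ :=
  if i = 0 then {0} else if i = n then {n - 1} else {i - 1, i}

/-- Type B structure constant `D_{i,j}`. -/
def DB (q : ℂ) {n : ℕ} (ε : Fin n → Bool) (i j : Fin (n + 1)) : ℂ :=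
  ∏ p ∈ nodeB n (i : ℕ) ∩ nodeB n (j : ℕ), qc q ε p ^ (if i = j then (1 : ℤ) else -1)

/-! ## Distinguished vectors -/

/-- The vector `J_{n,j} = Σ_{i, Σi=j} q^{inv(i)} |i⟩⊗|1-i⟩`. -/
def Jfull (q : ℂ) {L : Type} [Field L] (ι : ℂ →+* L) {n : ℕ} (ε : Fin n → Bool)
    (j : ℕ) : WW L ε :=
  ∑ i ∈ Fintype.piFinset (fun _ : Fin n => Finset.range 2),
    (if (∑ t, i t) = j then
        ι (q ^ (∑ s : Fin n, ∑ t : Fin n, if s < t then i s * (1 - i t) else 0))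
      else 0) •
      kk L ε (fun t => (i t : ℤ)) (fun t => 1 - (i t : ℤ))

/-- Extension of a `Fin s`-tuple to `ℕ` by zero. -/
def ivf {s : ℕ} (i : Fin s → ℕ) : ℕ → ℕ := fun p => if h : p < s then i ⟨p, h⟩ else 0

/-- `inv(i₁,…,i_s) = Σ_{p<r} i_p (1 - i_r)`. -/
def invv (s : ℕ) (iv : ℕ → ℕ) : ℕ :=
  ∑ p ∈ Finset.range s, ∑ r ∈ Finset.range s, if p < r then iv p * (1 - iv r) else 0

/-- Occupation vector `(0^{nn-s-t}, i₁,…,i_s, 1^t)`. -/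
def winA (nn s t : ℕ) (iv : ℕ → ℕ) : Fin nn → ℤ := fun u =>
  if (u : ℕ) < nn - s - t then 0
  else if (u : ℕ) < nn - t then (iv ((u : ℕ) - (nn - s - t)) : ℤ)
  else 1

/-- The singular vector `ξ_t^{l,m}` for `κ = n`. -/
def xiA (q : ℂ) {L : Type} [Field L] (ι : ℂ →+* L) {n : ℕ} (ε : Fin n → Bool)
    (l m t : ℕ) : WW L ε :=
  ∑ i ∈ Fintype.piFinset (fun _ : Fin (l + m - 2 * t) => Finset.range 2),
    (if (∑ u, i u) = l - t then ι (q ^ invv (l + m - 2 * t) (ivf i)) else 0) •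
      kk L ε (winA n (l + m - 2 * t) t (ivf i))
        (winA n (l + m - 2 * t) t (fun p => 1 - ivf i p))

/-- Occupation vector `(0^{nn-s-1}, i₁,…,i_s, last)`. -/
def winA1 (nn s : ℕ) (iv : ℕ → ℕ) (last : ℤ) : Fin nn → ℤ := fun u =>
  if (u : ℕ) < nn - s - 1 then 0
  else if (u : ℕ) < nn - 1 then (iv ((u : ℕ) - (nn - s - 1)) : ℤ)
  else last

/-- The singular vector `ξ_s^{l,m}` for `κ = n-1`. -/
def xiA1 (q : ℂ) {L : Type} [Field L] (ι : ℂ →+* L) {n : ℕ} (ε : Fin n → Bool)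
    (l m s : ℕ) : WW L ε :=
  ∑ j ∈ Finset.range (s + 1),
    ∑ i ∈ Fintype.piFinset (fun _ : Fin s => Finset.range 2),
      (if (∑ u, i u) = s - j then
          ι ((-1 : ℂ) ^ j * q ^ (j * (m - s + 1)) * q ^ invv s (ivf i))
        else 0) •
        kk L ε (winA1 n s (ivf i) ((l : ℤ) + (j : ℤ) - (s : ℤ)))
          (winA1 n s (fun p => 1 - ivf i p) ((m : ℤ) - (j : ℤ)))

/-- The singular vector `ξ_s^{l,m}` for `0 ≤ κ ≤ n-2`. -/
def xiA2 (q : ℂ) {L : Type} [Field L] (ι : ℂ →+* L) {n : ℕ} (ε : Fin n → Bool)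
    (l m s : ℕ) : WW L ε :=
  ∑ j ∈ Finset.range (s + 1),
    ι ((-1 : ℂ) ^ j * q ^ ((j : ℤ) * (2 * (s : ℤ) - (m : ℤ) - (j : ℤ) - 1) + (m : ℤ) * (s : ℤ)) *
        qbin q s j) •
      kk L ε
        (fun u => if (u : ℕ) < n - 2 then 0
          else if (u : ℕ) = n - 2 then (j : ℤ) else (l : ℤ) - (j : ℤ))
        (fun u => if (u : ℕ) < n - 2 then 0
          else if (u : ℕ) = n - 2 then (s : ℤ) - (j : ℤ) else (m : ℤ) - (s : ℤ) + (j : ℤ))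

/-- The type B singular vector `ξ_l`. -/
def xiB (q pc : ℂ) {L : Type} [Field L] (ι : ℂ →+* L) {n : ℕ} (ε : Fin n → Bool)
    (l : ℕ) : WW L ε :=
  ∑ m ∈ Finset.range (l + 1),
    ι ((-pc) ^ (-(m : ℤ)) * q ^ ((m : ℤ) * (l : ℤ) - ((m * (m + 1) / 2 : ℕ) : ℤ)) *
        qbin q l m) •
      kk L ε (fun u => if (u : ℕ) = n - 1 then (m : ℤ) else 0)
        (fun u => if (u : ℕ) = n - 1 then (l : ℤ) - (m : ℤ) else 0)

/-! ## Miscellany -/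

/-- Apply a list of operators, the rightmost element of the list acting first. -/
def appList {L : Type} [Field L] {n : ℕ} {ε : Fin n → Bool}
    (ops : List (WW L ε →ₗ[L] WW L ε)) (v : WW L ε) : WW L ε :=
  ops.foldr (fun A w => A w) v

/-- A natural number as an element of `Fin n`. -/
def mfin {n : ℕ} [NeZero n] (p : ℕ) : Fin n :=
  ⟨p % n, Nat.mod_lt p (Nat.pos_of_ne_zero (NeZero.ne n))⟩

/-- Reference weight-`l` occupation vector: `(0^{n-l},1^l)` if `κ = n`, `l·e_n` otherwise. -/
def refAN (n κ l : ℕ) : Fin n → ℕ := fun t =>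
  if κ = n then (if n - l ≤ (t : ℕ) then 1 else 0) else (if (t : ℕ) = n - 1 then l else 0)

/-- The flip `P(u⊗v) = v⊗u` on `𝒲⊗𝒲`. -/
def Pop (L : Type) [Field L] {n : ℕ} (ε : Fin n → Bool) : WW L ε →ₗ[L] WW L ε :=
  mkEnd L fun p => Finsupp.single (p.2, p.1) 1

/-! ### The 3D `R` by recursion: definition and base case -/

/-- `(q²;q²)_m` for an integer `m` (equal to `1` for `m ≤ 0`). -/
def PP (q : ℂ) (m : ℤ) : ℂ := poch (q ^ 2) (q ^ 2) m.toNat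

/-- `1/(q²;q²)_m`, extended by `0` to negative integers `m`. -/
def rf (q : ℂ) (m : ℤ) : ℂ := if 0 ≤ m then (PP q m)⁻¹ else 0

lemma poch_succ (a : ℂ) (m : ℕ) : poch a a (m + 1) = poch a a m * (1 - a ^ (m + 1)) := by
  unfold poch
  rw [Finset.prod_range_succ, pow_succ' a m]

lemma poch_zero (a b : ℂ) : poch a b 0 = 1 := by simp [poch]

lemma poch_ne {q : ℂ} (hq : ∀ k : ℕ, k ≠ 0 → q ^ k ≠ 1) (m : ℕ) : poch q q m ≠ 0 := by
  induction m with
  | zero => simp [poch_zero]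
  | succ m ih =>
    rw [poch_succ]
    exact mul_ne_zero ih (sub_ne_zero.2 (hq (m + 1) (by omega)).symm)

lemma hq_sq {q : ℂ} (hq : ∀ k : ℕ, k ≠ 0 → q ^ k ≠ 1) : ∀ k : ℕ, k ≠ 0 → (q ^ 2) ^ k ≠ 1 := by
  intro k hk
  rw [← pow_mul]
  exact hq _ (by omega)

lemma PP_ne {q : ℂ} (hq : ∀ k : ℕ, k ≠ 0 → q ^ k ≠ 1) (m : ℤ) : PP q m ≠ 0 :=
  poch_ne (hq_sq hq) _

lemma PP_succ (q : ℂ) {m : ℤ} (hm : 0 ≤ m) :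
    PP q (m + 1) = PP q m * (1 - (q ^ (m + 1)) ^ 2) := by
  obtain ⟨m, rfl⟩ := Int.eq_ofNat_of_zero_le hm
  unfold PP
  have h1 : ((m : ℤ) + 1).toNat = m + 1 := by omega
  have h2 : (m : ℤ).toNat = m := by omega
  rw [h1, h2, poch_succ]
  congr 2
  rw [← pow_mul]
  have : (q ^ ((m : ℤ) + 1)) = q ^ (m + 1) := by
    rw [← zpow_natCast]; norm_cast
  rw [this, ← pow_mul, mul_comm]

lemma rf_neg (q : ℂ) {m : ℤ} (hm : m < 0) : rf q m = 0 := by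
  unfold rf; rw [if_neg (by omega)]

lemma rf_mul_PP {q : ℂ} (hq : ∀ k : ℕ, k ≠ 0 → q ^ k ≠ 1) {m : ℤ} (hm : 0 ≤ m) :
    rf q m * PP q m = 1 := by
  unfold rf; rw [if_pos hm, inv_mul_cancel₀ (PP_ne hq m)]

lemma rf_pred {q : ℂ} (hq : ∀ k : ℕ, k ≠ 0 → q ^ k ≠ 1) (m : ℤ) :
    rf q (m - 1) = (1 - (q ^ m) ^ 2) * rf q m := by
  rcases lt_trichotomy m 0 with h | h | h
  · rw [rf_neg q h, rf_neg q (by omega), mul_zero]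
  · subst h; rw [rf_neg q (by omega)]; simp
  · have h1 := rf_mul_PP hq (m := m) h.le
    have h2 := rf_mul_PP hq (m := m - 1) (by omega)
    have h3 := PP_succ q (m := m - 1) (by omega)
    rw [sub_add_cancel] at h3
    have h4 := PP_ne hq (m - 1)
    refine mul_right_cancel₀ h4 ?_
    rw [h2, mul_assoc, mul_left_comm, mul_comm _ (PP q (m - 1)), ← h3, h1]

/-- The matrix element of the 3D `R` with input `(i,0,k)` and middle output `b`. -/
def rb (q : ℂ) (i k b : ℤ) : ℂ :=
  q ^ ((i - b) * (k - b)) * PP q i * PP q k * rf q b * rf q (i - b) * rf q (k - b)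

/-- The matrix element of the 3D `R` with input `(i,j,k)` and middle output `b`, defined by the
recursion in `j` that expresses `R a₂⁺ = (a₁⁺ a₃⁺ - q k₁ k₃ a₂⁺) R`, where `a⁺|m⟩ = |m+1⟩` and
`k|m⟩ = q^m|m⟩`. -/
def rr (q : ℂ) : ℕ → ℤ → ℤ → ℤ → ℂ
  | 0 => rb q
  | j + 1 => fun i k b =>
    rr q j i k b - q ^ (i + 2 * j + k + 3 - 2 * b) * rr q j i k (b - 1)

lemma rr_zero (q : ℂ) (i k b : ℤ) : rr q 0 i k b = rb q i k b := rfl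

lemma rr_succ' (q : ℂ) (j : ℕ) (i k b : ℤ) : rr q (j + 1) i k b = rr q j i k b -
    q ^ (i + 2 * j + k + 3 - 2 * b) * rr q j i k (b - 1) := rfl

lemma rr_succ {q : ℂ} (hq0 : q ≠ 0) (j : ℕ) (i k b : ℤ) :
    rr q (j + 1) i k b = rr q j i k b -
      q ^ i * (q ^ j) ^ 2 * q ^ k * q ^ 3 / (q ^ b) ^ 2 * rr q j i k (b - 1) := by
  rw [rr_succ']
  congr 2
  have e1 : q ^ (2 * (j : ℤ)) = (q ^ j) ^ 2 := by
    rw [mul_comm, zpow_mul, zpow_natCast]; norm_cast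
  have e2 : q ^ (2 * b) = (q ^ b) ^ 2 := by
    rw [mul_comm, zpow_mul]; norm_cast
  have e3 : q ^ (3 : ℤ) = q ^ 3 := by norm_cast
  rw [zpow_sub₀ hq0, zpow_add₀ hq0, zpow_add₀ hq0, zpow_add₀ hq0, e1, e2, e3]

lemma rb_symm (q : ℂ) (i k b : ℤ) : rb q i k b = rb q k i b := by
  unfold rb; rw [mul_comm (i - b)]; ring

lemma rr_symm (q : ℂ) (j : ℕ) (i k b : ℤ) : rr q j i k b = rr q j k i b := by
  induction j generalizing b with
  | zero => exact rb_symm q i k b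
  | succ j ih =>
    rw [rr_succ', rr_succ', ih, ih]; ring_nf

lemma rb_neg (q : ℂ) (i k : ℤ) {b : ℤ} (hb : b < 0) : rb q i k b = 0 := by
  unfold rb; rw [rf_neg q hb]; ring

lemma rr_neg (q : ℂ) (j : ℕ) (i k : ℤ) {b : ℤ} (hb : b < 0) : rr q j i k b = 0 := by
  induction j generalizing b with
  | zero => exact rb_neg q i k hb
  | succ j ih => rw [rr_succ', ih hb, ih (by omega)]; ring

lemma rr_neg_left (q : ℂ) (j : ℕ) {i : ℤ} (k b : ℤ) (hi : i < 0) : rr q j i k b = 0 := by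
  induction j generalizing b with
  | zero =>
    rw [rr_zero]
    rcases lt_or_ge b 0 with hb | hb
    · exact rb_neg q i k hb
    · unfold rb; rw [rf_neg q (m := i - b) (by omega)]; ring
  | succ j ih => rw [rr_succ', ih, ih]; ring

/-- The common factor of the four neighbours of `rb q i k b` used in the base case of the raising
relations. -/
def rT (q : ℂ) (i k b : ℤ) : ℂ :=
  q ^ ((i - b) * (k - b)) * PP q i * PP q k * rf q b * rf q (i - b + 1) * rf q (k - b + 1)

section base

variable {q : ℂ}

lemma rb_A (hq0 : q ≠ 0) (hq : ∀ k : ℕ, k ≠ 0 → q ^ k ≠ 1) (i k b : ℤ) :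
    rb q i k b =
      (1 - (q ^ i * q / q ^ b) ^ 2) * (1 - (q ^ k * q / q ^ b) ^ 2) * rT q i k b := by
  unfold rb rT
  have h1 := rf_pred hq (i - b + 1)
  have h2 := rf_pred hq (k - b + 1)
  rw [add_sub_cancel_right] at h1 h2
  rw [h1, h2, zpow_add_one₀ hq0, zpow_add_one₀ hq0, zpow_sub₀ hq0, zpow_sub₀ hq0]
  ring

lemma rb_B (hq0 : q ≠ 0) (hq : ∀ k : ℕ, k ≠ 0 → q ^ k ≠ 1) (i k b : ℤ) :
    rb q i k (b - 1) =
      q ^ i / q ^ b * (q ^ k / q ^ b) * q * (1 - (q ^ b) ^ 2) * rT q i k b := by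
  unfold rb rT
  have e : (i - (b - 1)) * (k - (b - 1)) = (i - b) * (k - b) + (i - b) + (k - b) + 1 := by ring
  rw [rf_pred hq b, e, zpow_add_one₀ hq0, zpow_add₀ hq0, zpow_add₀ hq0, zpow_sub₀ hq0 i,
    zpow_sub₀ hq0 k, sub_sub_eq_add_sub, sub_sub_eq_add_sub, ← sub_add_eq_add_sub,
    ← sub_add_eq_add_sub]
  ring

lemma rb_C (hq0 : q ≠ 0) (hq : ∀ k : ℕ, k ≠ 0 → q ^ k ≠ 1) {i : ℤ} (hi : 0 ≤ i) (k b : ℤ) :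
    rb q (i + 1) k b =
      q ^ k / q ^ b * (1 - (q ^ i * q) ^ 2) * (1 - (q ^ k * q / q ^ b) ^ 2) * rT q i k b := by
  unfold rb rT
  have e : (i + 1 - b) * (k - b) = (i - b) * (k - b) + (k - b) := by ring
  have h2 := rf_pred hq (k - b + 1)
  rw [add_sub_cancel_right] at h2
  rw [h2, e, PP_succ q hi, zpow_add₀ hq0, zpow_add_one₀ hq0, zpow_add_one₀ hq0, zpow_sub₀ hq0 k,
    ← sub_add_eq_add_sub]
  ring

lemma rb_D (hq0 : q ≠ 0) {i k : ℤ} (hi : 0 ≤ i) (hk : 0 ≤ k) (b : ℤ) :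
    rb q (i + 1) (k + 1) b =
      q ^ i / q ^ b * (q ^ k / q ^ b) * q * (1 - (q ^ i * q) ^ 2) * (1 - (q ^ k * q) ^ 2) *
        rT q i k b := by
  unfold rb rT
  have e : (i + 1 - b) * (k + 1 - b) = (i - b) * (k - b) + (i - b) + (k - b) + 1 := by ring
  rw [e, PP_succ q hi, PP_succ q hk, zpow_add_one₀ hq0, zpow_add₀ hq0, zpow_add₀ hq0,
    zpow_sub₀ hq0 k, zpow_sub₀ hq0 i, zpow_add_one₀ hq0, zpow_add_one₀ hq0,
    ← sub_add_eq_add_sub, ← sub_add_eq_add_sub]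
  ring

lemma rb_i (hq0 : q ≠ 0) (hq : ∀ k : ℕ, k ≠ 0 → q ^ k ≠ 1) {i : ℤ} (hi : 0 ≤ i) (k b : ℤ) :
    (1 - (q ^ i) ^ 2) * rb q (i - 1) k b =
      q ^ b / q ^ k * (1 - (q ^ i / q ^ b) ^ 2) * rb q i k b := by
  rcases hi.eq_or_lt with rfl | hi
  · rcases lt_or_ge b 0 with hb | hb
    · rw [rb_neg q _ k hb, rb_neg q _ k hb]; ring
    · rcases hb.eq_or_lt with rfl | hb
      · simp
      · have : rb q 0 k b = 0 := by unfold rb; rw [rf_neg q (m := 0 - b) (by omega)]; ring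
        rw [this]; simp
  · unfold rb
    have h := PP_succ q (m := i - 1) (by omega)
    have e : (i - 1 - b) * (k - b) = (i - b) * (k - b) - (k - b) := by ring
    rw [sub_add_cancel] at h
    rw [h, e, zpow_sub₀ hq0, zpow_sub₀ hq0 k, sub_right_comm i 1 b, rf_pred hq (i - b),
      zpow_sub₀ hq0 i]
    have : q ^ b ≠ 0 := zpow_ne_zero _ hq0
    have : q ^ k ≠ 0 := zpow_ne_zero _ hq0
    field_simp

lemma rb_k (hq0 : q ≠ 0) (hq : ∀ k : ℕ, k ≠ 0 → q ^ k ≠ 1) (i : ℤ) {k : ℤ} (hk : 0 ≤ k) (b : ℤ) :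
    (1 - (q ^ k) ^ 2) * rb q i (k - 1) b =
      q ^ b / q ^ i * (1 - (q ^ k / q ^ b) ^ 2) * rb q i k b := by
  rw [rb_symm, rb_i hq0 hq hk, rb_symm]

lemma rb_up (hq0 : q ≠ 0) (hq : ∀ k : ℕ, k ≠ 0 → q ^ k ≠ 1) (i k b : ℤ) :
    (1 - (q ^ b * q) ^ 2) * rb q i k (b + 1) =
      q ^ b / q ^ i * (q ^ b / q ^ k) * q * (1 - (q ^ i / q ^ b) ^ 2) * (1 - (q ^ k / q ^ b) ^ 2) *
        rb q i k b := by
  unfold rb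
  have e : (i - (b + 1)) * (k - (b + 1)) = (i - b) * (k - b) - (i - b) - (k - b) + 1 := by ring
  have h := rf_pred hq (b + 1)
  rw [add_sub_cancel_right] at h
  rw [h, e, zpow_add_one₀ hq0, zpow_sub₀ hq0, zpow_sub₀ hq0, zpow_sub₀ hq0 i, zpow_sub₀ hq0 k,
    ← sub_sub, ← sub_sub, rf_pred hq (i - b), rf_pred hq (k - b), zpow_add_one₀ hq0,
    zpow_sub₀ hq0 i, zpow_sub₀ hq0 k]
  have : q ^ b ≠ 0 := zpow_ne_zero _ hq0
  have : q ^ k ≠ 0 := zpow_ne_zero _ hq0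
  have : q ^ i ≠ 0 := zpow_ne_zero _ hq0
  field_simp

end base

/-! ### Raising relations for the 3D `R` -/

section rels

variable {q : ℂ}

/-- The relation `R a₁⁺ k₂ = (a₁⁺ k₃ + k₁ a₂⁺ a₃⁻) R`, where `a⁻|m⟩ = (1 - q^{2m})|m-1⟩`. -/
lemma rr_up_i (hq0 : q ≠ 0) (hq : ∀ k : ℕ, k ≠ 0 → q ^ k ≠ 1) (j : ℕ) {i : ℤ} (hi : 0 ≤ i)
    (k b : ℤ) :
    rr q j (i + 1) k b = q ^ k / q ^ b * rr q j i k b +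
      (1 - (q * q ^ j * q ^ k / q ^ b) ^ 2) * (q ^ i * q / q ^ b) * rr q j i k (b - 1) := by
  have hx : q ^ i ≠ 0 := zpow_ne_zero _ hq0
  have hw : q ^ k ≠ 0 := zpow_ne_zero _ hq0
  induction j generalizing b with
  | zero =>
    have hv : q ^ b ≠ 0 := zpow_ne_zero _ hq0
    rw [rr_zero, rr_zero, rr_zero, rb_A hq0 hq i k b, rb_B hq0 hq i k b, rb_C hq0 hq hi k b]
    generalize rT q i k b = T
    generalize q ^ i = x at *
    generalize q ^ k = w at *
    generalize q ^ b = v at *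
    field_simp
    ring
  | succ j ih =>
    have hv : q ^ b ≠ 0 := zpow_ne_zero _ hq0
    have hy : q ^ j ≠ 0 := pow_ne_zero _ hq0
    rw [rr_succ hq0, rr_succ hq0, rr_succ hq0, ih b, ih (b - 1), zpow_sub_one₀ hq0,
      zpow_add_one₀ hq0, pow_succ q j]
    generalize q ^ i = x at *
    generalize q ^ k = w at *
    generalize q ^ b = v at *
    generalize q ^ j = y at *
    field_simp
    ring

lemma rr_up_k (hq0 : q ≠ 0) (hq : ∀ k : ℕ, k ≠ 0 → q ^ k ≠ 1) (j : ℕ) (i : ℤ) {k : ℤ}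
    (hk : 0 ≤ k) (b : ℤ) :
    rr q j i (k + 1) b = q ^ i / q ^ b * rr q j i k b +
      (1 - (q * q ^ j * q ^ i / q ^ b) ^ 2) * (q ^ k * q / q ^ b) * rr q j i k (b - 1) := by
  rw [rr_symm, rr_up_i hq0 hq j hk, rr_symm q j k i, rr_symm q j k i]

/-- The relation `a₂⁺ R = R (a₁⁺ a₃⁺ - q k₁ k₃ a₂⁺)`. -/
lemma rr_up_ik (hq0 : q ≠ 0) (hq : ∀ k : ℕ, k ≠ 0 → q ^ k ≠ 1) (j : ℕ) {i k : ℤ} (hi : 0 ≤ i)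
    (hk : 0 ≤ k) (b : ℤ) :
    rr q j i k (b - 1) =
      rr q j (i + 1) (k + 1) b - q * q ^ k * q ^ i * rr q (j + 1) i k b := by
  have hx : q ^ i ≠ 0 := zpow_ne_zero _ hq0
  have hw : q ^ k ≠ 0 := zpow_ne_zero _ hq0
  induction j generalizing b with
  | zero =>
    have hv : q ^ b ≠ 0 := zpow_ne_zero _ hq0
    rw [rr_succ hq0, rr_zero, rr_zero, rr_zero, rb_A hq0 hq i k b, rb_B hq0 hq i k b,
      rb_D hq0 hi hk b]
    generalize rT q i k b = T
    generalize q ^ i = x at *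
    generalize q ^ k = w at *
    generalize q ^ b = v at *
    field_simp
    ring
  | succ j ih =>
    have hv : q ^ b ≠ 0 := zpow_ne_zero _ hq0
    have hy : q ^ j ≠ 0 := pow_ne_zero _ hq0
    have e1 := ih b
    have e2 := ih (b - 1)
    rw [rr_succ hq0] at e1 e2
    rw [rr_succ hq0 (j + 1), rr_succ hq0 j (i + 1), rr_succ hq0 j i k b,
      rr_succ hq0 j i k (b - 1)]
    rw [zpow_sub_one₀ hq0] at *
    rw [zpow_add_one₀ hq0, zpow_add_one₀ hq0, pow_succ q j]
    generalize q ^ i = x at *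
    generalize q ^ k = w at *
    generalize q ^ b = v at *
    generalize q ^ j = y at *
    linear_combination (norm := (field_simp; ring)) e1 - x * y ^ 2 * w * q ^ 5 / v ^ 2 * e2

/-- The relation `a₁⁺ k₂ R = R (a₁⁺ k₃ + k₁ a₂⁺ a₃⁻)`. -/
lemma rr_mix (hq0 : q ≠ 0) (hq : ∀ k : ℕ, k ≠ 0 → q ^ k ≠ 1) (j : ℕ) {i k : ℤ} (hi : 0 ≤ i)
    (hk : 0 ≤ k) (b : ℤ) :
    q ^ b * rr q j i k b =
      q ^ k * rr q j (i + 1) k b + (1 - (q ^ k) ^ 2) * (q ^ i * rr q (j + 1) i (k - 1) b) := by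
  have hx : q ^ i ≠ 0 := zpow_ne_zero _ hq0
  have hw : q ^ k ≠ 0 := zpow_ne_zero _ hq0
  induction j generalizing b with
  | zero =>
    have hv : q ^ b ≠ 0 := zpow_ne_zero _ hq0
    have e1 := rb_k hq0 hq i hk b
    have e2 := rb_k hq0 hq i hk (b - 1)
    rw [rb_A hq0 hq i k b] at e1
    rw [rb_B hq0 hq i k b, zpow_sub_one₀ hq0] at e2
    rw [rr_succ hq0, rr_zero, rr_zero, rr_zero, rr_zero, zpow_sub_one₀ hq0, rb_A hq0 hq i k b,
      rb_C hq0 hq hi k b]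
    generalize rT q i k b = T at *
    generalize rb q i (k - 1) b = X at *
    generalize rb q i (k - 1) (b - 1) = Y at *
    generalize q ^ i = x at *
    generalize q ^ k = w at *
    generalize q ^ b = v at *
    have h : (1 - w ^ 2) * (x * (X - x * (q ^ 0) ^ 2 * (w * q⁻¹) * q ^ 3 / v ^ 2 * Y)) =
      x * ((1 - w ^ 2) * X) - x ^ 2 * w * q ^ 2 / v ^ 2 * ((1 - w ^ 2) * Y) := by
      field_simp
    rw [h, e1, e2]
    field_simp
    ring
  | succ j ih =>
    have hv : q ^ b ≠ 0 := zpow_ne_zero _ hq0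
    have hy : q ^ j ≠ 0 := pow_ne_zero _ hq0
    have e1 := ih b
    have e2 := ih (b - 1)
    rw [rr_succ hq0] at e1 e2
    rw [rr_succ hq0 (j + 1), rr_succ hq0, rr_succ hq0, rr_succ hq0 j i (k - 1)]
    rw [zpow_sub_one₀ hq0] at *
    rw [rr_succ hq0 j i (k - 1)]
    rw [zpow_sub_one₀ hq0] at *
    rw [zpow_sub_one₀ hq0] at *
    rw [zpow_add_one₀ hq0, pow_succ q j]
    generalize rr q j i (k - 1) b = A1 at *
    generalize rr q j i (k - 1) (b - 1) = A2 at *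
    generalize rr q j i (k - 1) (b - 1 - 1) = A3 at *
    generalize q ^ i = x at *
    generalize q ^ k = w at *
    generalize q ^ b = v at *
    generalize q ^ j = y at *
    linear_combination (norm := (field_simp; ring)) e1 - x * y ^ 2 * w * q ^ 4 / v ^ 2 * e2

end rels

/-! ### Lowering relations for the 3D `R` -/

section lowering

variable {q : ℂ}

/-- The recursion in `j` read downwards. The factor `1 - q^{2j}` makes it hold for `j = 0` too,
where `j - 1` is truncated. -/
lemma rr_pred (hq0 : q ≠ 0) (j : ℕ) (i k b : ℤ) :
    (1 - (q ^ j) ^ 2) * rr q j i k b = (1 - (q ^ j) ^ 2) * (rr q (j - 1) i k b -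
      q ^ i * (q ^ j) ^ 2 * q ^ k * q / (q ^ b) ^ 2 * rr q (j - 1) i k (b - 1)) := by
  cases j with
  | zero => simp
  | succ j =>
    rw [rr_succ hq0, Nat.add_sub_cancel, pow_succ q j]
    ring

/-- The relation `a₂⁻ R = R (a₁⁻ a₃⁻ - q k₁ k₃ a₂⁻)`. Here and below, terms with a truncated `j - 1` carry the factor
`1 - q^{2j}`. -/
lemma rr_down_b (hq0 : q ≠ 0) (hq : ∀ k : ℕ, k ≠ 0 → q ^ k ≠ 1) (j : ℕ) {i k : ℤ} (hi : 0 ≤ i)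
    (hk : 0 ≤ k) (b : ℤ) :
    (1 - (q ^ b * q) ^ 2) * rr q j i k (b + 1) =
      -(q * q ^ k * q ^ i) * ((1 - (q ^ j) ^ 2) * rr q (j - 1) i k b) +
        (1 - (q ^ i) ^ 2) * ((1 - (q ^ k) ^ 2) * rr q j (i - 1) (k - 1) b) := by
  have hx : q ^ i ≠ 0 := zpow_ne_zero _ hq0
  have hw : q ^ k ≠ 0 := zpow_ne_zero _ hq0
  induction j generalizing b with
  | zero =>
    have hv : q ^ b ≠ 0 := zpow_ne_zero _ hq0
    rw [rr_zero, rr_zero, rr_zero, rb_up hq0 hq, rb_k hq0 hq (i - 1) hk, zpow_sub_one₀ hq0]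
    have e := rb_i hq0 hq hi k b
    generalize rb q i k b = T at *
    generalize rb q (i - 1) k b = X at *
    generalize q ^ i = x at *
    generalize q ^ k = w at *
    generalize q ^ b = v at *
    linear_combination (norm := (field_simp; ring)) (-(v * q / x) * (1 - (w / v) ^ 2)) * e
  | succ j ih =>
    have hv : q ^ b ≠ 0 := zpow_ne_zero _ hq0
    have hy : q ^ j ≠ 0 := pow_ne_zero _ hq0
    have e1 := ih b
    have e2 := ih (b - 1)
    have e3 := rr_pred hq0 j i k b
    rw [Nat.add_sub_cancel, rr_succ hq0 j i k, rr_succ hq0 j (i - 1)]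
    rw [zpow_sub_one₀ hq0, sub_add_cancel] at e2
    rw [add_sub_cancel_right, zpow_sub_one₀ hq0, zpow_sub_one₀ hq0, zpow_add_one₀ hq0,
      pow_succ q j]
    generalize q ^ i = x at *
    generalize q ^ k = w at *
    generalize q ^ b = v at *
    generalize q ^ j = y at *
    linear_combination (norm := (field_simp; ring)) e1 - x * y ^ 2 * w * q / v ^ 2 * e2 +
      q * w * x * e3

lemma rr_down_i (hq0 : q ≠ 0) (hq : ∀ k : ℕ, k ≠ 0 → q ^ k ≠ 1) (j : ℕ) {i : ℤ} (hi : 0 ≤ i)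
    (k b : ℤ) :
    (1 - (q ^ i) ^ 2) * rr q j (i - 1) k b =
      (1 - (q ^ b * q) ^ 2) * (q ^ i / (q ^ b * q)) * rr q j i k (b + 1) +
        q ^ k / q ^ b * (1 - (q ^ i * q ^ j / q ^ b) ^ 2) * rr q j i k b := by
  have hx : q ^ i ≠ 0 := zpow_ne_zero _ hq0
  have hw : q ^ k ≠ 0 := zpow_ne_zero _ hq0
  induction j generalizing b with
  | zero =>
    have hv : q ^ b ≠ 0 := zpow_ne_zero _ hq0
    rw [rr_zero, rr_zero, rr_zero, rb_i hq0 hq hi, mul_right_comm (1 - (q ^ b * q) ^ 2),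
      rb_up hq0 hq]
    generalize rb q i k b = T at *
    generalize q ^ i = x at *
    generalize q ^ k = w at *
    generalize q ^ b = v at *
    field_simp
    ring
  | succ j ih =>
    have hv : q ^ b ≠ 0 := zpow_ne_zero _ hq0
    have hy : q ^ j ≠ 0 := pow_ne_zero _ hq0
    have e1 := ih b
    have e2 := ih (b - 1)
    rw [rr_succ hq0 j i k, rr_succ hq0 j (i - 1), rr_succ hq0 j i k b]
    rw [zpow_sub_one₀ hq0, sub_add_cancel] at e2
    rw [add_sub_cancel_right, zpow_sub_one₀ hq0, zpow_add_one₀ hq0, pow_succ q j]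
    generalize q ^ i = x at *
    generalize q ^ k = w at *
    generalize q ^ b = v at *
    generalize q ^ j = y at *
    linear_combination (norm := (field_simp; ring)) e1 - x * y ^ 2 * w * q ^ 2 / v ^ 2 * e2

lemma rr_down_j (hq0 : q ≠ 0) (hq : ∀ k : ℕ, k ≠ 0 → q ^ k ≠ 1) (j : ℕ) (i k b : ℤ) :
    (1 - (q ^ j) ^ 2) * rr q (j - 1) i k b =
      -(q ^ i * (q ^ j) ^ 2 * q ^ k / ((q ^ b) ^ 2 * q)) *
          ((1 - (q ^ b * q) ^ 2) * rr q j i k (b + 1)) +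
        (1 - (q ^ j * q ^ k / q ^ b) ^ 2) * ((1 - (q ^ i * q ^ j / q ^ b) ^ 2) * rr q j i k b) := by
  have hx : q ^ i ≠ 0 := zpow_ne_zero _ hq0
  have hw : q ^ k ≠ 0 := zpow_ne_zero _ hq0
  induction j generalizing b with
  | zero =>
    have hv : q ^ b ≠ 0 := zpow_ne_zero _ hq0
    rw [rr_zero, rr_zero, rb_up hq0 hq]
    generalize rb q i k b = T at *
    generalize q ^ i = x at *
    generalize q ^ k = w at *
    generalize q ^ b = v at *
    field_simp
    ring
  | succ j ih =>
    have hv : q ^ b ≠ 0 := zpow_ne_zero _ hq0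
    have hy : q ^ j ≠ 0 := pow_ne_zero _ hq0
    have e1 := ih b
    have e2 := ih (b - 1)
    have e3 := rr_pred hq0 j i k b
    rw [Nat.add_sub_cancel, rr_succ hq0 j i k, rr_succ hq0 j i k b]
    rw [zpow_sub_one₀ hq0, sub_add_cancel] at e2
    rw [add_sub_cancel_right, zpow_add_one₀ hq0, pow_succ q j]
    generalize q ^ i = x at *
    generalize q ^ k = w at *
    generalize q ^ b = v at *
    generalize q ^ j = y at *
    linear_combination (norm := (field_simp; ring)) q ^ 2 * e1 -
      q ^ 2 * (x * y ^ 2 * w * q / v ^ 2) * e2 + q ^ 2 * e3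

lemma rr_down_a (hq0 : q ≠ 0) (hq : ∀ k : ℕ, k ≠ 0 → q ^ k ≠ 1) (j : ℕ) {i k : ℤ} (hi : 0 ≤ i)
    (hk : 0 ≤ k) (b : ℤ) :
    q ^ b / (q ^ i * q ^ j) * (1 - (q ^ i * q ^ j / q ^ b) ^ 2) * rr q j i k b =
      (q ^ j)⁻¹ * ((1 - (q ^ j) ^ 2) * rr q (j - 1) i (k + 1) b) +
        q ^ k / (q ^ i * q ^ j) * ((1 - (q ^ i) ^ 2) * rr q j (i - 1) k b) := by
  have hx : q ^ i ≠ 0 := zpow_ne_zero _ hq0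
  have hw : q ^ k ≠ 0 := zpow_ne_zero _ hq0
  induction j generalizing b with
  | zero =>
    have hv : q ^ b ≠ 0 := zpow_ne_zero _ hq0
    rw [rr_zero, rr_zero, rr_zero, rb_i hq0 hq hi]
    generalize rb q i k b = T at *
    generalize q ^ i = x at *
    generalize q ^ k = w at *
    generalize q ^ b = v at *
    field_simp
    ring
  | succ j ih =>
    have hv : q ^ b ≠ 0 := zpow_ne_zero _ hq0
    have hy : q ^ j ≠ 0 := pow_ne_zero _ hq0
    have e1 := ih b
    have e2 := ih (b - 1)
    have e3 := rr_pred hq0 j i (k + 1) b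
    have e4 := rr_up_k hq0 hq j i hk b
    rw [Nat.add_sub_cancel, rr_succ hq0 j i k, rr_succ hq0 j (i - 1)]
    rw [zpow_sub_one₀ hq0] at e2
    rw [zpow_add_one₀ hq0] at e3
    rw [zpow_sub_one₀ hq0, pow_succ q j]
    generalize q ^ i = x at *
    generalize q ^ k = w at *
    generalize q ^ b = v at *
    generalize q ^ j = y at *
    linear_combination (norm := (field_simp; ring)) 1 / q * e1 - x * y ^ 2 * w * q / v ^ 2 * e2 -
      1 / (y * q) * e3 - y * (1 - q ^ 2) / q * e4

end lowering

/-! ### The recursion agrees with the defining double sum -/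

section closedForm

variable {q : ℂ}

lemma rr_big (q : ℂ) (j : ℕ) {i : ℤ} (k : ℤ) {b : ℤ} (h : i + j < b) : rr q j i k b = 0 := by
  induction j generalizing b with
  | zero =>
    rw [rr_zero]; unfold rb
    rw [rf_neg q (m := i - b) (by push_cast at h; omega)]; ring
  | succ j ih =>
    push_cast at h
    rw [rr_succ', ih (by omega), ih (by omega)]; ring

lemma rr_big' (q : ℂ) (j : ℕ) (i : ℤ) {k b : ℤ} (h : k + j < b) : rr q j i k b = 0 := by
  rw [rr_symm, rr_big q j i h]

/-- The prefactor common to the summands of the 3D `R` and to the telescoping terms. -/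
def sg (q : ℂ) (i k b l m : ℤ) : ℂ := (-1) ^ l * q ^ (i * (k - b) + (k + 1) * l + m * (m - k))

/-- The ratio `(q²;q²)_{j+k-l} / (q²;q²)_{j-l}`. -/
def hh (q : ℂ) (j k l : ℤ) : ℂ := PP q (j + k - l) * rf q (j - l)

/-- The summand of the 3D `R` with index `λ = l`, `μ = m`, for all integers `l`, `m`. -/
def tm (q : ℂ) (j i k b l m : ℤ) : ℂ :=
  sg q i k b l m * hh q j k l * PP q i * rf q m * rf q (i - m) * PP q j * rf q l * rf q (j + k - b)

/-- First half of the telescoping decomposition of the recursion in `j`. -/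
def tX (q : ℂ) (j i k b l m : ℤ) : ℂ :=
  sg q i k b l m * rf q (l - 1) * rf q m * rf q (i - m - 1) * (q ^ (j + 1 - l)) ^ 2 *
    hh q j k (l - 1) * (PP q i * PP q j * rf q (j + 1 + k - b))

/-- Second half of the telescoping decomposition of the recursion in `j`. -/
def tY (q : ℂ) (j i k b l m : ℤ) : ℂ :=
  sg q i k b l m * rf q l * rf q (m - 1) * rf q (i - m) * (q ^ (j + 1 + k - b)) ^ 2 *
    hh q j k l * (PP q i * PP q j * rf q (j + 1 + k - b))

lemma hh_rec (hq : ∀ k : ℕ, k ≠ 0 → q ^ k ≠ 1) (j : ℤ) {k : ℤ} (hk : 0 ≤ k) (l : ℤ) :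
    hh q j k (l - 1) * (1 - (q ^ (j + 1 - l)) ^ 2) =
      (1 - (q ^ (j + 1 + k - l)) ^ 2) * hh q j k l := by
  unfold hh
  have h := rf_pred hq (j + 1 - l)
  have e : j - (l - 1) = j + 1 - l := by ring
  have e' : j + 1 - l - 1 = j - l := by ring
  rw [e'] at h
  rw [e, mul_assoc, mul_comm (rf q (j + 1 - l)), ← h]
  rcases lt_or_ge (j - l) 0 with hl | hl
  · rw [rf_neg q hl]; ring
  · have h2 := PP_succ q (m := j + k - l) (by omega)
    have e2 : j + k - l + 1 = j + 1 + k - l := by ring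
    have e3 : j + k - (l - 1) = j + 1 + k - l := by ring
    rw [e2] at h2
    rw [e3, h2]; ring

lemma sg_shift (hq0 : q ≠ 0) (j i k b l m : ℤ) :
    q ^ (i + 2 * j + k + 3 - 2 * b) * sg q i k (b - 1) (l - 1) m =
      -sg q i k b l m * (q ^ (i + j + 1 - b)) ^ 2 := by
  unfold sg
  rw [zpow_sub_one₀ (by norm_num)]
  have h : q ^ (i + 2 * j + k + 3 - 2 * b) *
      q ^ (i * (k - (b - 1)) + (k + 1) * (l - 1) + m * (m - k)) =
      q ^ (i * (k - b) + (k + 1) * l + m * (m - k)) * (q ^ (i + j + 1 - b)) ^ 2 := by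
    rw [← zpow_natCast, ← zpow_mul, ← zpow_add₀ hq0, ← zpow_add₀ hq0]
    congr 1; push_cast; ring
  linear_combination (-(-1 : ℂ) ^ l) * h

/-- The summands of the 3D `R` satisfy the recursion of `rr` in `j` up to `tX + tY`, which sums to
zero by `tX_tY`. -/
lemma tm_rec (hq0 : q ≠ 0) (hq : ∀ k : ℕ, k ≠ 0 → q ^ k ≠ 1) {j : ℤ} (hj : 0 ≤ j) (i : ℤ) {k : ℤ}
    (hk : 0 ≤ k) (b l m : ℤ) (hb : l + m = b) :
    tm q (j + 1) i k b l m - tm q j i k b l m +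
      q ^ (i + 2 * j + k + 3 - 2 * b) * tm q j i k (b - 1) (l - 1) m =
    tX q j i k b l m + tY q j i k b l m := by
  have h1 := hh_rec hq j hk l
  have h2 := sg_shift hq0 j i k b l m
  have h3 := PP_succ q hj
  have h4 := rf_pred hq l
  have h5 := rf_pred hq m
  have h6 := rf_pred hq (i - m)
  have h7 := rf_pred hq (j + 1 + k - b)
  have e1 : hh q (j + 1) k l = hh q j k (l - 1) := by
    unfold hh
    rw [show j + 1 + k - l = j + k - (l - 1) by ring, show j + 1 - l = j - (l - 1) by ring]
  have e2 : j + 1 + k - b - 1 = j + k - b := by ring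
  have e3 : j + k - (b - 1) = j + 1 + k - b := by ring
  rw [e2] at h7
  unfold tm tX tY
  rw [e1, e3, h3, h4, h5, h6, h7]
  have z1 : q ^ (j + 1 + k - l) = q ^ (j + 1 + k - b) * q ^ m := by
    rw [← zpow_add₀ hq0]; congr 1; omega
  have z2 : q ^ (j + 1) = q ^ (j + 1 - l) * q ^ l := by
    rw [← zpow_add₀ hq0]; congr 1; omega
  have z3 : q ^ (i + j + 1 - b) = q ^ (i - m) * q ^ (j + 1 - l) := by
    rw [← zpow_add₀ hq0]; congr 1; omega
  rw [z1] at h1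
  rw [z3] at h2
  rw [z2]
  generalize sg q i k (b - 1) (l - 1) m = s' at *
  generalize sg q i k b l m = s at *
  generalize q ^ (i + 2 * j + k + 3 - 2 * b) = t at *
  linear_combination (PP q i * PP q j * rf q (j + 1 + k - b) * s * rf q l * rf q m * rf q (i - m)) * h1 +
    (PP q i * PP q j * rf q (j + 1 + k - b) * rf q l * (1 - (q ^ l) ^ 2) * rf q m * rf q (i - m) *
      hh q j k (l - 1)) * h2

lemma tX_tY (hq0 : q ≠ 0) (j i k b l m : ℤ) (hb : l + m + 1 = b) :
    tX q j i k b (l + 1) m = -tY q j i k b l (m + 1) := by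
  unfold tX tY
  have h : sg q i k b (l + 1) m * (q ^ (j + 1 - (l + 1))) ^ 2 =
      -(sg q i k b l (m + 1) * (q ^ (j + 1 + k - b)) ^ 2) := by
    unfold sg
    rw [zpow_add_one₀ (by norm_num)]
    have h : q ^ (i * (k - b) + (k + 1) * (l + 1) + m * (m - k)) * (q ^ (j + 1 - (l + 1))) ^ 2 =
        q ^ (i * (k - b) + (k + 1) * l + (m + 1) * (m + 1 - k)) * (q ^ (j + 1 + k - b)) ^ 2 := by
      rw [← zpow_natCast, ← zpow_natCast, ← zpow_mul, ← zpow_mul, ← zpow_add₀ hq0, ← zpow_add₀ hq0]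
      congr 1; subst hb; push_cast; ring
    linear_combination (-(-1 : ℂ) ^ l) * h
  rw [add_sub_cancel_right, add_sub_cancel_right, show i - m - 1 = i - (m + 1) by ring]
  linear_combination (rf q l * rf q m * rf q (i - (m + 1)) * hh q j k l *
    (PP q i * PP q j * rf q (j + 1 + k - b))) * h

/-- The closed form of the 3D `R` agrees with the recursion in `j`. -/
lemma rr_eq_sum (hq0 : q ≠ 0) (hq : ∀ k : ℕ, k ≠ 0 → q ^ k ≠ 1) (j i k b : ℕ) :
    rr q j i k b = ∑ p ∈ Finset.HasAntidiagonal.antidiagonal b, tm q j i k b p.1 p.2 := by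
  induction j generalizing b with
  | zero =>
    rw [rr_zero, Finset.sum_eq_single (0, b)]
    · have h0 : PP q 0 = 1 := by simp [PP, poch_zero]
      have h1 : rf q 0 = 1 := by simp [rf, h0]
      simp only [tm, hh, sg, rb, Nat.cast_zero, zero_add, sub_zero, h0, h1, mul_zero, add_zero,
        zpow_zero, one_mul, mul_one]
      rw [show (i : ℤ) * (k - b) + b * (b - k) = (i - b) * (k - b) by ring]
      ring
    · rintro ⟨l, m⟩ hlm hne
      rw [Finset.HasAntidiagonal.mem_antidiagonal] at hlm
      have : l ≠ 0 := by
        rintro rfl; apply hne; simp at hlm; simp [hlm]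
      simp only [tm, hh]
      rw [rf_neg q (m := ((0 : ℕ) : ℤ) - l) (by omega)]; ring
    · intro h; simp at h
  | succ j ih =>
    rw [rr_succ', ih]
    cases b with
    | zero =>
      rw [rr_neg q j i k (by norm_num)]
      have hr : ∀ m : ℤ, 0 ≤ m → PP q m * rf q m = 1 := fun m hm => by
        rw [mul_comm, rf_mul_PP hq hm]
      have e0 : ∀ j : ℕ, tm q j i k 0 0 0 = sg q i k 0 0 0 := by
        intro j
        have a0 := hr (j + k) (by omega)
        have a1 := hr j (by omega)
        have a2 := hr i (by omega)
        have a3 : rf q 0 = 1 := by simp [rf, PP, poch_zero]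
        simp only [tm, hh, sub_zero, a3, mul_one]
        linear_combination (sg q i k 0 0 0) * (PP q j * rf q j * PP q i * rf q i * a0 + PP q i * rf q i * a1 + a2)
      have := e0 j
      have := e0 (j + 1)
      simp_all
    | succ b =>
      have e : ((b + 1 : ℕ) : ℤ) - 1 = (b : ℤ) := by push_cast; ring
      rw [e, ih]
      have hE : ∑ p ∈ Finset.HasAntidiagonal.antidiagonal b, tm q j i k b p.1 p.2 =
          ∑ p ∈ Finset.HasAntidiagonal.antidiagonal (b + 1), tm q j i k b (p.1 - 1) p.2 := by
        rw [Finset.Nat.sum_antidiagonal_succ]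
        have : tm q j i k b (((0 : ℕ) : ℤ) - 1) ((b + 1 : ℕ) : ℤ) = 0 := by
          simp only [tm]; rw [rf_neg q (m := ((0 : ℕ) : ℤ) - 1) (by norm_num)]; ring
        simp only [this, zero_add]
        simp
      have hX : ∑ p ∈ Finset.HasAntidiagonal.antidiagonal (b + 1),
          (tX q j i k (b + 1 : ℕ) p.1 p.2 + tY q j i k (b + 1 : ℕ) p.1 p.2) = 0 := by
        rw [Finset.sum_add_distrib, Finset.Nat.sum_antidiagonal_succ,
          Finset.Nat.sum_antidiagonal_succ']
        have h0 : tX q j i k (b + 1 : ℕ) ((0 : ℕ) : ℤ) ((b + 1 : ℕ) : ℤ) = 0 := by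
          simp only [tX]; rw [rf_neg q (m := ((0 : ℕ) : ℤ) - 1) (by norm_num)]; ring
        have h1 : tY q j i k (b + 1 : ℕ) ((b + 1 : ℕ) : ℤ) ((0 : ℕ) : ℤ) = 0 := by
          simp only [tY]; rw [rf_neg q (m := ((0 : ℕ) : ℤ) - 1) (by norm_num)]; ring
        simp only [h0, h1, zero_add, add_zero]
        rw [← Finset.sum_add_distrib]
        refine Finset.sum_eq_zero fun p hp => ?_
        rw [Finset.HasAntidiagonal.mem_antidiagonal] at hp
        push_cast
        rw [tX_tY hq0 _ _ _ _ _ _ (by omega)]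
        ring
      have hT : ∀ p ∈ Finset.HasAntidiagonal.antidiagonal (b + 1),
          tm q (j + 1 : ℕ) i k (b + 1 : ℕ) p.1 p.2 =
            (tX q j i k (b + 1 : ℕ) p.1 p.2 + tY q j i k (b + 1 : ℕ) p.1 p.2) +
            tm q j i k (b + 1 : ℕ) p.1 p.2 -
            q ^ ((i : ℤ) + 2 * j + k + 3 - 2 * (b + 1 : ℕ)) * tm q j i k b (p.1 - 1) p.2 := by
        intro p hp
        rw [Finset.HasAntidiagonal.mem_antidiagonal] at hp
        have := tm_rec hq0 hq (j := j) (by omega) i (k := k) (by omega) ((b + 1 : ℕ) : ℤ) p.1 p.2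
          (by omega)
        rw [e] at this
        push_cast at this ⊢
        linear_combination this
      rw [Finset.sum_congr rfl hT, Finset.sum_sub_distrib, Finset.sum_add_distrib, hX, hE,
        Finset.mul_sum, zero_add]

/-- The 3D `R` in terms of the recursively defined function `rr`. -/
lemma R3_eq (hq0 : q ≠ 0) (hq : ∀ k : ℕ, k ≠ 0 → q ^ k ≠ 1) (a b c i j k : ℕ) :
    R3 q a b c i j k = if a + b = i + j ∧ b + c = j + k then rr q j i k b else 0 := by
  unfold R3
  split_ifs with h
  · rw [one_mul, rr_eq_sum hq0 hq]
    rw [Finset.Nat.sum_antidiagonal_eq_sum_range_succ (fun l m : ℕ => tm q j i k b l m)]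
    refine Finset.sum_congr rfl fun l hl => ?_
    have hl' : l ≤ b := by simpa [Nat.lt_succ_iff] using hl
    obtain ⟨m, rfl⟩ := Nat.exists_eq_add_of_le hl'
    have hb : ∀ x y : ℕ, qbinom (q ^ 2) x y = PP q x * rf q y * rf q (x - y) := by
      intro x y
      unfold qbinom rf PP
      split_ifs with h1 h2 h2
      · rw [show ((x : ℤ) - y).toNat = x - y by omega]
        simp only [Int.toNat_natCast]
        rw [div_eq_mul_inv, mul_inv]; ring
      all_goals first | omega | simp
    have hc : ((j : ℤ) + k - ((l + m : ℕ) : ℤ)) = c := by omega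
    rw [hb, hb]
    have e1 : l + m - l = m := by omega
    unfold tm sg hh
    rw [hc, e1]
    have e2 : rf q c = (poch (q ^ 2) (q ^ 2) c)⁻¹ := by simp [rf, PP]
    have e3 : PP q ((j : ℤ) + k - l) = poch (q ^ 2) (q ^ 2) (c + m) := by
      unfold PP; congr 1; omega
    rw [e2, e3, div_eq_mul_inv]
    have e4 : (i : ℤ) * ((c : ℤ) - j) + ((k : ℤ) + 1) * l +
        (((l + m : ℕ) : ℤ) - l) * (((l + m : ℕ) : ℤ) - l - k) =
        i * ((k : ℤ) - ((l + m : ℕ) : ℤ)) + (k + 1) * l + m * (m - k) := by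
      rw [show (c : ℤ) - j = (k : ℤ) - ((l + m : ℕ) : ℤ) by omega]
      push_cast; ring
    rw [e4, zpow_natCast]
    ring
  · rw [zero_mul]

end closedForm

/-! ### One-site relations for the 3D `L` -/

/-- The one-site weight `S^(ε)` extended by zero to integer indices. -/
def SZ (q : ℂ) (e : Bool) (a b c i j k : ℤ) : ℂ :=
  if 0 ≤ a ∧ 0 ≤ b ∧ 0 ≤ c ∧ 0 ≤ i ∧ 0 ≤ j ∧ 0 ≤ k then
    Sg q e a.toNat b.toNat c.toNat i.toNat j.toNat k.toNat
  else 0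

/-- The symmetric `q`-number `[m]` of an integer. -/
def qn (q : ℂ) (m : ℤ) : ℂ := (q ^ m - (q ^ m)⁻¹) / (q - q⁻¹)

/-- The local parameter `q_i`: `q` at a bosonic site, `-q⁻¹` at a fermionic site. -/
def ps (q : ℂ) (e : Bool) : ℂ := if e then -q⁻¹ else q

/-- Admissible occupation number at a site of type `e`. -/
def okz (e : Bool) (m : ℤ) : Prop := 0 ≤ m ∧ (e = true → m ≤ 1)

lemma SZ_c_neg (q : ℂ) (e : Bool) (a b : ℤ) {c : ℤ} (i j k : ℤ) (h : c < 0) :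
    SZ q e a b c i j k = 0 := if_neg (by omega)

lemma SZ_k_neg (q : ℂ) (e : Bool) (a b c i j : ℤ) {k : ℤ} (h : k < 0) :
    SZ q e a b c i j k = 0 := if_neg (by omega)

section rels

variable {q : ℂ}

lemma SZ_R (hq0 : q ≠ 0) (hq : ∀ k : ℕ, k ≠ 0 → q ^ k ≠ 1) (a b c i j k : ℤ) :
    SZ q false a b c i j k =
      if a + b = i + j ∧ b + c = j + k ∧ 0 ≤ j then rr q j.toNat i k b else 0 := by
  unfold SZ Sg
  rw [if_neg (by decide : ¬ (false = true)), R3_eq hq0 hq]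
  by_cases h : a + b = i + j ∧ b + c = j + k ∧ 0 ≤ j
  · rw [if_pos h]
    obtain ⟨h1, h2, h3⟩ := h
    have hj : ((j.toNat : ℕ) : ℤ) = j := by omega
    split_ifs with h4 h5
    · rw [show ((i.toNat : ℕ) : ℤ) = i by omega, show ((k.toNat : ℕ) : ℤ) = k by omega,
        show ((b.toNat : ℕ) : ℤ) = b by omega]
    · omega
    · rcases lt_or_ge b 0 with hb | hb
      · rw [rr_neg q _ _ _ hb]
      rcases lt_or_ge i 0 with hi | hi
      · rw [rr_neg_left q _ _ _ hi]
      rcases lt_or_ge k 0 with hk | hk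
      · rw [rr_symm, rr_neg_left q _ _ _ hk]
      rcases lt_or_ge a 0 with ha | ha
      · rw [rr_big q _ _ (by omega)]
      · rw [rr_big' q _ _ (by omega)]
  · rw [if_neg h]
    split_ifs with h4 h5
    · omega
    · rfl
    · rfl

lemma SZ_L (a b c i j k : ℤ) :
    SZ q true a b c i j k =
      if 0 ≤ c ∧ 0 ≤ k then
        if a = 0 ∧ b = 0 ∧ i = 0 ∧ j = 0 ∧ c = k then 1
        else if a = 1 ∧ b = 1 ∧ i = 1 ∧ j = 1 ∧ c = k then 1
        else if a = 0 ∧ b = 1 ∧ i = 0 ∧ j = 1 ∧ c = k then -(q ^ k * q)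
        else if a = 1 ∧ b = 0 ∧ i = 1 ∧ j = 0 ∧ c = k then q ^ k
        else if a = 0 ∧ b = 1 ∧ i = 1 ∧ j = 0 ∧ c + 1 = k then 1 - (q ^ k) ^ 2
        else if a = 1 ∧ b = 0 ∧ i = 0 ∧ j = 1 ∧ c = k + 1 then 1
        else 0
      else 0 := by
  by_cases h : 0 ≤ a ∧ 0 ≤ b ∧ 0 ≤ c ∧ 0 ≤ i ∧ 0 ≤ j ∧ 0 ≤ k
  · obtain ⟨ha, hb, hc, hi, hj, hk⟩ := h
    lift a to ℕ using ha
    lift b to ℕ using hb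
    lift c to ℕ using hc
    lift i to ℕ using hi
    lift j to ℕ using hj
    lift k to ℕ using hk
    have e : q ^ (2 * k) = (q ^ k) ^ 2 := by rw [← pow_mul, mul_comm]
    simp only [SZ, Sg, L3, Int.toNat_natCast, Int.natCast_nonneg, and_self, if_true, zpow_natCast,
      pow_succ q k, e]
    norm_cast
  · rw [SZ, if_neg h]
    split_ifs <;> first | rfl | omega

lemma q_sub_ne (hq0 : q ≠ 0) (hq : ∀ k : ℕ, k ≠ 0 → q ^ k ≠ 1) : q - q⁻¹ ≠ 0 := by
  intro h
  apply hq 2 (by norm_num)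
  field_simp at h
  linear_combination h

lemma qn_zero (q : ℂ) : qn q 0 = 0 := by simp [qn]

lemma qn_one (hq0 : q ≠ 0) (hq : ∀ k : ℕ, k ≠ 0 → q ^ k ≠ 1) : qn q 1 = 1 := by
  unfold qn; rw [zpow_one]; exact div_self (q_sub_ne hq0 hq)

/-- The eight one-site relations at a fermionic site; see `SZ_rels`. -/
lemma SZ_L_rels (hq0 : q ≠ 0) (hq : ∀ k : ℕ, k ≠ 0 → q ^ k ≠ 1) {a b i j : ℤ} (c k : ℤ)
    (ha : okz true a) (hb : okz true b) (hi : okz true i) (hj : okz true j) :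
    (0 ≤ k → qn q (a + 1) * SZ q true (a + 1) b c i j k =
      qn q j * SZ q true a b c i (j - 1) (k + 1) +
      qn q i * (ps q true ^ j)⁻¹ * q ^ k * SZ q true a b c (i - 1) j k) ∧
    ((ps q true ^ a)⁻¹ * qn q (b + 1) * SZ q true a (b + 1) c i j k =
      -(q ^ k * q) * qn q j * SZ q true a b c i (j - 1) k +
      qn q i * (ps q true ^ j)⁻¹ * (1 - (q ^ k) ^ 2) * SZ q true a b c (i - 1) j (k - 1)) ∧
    (SZ q true a b c i (j + 1) k = SZ q true (a - 1) b (c - 1) i j k -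
      q ^ c * q * ps q true ^ a * SZ q true a (b - 1) c i j k) ∧
    (ps q true ^ j * SZ q true a b c (i + 1) j k = q ^ c * SZ q true (a - 1) b c i j k +
      (1 - (q ^ c * q) ^ 2) * ps q true ^ a * SZ q true a (b - 1) (c + 1) i j k) ∧
    (0 ≤ k → SZ q true a (b - 1) c i j k = SZ q true a b c (i + 1) j (k + 1) -
      q ^ k * q * ps q true ^ i * SZ q true a b c i (j + 1) k) ∧
    (ps q true ^ b * SZ q true (a - 1) b c i j k = q ^ k * SZ q true a b c (i + 1) j k +
      (1 - (q ^ k) ^ 2) * ps q true ^ i * SZ q true a b c i (j + 1) (k - 1)) ∧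
    (qn q i * SZ q true a b c (i - 1) j k = qn q (b + 1) * SZ q true a (b + 1) (c - 1) i j k +
      q ^ c * qn q (a + 1) * (ps q true ^ b)⁻¹ * SZ q true (a + 1) b c i j k) ∧
    ((ps q true ^ i)⁻¹ * qn q j * SZ q true a b c i (j - 1) k =
      -(q ^ c * q) * qn q (b + 1) * SZ q true a (b + 1) c i j k +
      (1 - (q ^ c * q) ^ 2) * qn q (a + 1) * (ps q true ^ b)⁻¹ *
        SZ q true (a + 1) b (c + 1) i j k) := by
  obtain ⟨ha0, ha1⟩ := ha
  obtain ⟨hb0, hb1⟩ := hb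
  obtain ⟨hi0, hi1⟩ := hi
  obtain ⟨hj0, hj1⟩ := hj
  replace ha1 := ha1 rfl
  replace hb1 := hb1 rfl
  replace hi1 := hi1 rfl
  replace hj1 := hj1 rfl
  have e1 := qn_one hq0 hq
  have e0 := qn_zero q
  simp only [SZ_L]
  have hz := fun k : ℤ => zpow_add_one₀ hq0 k
  have hz' := fun k : ℤ => zpow_sub_one₀ hq0 k
  have hk0 : q ^ k ≠ 0 := zpow_ne_zero _ hq0
  have h3 : k = 0 → q ^ k = 1 := by rintro rfl; simp
  have h4 : c = -1 → q ^ c = q⁻¹ := by rintro rfl; simp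
  -- the labels `a, b, i, j` are `0` or `1`, and each choice leaves an identity in `q^c` and `q^k`
  refine ⟨fun hk => ?_, ?_, ?_, ?_, fun hk => ?_, ?_, ?_, ?_⟩ <;>
    interval_cases a <;> interval_cases b <;> interval_cases i <;> interval_cases j <;>
    norm_num [e1, e0, ps] <;> split_ifs <;>
    first
      | omega
      | rfl
      | (ring1)
      | (simp only [hz, hz']; field_simp; ring1)
      | (have hs : c = 0 := by omega
         subst hs
         have hs : k = 0 := by omega
         subst hs
         first
           | (norm_num; done)
           | (norm_num; field_simp; done)
           | (norm_num; field_simp; ring1))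
      | (have hs : c = k := by omega
         subst hs
         try simp only [hz, hz']
         first
           | done
           | ring1
           | (field_simp; done)
           | (field_simp; ring1))
      | (have hs : c = k + 1 := by omega
         subst hs
         try simp only [hz, hz']
         first
           | done
           | ring1
           | (field_simp; done)
           | (field_simp; ring1))
      | (have hs : c = k - 1 := by omega
         subst hs
         try simp only [hz, hz']
         first
           | done
           | ring1
           | (field_simp; done)
           | (field_simp; ring1))
      | (rw [h3 (by omega)]; norm_num; done)
      | (rw [h4 (by omega)]; field_simp; norm_num; done)
end rels

/-! ### One-site relations for the 3D `R` -/

section relsR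

variable {q : ℂ}

lemma SZ_R_nat (hq0 : q ≠ 0) (hq : ∀ k : ℕ, k ≠ 0 → q ^ k ≠ 1) (a b c i : ℤ) (J : ℕ) (k : ℤ) :
    SZ q false a b c i J k = if a + b = i + J ∧ b + c = J + k then rr q J i k b else 0 := by
  rw [SZ_R hq0 hq, Int.toNat_natCast]
  simp

lemma SZ_R_succ (hq0 : q ≠ 0) (hq : ∀ k : ℕ, k ≠ 0 → q ^ k ≠ 1) (a b c i : ℤ) (J : ℕ) (k : ℤ) :
    SZ q false a b c i ((J : ℤ) + 1) k =
      if a + b = i + (J + 1) ∧ b + c = J + 1 + k then rr q (J + 1) i k b else 0 := by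
  have := SZ_R_nat hq0 hq a b c i (J + 1) k
  rw [← Nat.cast_succ, this, Nat.cast_succ]

lemma SZ_R_pred (hq0 : q ≠ 0) (hq : ∀ k : ℕ, k ≠ 0 → q ^ k ≠ 1) (a b c i : ℤ) (J : ℕ) (k : ℤ) :
    qn q J * SZ q false a b c i ((J : ℤ) - 1) k =
      qn q J * if a + b = i + (J - 1) ∧ b + c = J - 1 + k then rr q (J - 1) i k b else 0 := by
  cases J with
  | zero => simp [qn]
  | succ J =>
    have h : (((J + 1 : ℕ) : ℤ) - 1) = (J : ℤ) := by push_cast; ring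
    rw [h, SZ_R_nat hq0 hq, Nat.add_sub_cancel]

/-- The eight one-site relations at a bosonic site; see `SZ_rels`. -/
lemma SZ_R_rels (hq0 : q ≠ 0) (hq : ∀ k : ℕ, k ≠ 0 → q ^ k ≠ 1) {a b i j : ℤ} (c k : ℤ)
    (hi : 0 ≤ i) (hj : 0 ≤ j) :
    (0 ≤ k → qn q (a + 1) * SZ q false (a + 1) b c i j k =
      qn q j * SZ q false a b c i (j - 1) (k + 1) +
      qn q i * (ps q false ^ j)⁻¹ * q ^ k * SZ q false a b c (i - 1) j k) ∧
    ((ps q false ^ a)⁻¹ * qn q (b + 1) * SZ q false a (b + 1) c i j k =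
      -(q ^ k * q) * qn q j * SZ q false a b c i (j - 1) k +
      qn q i * (ps q false ^ j)⁻¹ * (1 - (q ^ k) ^ 2) * SZ q false a b c (i - 1) j (k - 1)) ∧
    (SZ q false a b c i (j + 1) k = SZ q false (a - 1) b (c - 1) i j k -
      q ^ c * q * ps q false ^ a * SZ q false a (b - 1) c i j k) ∧
    (ps q false ^ j * SZ q false a b c (i + 1) j k = q ^ c * SZ q false (a - 1) b c i j k +
      (1 - (q ^ c * q) ^ 2) * ps q false ^ a * SZ q false a (b - 1) (c + 1) i j k) ∧
    (0 ≤ k → SZ q false a (b - 1) c i j k = SZ q false a b c (i + 1) j (k + 1) -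
      q ^ k * q * ps q false ^ i * SZ q false a b c i (j + 1) k) ∧
    (ps q false ^ b * SZ q false (a - 1) b c i j k = q ^ k * SZ q false a b c (i + 1) j k +
      (1 - (q ^ k) ^ 2) * ps q false ^ i * SZ q false a b c i (j + 1) (k - 1)) ∧
    (qn q i * SZ q false a b c (i - 1) j k = qn q (b + 1) * SZ q false a (b + 1) (c - 1) i j k +
      q ^ c * qn q (a + 1) * (ps q false ^ b)⁻¹ * SZ q false (a + 1) b c i j k) ∧
    ((ps q false ^ i)⁻¹ * qn q j * SZ q false a b c i (j - 1) k =
      -(q ^ c * q) * qn q (b + 1) * SZ q false a (b + 1) c i j k +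
      (1 - (q ^ c * q) ^ 2) * qn q (a + 1) * (ps q false ^ b)⁻¹ *
        SZ q false (a + 1) b (c + 1) i j k) := by
  lift j to ℕ using hj with J
  have hps : ps q false = q := rfl
  have hD := q_sub_ne hq0 hq
  have hx : q ^ i ≠ 0 := zpow_ne_zero _ hq0
  have hv : q ^ b ≠ 0 := zpow_ne_zero _ hq0
  have hw : q ^ k ≠ 0 := zpow_ne_zero _ hq0
  have hy : q ^ J ≠ 0 := pow_ne_zero _ hq0
  have ec : ∀ s t : ℤ, q ^ (s + t) = q ^ s * q ^ t := zpow_add₀ hq0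
  have ed : ∀ s t : ℤ, q ^ (s - t) = q ^ s / q ^ t := zpow_sub₀ hq0
  have kneg : ∀ {m : ℤ} (J : ℕ) (i b : ℤ), m < 0 → rr q J i m b = 0 := fun J i b h => by
    rw [rr_symm, rr_neg_left q _ _ _ h]
  simp only [hps]
  refine ⟨fun hk => ?_, ?_, ?_, ?_, fun hk => ?_, ?_, ?_, ?_⟩
  · rw [SZ_R_pred hq0 hq, SZ_R_nat hq0 hq, SZ_R_nat hq0 hq]
    by_cases h : a + 1 + b = i + J ∧ b + c = J + k
    · rw [if_pos h, if_pos (by omega), if_pos (by omega)]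
      have key := rr_down_a hq0 hq J hi hk b
      obtain rfl : a = i + J - b - 1 := by omega
      unfold qn
      rw [show i + J - b - 1 + 1 = i + J - b by ring]
      simp only [ec, ed, zpow_natCast]
      generalize q - q⁻¹ = D at hD
      linear_combination (norm := (field_simp; ring)) (-1 / D) * key
    · rw [if_neg h, if_neg (by omega), if_neg (by omega)]; ring
  · rw [mul_assoc (-(q ^ k * q)), SZ_R_pred hq0 hq, SZ_R_nat hq0 hq, SZ_R_nat hq0 hq]
    by_cases h : a + (b + 1) = i + J ∧ b + 1 + c = J + k
    · rw [if_pos h, if_pos (by omega), if_pos (by omega)]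
      rcases lt_or_ge k 0 with hk | hk
      · rw [kneg _ _ _ hk, kneg _ _ _ hk, kneg (m := k - 1) _ _ _ (by omega)]; ring
      have key := rr_down_b hq0 hq J hi hk b
      obtain rfl : a = i + J - b - 1 := by omega
      unfold qn
      simp only [ec, ed, zpow_natCast, zpow_one]
      generalize q - q⁻¹ = D at hD
      linear_combination (norm := (field_simp; ring)) (-1 / (D * q ^ i * q ^ J)) * key
    · rw [if_neg h, if_neg (by omega), if_neg (by omega)]; ring
  · rw [SZ_R_succ hq0 hq, SZ_R_nat hq0 hq, SZ_R_nat hq0 hq]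
    by_cases h : a + b = i + (J + 1) ∧ b + c = J + 1 + k
    · rw [if_pos h, if_pos (by omega), if_pos (by omega)]
      have key := rr_succ hq0 J i k b
      obtain rfl : a = i + J - b + 1 := by omega
      obtain rfl : c = J + k - b + 1 := by omega
      simp only [ec, ed, zpow_natCast, zpow_one]
      linear_combination (norm := (field_simp; ring)) key
    · rw [if_neg h, if_neg (by omega), if_neg (by omega)]; ring
  · rw [SZ_R_nat hq0 hq, SZ_R_nat hq0 hq, SZ_R_nat hq0 hq]
    by_cases h : a + b = i + 1 + J ∧ b + c = J + k
    · rw [if_pos h, if_pos (by omega), if_pos (by omega)]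
      have key := rr_up_i hq0 hq J hi k b
      obtain rfl : a = i + J - b + 1 := by omega
      obtain rfl : c = J + k - b := by omega
      simp only [ec, ed, zpow_natCast, zpow_one]
      linear_combination (norm := (field_simp; ring)) q ^ J * key
    · rw [if_neg h, if_neg (by omega), if_neg (by omega)]; ring
  · rw [SZ_R_succ hq0 hq, SZ_R_nat hq0 hq, SZ_R_nat hq0 hq]
    by_cases h : a + (b - 1) = i + J ∧ b - 1 + c = J + k
    · rw [if_pos h, if_pos (by omega), if_pos (by omega)]
      have key := rr_up_ik hq0 hq J hi hk b
      linear_combination key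
    · rw [if_neg h, if_neg (by omega), if_neg (by omega)]; ring
  · rw [SZ_R_succ hq0 hq, SZ_R_nat hq0 hq, SZ_R_nat hq0 hq]
    by_cases h : a - 1 + b = i + J ∧ b + c = J + k
    · rw [if_pos h, if_pos (by omega), if_pos (by omega)]
      rcases lt_or_ge k 0 with hk | hk
      · rw [kneg _ _ _ hk, kneg _ _ _ hk, kneg (m := k - 1) _ _ _ (by omega)]; ring
      have key := rr_mix hq0 hq J hi hk b
      linear_combination key
    · rw [if_neg h, if_neg (by omega), if_neg (by omega)]; ring
  · rw [SZ_R_nat hq0 hq, SZ_R_nat hq0 hq, SZ_R_nat hq0 hq]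
    by_cases h : a + b = i - 1 + J ∧ b + c = J + k
    · rw [if_pos h, if_pos (by omega), if_pos (by omega)]
      have key := rr_down_i hq0 hq J hi k b
      obtain rfl : a = i + J - b - 1 := by omega
      obtain rfl : c = J + k - b := by omega
      unfold qn
      rw [show i + J - b - 1 + 1 = i + J - b by ring]
      simp only [ec, ed, zpow_natCast, zpow_one]
      generalize q - q⁻¹ = D at hD
      linear_combination (norm := (field_simp; ring)) (-1 / (D * q ^ i)) * key
    · rw [if_neg h, if_neg (by omega), if_neg (by omega)]; ring
  · rw [mul_assoc _ (qn q J), SZ_R_pred hq0 hq, SZ_R_nat hq0 hq, SZ_R_nat hq0 hq]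
    by_cases h : a + b = i + (J - 1) ∧ b + c = J - 1 + k
    · rw [if_pos h, if_pos (by omega), if_pos (by omega)]
      have key := rr_down_j hq0 hq J i k b
      obtain rfl : a = i + J - b - 1 := by omega
      obtain rfl : c = J + k - b - 1 := by omega
      unfold qn
      rw [show i + J - b - 1 + 1 = i + J - b by ring]
      simp only [ec, ed, zpow_natCast, zpow_one]
      generalize q - q⁻¹ = D at hD
      linear_combination (norm := (field_simp; ring)) (-1 / (D * q ^ i * q ^ J)) * key
    · rw [if_neg h, if_neg (by omega), if_neg (by omega)]; ring

end relsR

/-! ### Relations at two neighbouring sites and at the boundaries -/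

section loc

variable {q : ℂ}

/-- The eight one-site relations. The first, second, fifth and sixth trade a shift of the outputs
`a, b` for shifts of the inputs `i, j, k` with `c` fixed; the other four trade a shift of the inputs
`i, j` for shifts of the outputs `a, b, c` with `k` fixed. -/
lemma SZ_rels (hq0 : q ≠ 0) (hq : ∀ k : ℕ, k ≠ 0 → q ^ k ≠ 1) {e : Bool} {a b i j : ℤ} (c k : ℤ)
    (ha : okz e a) (hb : okz e b) (hi : okz e i) (hj : okz e j) :
    (0 ≤ k → qn q (a + 1) * SZ q e (a + 1) b c i j k =
      qn q j * SZ q e a b c i (j - 1) (k + 1) +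
      qn q i * (ps q e ^ j)⁻¹ * q ^ k * SZ q e a b c (i - 1) j k) ∧
    ((ps q e ^ a)⁻¹ * qn q (b + 1) * SZ q e a (b + 1) c i j k =
      -(q ^ k * q) * qn q j * SZ q e a b c i (j - 1) k +
      qn q i * (ps q e ^ j)⁻¹ * (1 - (q ^ k) ^ 2) * SZ q e a b c (i - 1) j (k - 1)) ∧
    (SZ q e a b c i (j + 1) k = SZ q e (a - 1) b (c - 1) i j k -
      q ^ c * q * ps q e ^ a * SZ q e a (b - 1) c i j k) ∧
    (ps q e ^ j * SZ q e a b c (i + 1) j k = q ^ c * SZ q e (a - 1) b c i j k +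
      (1 - (q ^ c * q) ^ 2) * ps q e ^ a * SZ q e a (b - 1) (c + 1) i j k) ∧
    (0 ≤ k → SZ q e a (b - 1) c i j k = SZ q e a b c (i + 1) j (k + 1) -
      q ^ k * q * ps q e ^ i * SZ q e a b c i (j + 1) k) ∧
    (ps q e ^ b * SZ q e (a - 1) b c i j k = q ^ k * SZ q e a b c (i + 1) j k +
      (1 - (q ^ k) ^ 2) * ps q e ^ i * SZ q e a b c i (j + 1) (k - 1)) ∧
    (qn q i * SZ q e a b c (i - 1) j k = qn q (b + 1) * SZ q e a (b + 1) (c - 1) i j k +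
      q ^ c * qn q (a + 1) * (ps q e ^ b)⁻¹ * SZ q e (a + 1) b c i j k) ∧
    ((ps q e ^ i)⁻¹ * qn q j * SZ q e a b c i (j - 1) k =
      -(q ^ c * q) * qn q (b + 1) * SZ q e a (b + 1) c i j k +
      (1 - (q ^ c * q) ^ 2) * qn q (a + 1) * (ps q e ^ b)⁻¹ *
        SZ q e (a + 1) b (c + 1) i j k) := by
  cases e with
  | false => exact SZ_R_rels hq0 hq c k hi.1 hj.1
  | true => exact SZ_L_rels hq0 hq c k ha hb hi hj

/-- Two adjacent sites intertwine the middle generators `e_r`: by the one-site relations the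
two products on each side become the same combination of four products. -/
lemma mid_e (hq0 : q ≠ 0) (hq : ∀ k : ℕ, k ≠ 0 → q ^ k ≠ 1) {e e' : Bool}
    {a b i j a' b' i' j' : ℤ} (C m E : ℤ)
    (ha : okz e a) (hb : okz e b) (hi : okz e i) (hj : okz e j)
    (ha' : okz e' a') (hb' : okz e' b') (hi' : okz e' i') (hj' : okz e' j') :
    qn q (a + 1) * (SZ q e (a + 1) b C i j m * SZ q e' (a' - 1) b' m i' j' E) +
      (ps q e ^ a)⁻¹ * ps q e' ^ a' * qn q (b + 1) *
        (SZ q e a (b + 1) C i j (m + 1) * SZ q e' a' (b' - 1) (m + 1) i' j' E) =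
    qn q j * (SZ q e a b C i (j - 1) (m + 1) * SZ q e' a' b' (m + 1) i' (j' + 1) E) +
      qn q i * ((ps q e ^ j)⁻¹ * ps q e' ^ j') *
        (SZ q e a b C (i - 1) j m * SZ q e' a' b' m (i' + 1) j' E) := by
  obtain ⟨r1, -, -, -, -, -, -, -⟩ := SZ_rels hq0 hq C m ha hb hi hj
  obtain ⟨-, r2, -, -, -, -, -, -⟩ := SZ_rels hq0 hq C (m + 1) ha hb hi hj
  obtain ⟨-, -, r3, -, -, -, -, -⟩ := SZ_rels hq0 hq (m + 1) E ha' hb' hi' hj'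
  obtain ⟨-, -, -, r4, -, -, -, -⟩ := SZ_rels hq0 hq m E ha' hb' hi' hj'
  rw [show m + 1 - 1 = m by ring] at r2 r3
  have hm := zpow_add_one₀ hq0 m
  rw [hm] at r2 r3
  rcases lt_or_ge m 0 with h | h
  · rw [SZ_c_neg q e' (a' - 1) b' i' j' E h] at r3 ⊢
    rw [SZ_k_neg q e a b C (i - 1) j h] at r2 ⊢
    rw [r3]
    linear_combination ps q e' ^ a' * SZ q e' a' (b' - 1) (m + 1) i' j' E * r2
  · rw [r3]
    linear_combination SZ q e' (a' - 1) b' m i' j' E * r1 h +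
      ps q e' ^ a' * SZ q e' a' (b' - 1) (m + 1) i' j' E * r2 -
      qn q i * (ps q e ^ j)⁻¹ * SZ q e a b C (i - 1) j m * r4

/-- Two adjacent sites intertwine the middle generators `f_r`. -/
lemma mid_f (hq0 : q ≠ 0) (hq : ∀ k : ℕ, k ≠ 0 → q ^ k ≠ 1) {e e' : Bool}
    {a b i j a' b' i' j' : ℤ} (C m E : ℤ)
    (ha : okz e a) (hb : okz e b) (hi : okz e i) (hj : okz e j)
    (ha' : okz e' a') (hb' : okz e' b') (hi' : okz e' i') (hj' : okz e' j') :
    qn q (b' + 1) * (SZ q e a (b - 1) C i j (m - 1) * SZ q e' a' (b' + 1) (m - 1) i' j' E) +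
      qn q (a' + 1) * (ps q e ^ b * (ps q e' ^ b')⁻¹) *
        (SZ q e (a - 1) b C i j m * SZ q e' (a' + 1) b' m i' j' E) =
    qn q i' * (SZ q e a b C (i + 1) j m * SZ q e' a' b' m (i' - 1) j' E) +
      ps q e ^ i * (ps q e' ^ i')⁻¹ * qn q j' *
        (SZ q e a b C i (j + 1) (m - 1) * SZ q e' a' b' (m - 1) i' (j' - 1) E) := by
  obtain ⟨-, -, -, -, r5, -, -, -⟩ := SZ_rels hq0 hq C (m - 1) ha hb hi hj
  obtain ⟨-, -, -, -, -, r6, -, -⟩ := SZ_rels hq0 hq C m ha hb hi hj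
  obtain ⟨-, -, -, -, -, -, r7, -⟩ := SZ_rels hq0 hq m E ha' hb' hi' hj'
  obtain ⟨-, -, -, -, -, -, -, r8⟩ := SZ_rels hq0 hq (m - 1) E ha' hb' hi' hj'
  rw [show m - 1 + 1 = m by ring] at r5 r8
  have hm : q ^ (m - 1) * q = q ^ m := by
    rw [← zpow_add_one₀ hq0, sub_add_cancel]
  rw [hm] at r5 r8
  rcases lt_or_ge (m - 1) 0 with h | h
  · rw [SZ_c_neg q e' a' (b' + 1) i' j' E h] at r7 ⊢
    rw [SZ_k_neg q e a b C i (j + 1) h] at r6 ⊢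
    linear_combination qn q (a' + 1) * (ps q e' ^ b')⁻¹ * SZ q e' (a' + 1) b' m i' j' E * r6 -
      SZ q e a b C (i + 1) j m * r7
  · linear_combination qn q (b' + 1) * SZ q e' a' (b' + 1) (m - 1) i' j' E * r5 h +
      qn q (a' + 1) * (ps q e' ^ b')⁻¹ * SZ q e' (a' + 1) b' m i' j' E * r6 -
      SZ q e a b C (i + 1) j m * r7 -
      ps q e ^ i * SZ q e a b C i (j + 1) (m - 1) * r8

/-- Left boundary weight `(q²;q²)_N/(q;q)_N`. -/
def wB (q : ℂ) (N : ℤ) : ℂ := poch (q ^ 2) (q ^ 2) N.toNat / poch q q N.toNat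

/-- Right boundary weight `1/(q;q)_m`. -/
def chi (q : ℂ) (m : ℤ) : ℂ := (poch q q m.toNat)⁻¹

lemma poch_q_ne (hq : ∀ k : ℕ, k ≠ 0 → q ^ k ≠ 1) (m : ℕ) : poch q q m ≠ 0 := by
  unfold poch
  rw [Finset.prod_ne_zero_iff]
  intro k _ h
  apply hq (k + 1) (by omega)
  rw [pow_succ]; linear_combination -h

lemma wB_rec (hq : ∀ k : ℕ, k ≠ 0 → q ^ k ≠ 1) {N : ℤ} (h : 0 ≤ N - 1) :
    wB q N = wB q (N - 1) * (1 + q ^ N) := by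
  obtain ⟨M, rfl⟩ : ∃ M : ℕ, N = (M : ℤ) + 1 := ⟨(N - 1).toNat, by omega⟩
  have h1 : ((M : ℤ) + 1 - 1).toNat = M := by omega
  have h2 : ((M : ℤ) + 1).toNat = M + 1 := by omega
  unfold wB
  rw [h1, h2]
  have e1 : poch q q (M + 1) = poch q q M * (1 - q * q ^ M) := Finset.prod_range_succ _ _
  have e2 : poch (q ^ 2) (q ^ 2) (M + 1) =
      poch (q ^ 2) (q ^ 2) M * (1 - q ^ 2 * (q ^ 2) ^ M) := Finset.prod_range_succ _ _
  have e3 : q ^ ((M : ℤ) + 1) = q * q ^ M := by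
    rw [← Nat.cast_succ, zpow_natCast, pow_succ, mul_comm]
  have n1 := poch_q_ne hq M
  have n2 : 1 - q * q ^ M ≠ 0 := fun h => hq (M + 1) (by omega) (by
    rw [pow_succ]; linear_combination -h)
  have e4 : (q ^ 2) ^ M = (q ^ M) ^ 2 := by rw [← pow_mul, ← pow_mul, mul_comm]
  rw [e1, e2, e3, e4]
  field_simp
  ring

lemma chi_rec (hq : ∀ k : ℕ, k ≠ 0 → q ^ k ≠ 1) {m : ℤ} (h : 0 ≤ m - 1) :
    chi q (m - 1) = chi q m * (1 - q ^ m) := by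
  obtain ⟨M, rfl⟩ : ∃ M : ℕ, m = (M : ℤ) + 1 := ⟨(m - 1).toNat, by omega⟩
  have h1 : ((M : ℤ) + 1 - 1).toNat = M := by omega
  have h2 : ((M : ℤ) + 1).toNat = M + 1 := by omega
  unfold chi
  rw [h1, h2]
  have e1 : poch q q (M + 1) = poch q q M * (1 - q * q ^ M) := Finset.prod_range_succ _ _
  have e3 : q ^ ((M : ℤ) + 1) = q * q ^ M := by
    rw [← Nat.cast_succ, zpow_natCast, pow_succ, mul_comm]
  have n1 := poch_q_ne hq M
  have n2 : 1 - q * q ^ M ≠ 0 := fun h => hq (M + 1) (by omega) (by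
    rw [pow_succ]; linear_combination -h)
  rw [e1, e3]
  field_simp

/-- The leftmost site intertwines `e₀`, thanks to the ratio `1 + q^N` of consecutive left boundary
weights. -/
lemma left_e (hq0 : q ≠ 0) (hq : ∀ k : ℕ, k ≠ 0 → q ^ k ≠ 1) {e : Bool}
    {a b i j : ℤ} (N k : ℤ) (ha : okz e a) (hb : okz e b) (hi : okz e i) (hj : okz e j) :
    wB q (N - 1) * SZ q e (a - 1) b (N - 1) i j k -
      q * ps q e ^ a * (wB q N * SZ q e a (b - 1) N i j k) =
    wB q N * SZ q e a b N i (j + 1) k -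
      q * ps q e ^ j * (wB q (N - 1) * SZ q e a b (N - 1) (i + 1) j k) := by
  obtain ⟨-, -, r3, -, -, -, -, -⟩ := SZ_rels hq0 hq N k ha hb hi hj
  obtain ⟨-, -, -, r4, -, -, -, -⟩ := SZ_rels hq0 hq (N - 1) k ha hb hi hj
  have hm : q ^ (N - 1) * q = q ^ N := by
    rw [← zpow_add_one₀ hq0, sub_add_cancel]
  have hm' : q ^ (N - 1) = q ^ N / q := by field_simp; exact hm
  rw [sub_add_cancel, hm, hm'] at r4
  rcases lt_or_ge (N - 1) 0 with h | h
  · rw [SZ_c_neg q e (a - 1) b i j k h] at r3 ⊢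
    rw [SZ_c_neg q e a b (i + 1) j k h]
    rcases lt_or_ge N 0 with h' | h'
    · rw [SZ_c_neg q e a (b - 1) i j k h', SZ_c_neg q e a b i (j + 1) k h']; ring
    · obtain rfl : N = 0 := by omega
      rw [zpow_zero] at r3
      rw [r3]; ring
  · rw [wB_rec hq h]
    linear_combination (norm := (field_simp; ring)) -(wB q (N - 1) * (1 + q ^ N)) * r3 +
      q * wB q (N - 1) * r4

/-- The leftmost site intertwines `f₀`. -/
lemma left_f (hq0 : q ≠ 0) (hq : ∀ k : ℕ, k ≠ 0 → q ^ k ≠ 1) {e : Bool}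
    {a b i j : ℤ} (N k : ℤ) (ha : okz e a) (hb : okz e b) (hi : okz e i) (hj : okz e j) :
    qn q (b + 1) * (wB q (N - 1) * SZ q e a (b + 1) (N - 1) i j k) +
      qn q (a + 1) * (ps q e ^ b)⁻¹ * (wB q N * SZ q e (a + 1) b N i j k) =
    qn q i * (wB q N * SZ q e a b N (i - 1) j k) +
      (ps q e ^ i)⁻¹ * qn q j * (wB q (N - 1) * SZ q e a b (N - 1) i (j - 1) k) := by
  obtain ⟨-, -, -, -, -, -, r7, -⟩ := SZ_rels hq0 hq N k ha hb hi hj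
  obtain ⟨-, -, -, -, -, -, -, r8⟩ := SZ_rels hq0 hq (N - 1) k ha hb hi hj
  have hm : q ^ (N - 1) * q = q ^ N := by
    rw [← zpow_add_one₀ hq0, sub_add_cancel]
  rw [sub_add_cancel, hm] at r8
  rcases lt_or_ge (N - 1) 0 with h | h
  · rw [SZ_c_neg q e a (b + 1) i j k h] at r7 ⊢
    rw [SZ_c_neg q e a b i (j - 1) k h]
    rcases lt_or_ge N 0 with h' | h'
    · rw [SZ_c_neg q e (a + 1) b i j k h', SZ_c_neg q e a b (i - 1) j k h']; ring
    · obtain rfl : N = 0 := by omega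
      rw [zpow_zero] at r7
      linear_combination -wB q 0 * r7
  · rw [wB_rec hq h]
    linear_combination -(wB q (N - 1) * (1 + q ^ N)) * r7 - wB q (N - 1) * r8

/-- The rightmost site intertwines `e_n`, thanks to the ratio `1 - q^m` of consecutive right
boundary weights. -/
lemma right_e (hq0 : q ≠ 0) (hq : ∀ k : ℕ, k ≠ 0 → q ^ k ≠ 1) {e : Bool}
    {a b i j : ℤ} (C m : ℤ) (ha : okz e a) (hb : okz e b) (hi : okz e i) (hj : okz e j) :
    qn q (a + 1) * (chi q m * SZ q e (a + 1) b C i j m) -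
      q⁻¹ * (ps q e ^ a)⁻¹ * qn q (b + 1) * (chi q (m + 1) * SZ q e a (b + 1) C i j (m + 1)) =
    qn q j * (chi q (m + 1) * SZ q e a b C i (j - 1) (m + 1)) -
      q⁻¹ * qn q i * (ps q e ^ j)⁻¹ * (chi q m * SZ q e a b C (i - 1) j m) := by
  obtain ⟨r1, -, -, -, -, -, -, -⟩ := SZ_rels hq0 hq C m ha hb hi hj
  obtain ⟨-, r2, -, -, -, -, -, -⟩ := SZ_rels hq0 hq C (m + 1) ha hb hi hj
  rw [show m + 1 - 1 = m by ring] at r2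
  rcases lt_or_ge m 0 with h | h
  · rw [SZ_k_neg q e a b C (i - 1) j h] at r2 ⊢
    rw [SZ_k_neg q e (a + 1) b C i j h]
    rcases lt_or_ge (m + 1) 0 with h' | h'
    · rw [SZ_k_neg q e a (b + 1) C i j h', SZ_k_neg q e a b C i (j - 1) h']; ring
    · obtain rfl : m = -1 := by omega
      norm_num at r2 ⊢
      linear_combination (norm := (field_simp; ring)) -q⁻¹ * chi q 0 * r2
  · have hc := chi_rec hq (m := m + 1) (by omega)
    rw [add_sub_cancel_right] at hc
    rw [hc]
    rw [zpow_add_one₀ hq0] at r2 ⊢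
    linear_combination (norm := (field_simp; ring)) chi q (m + 1) * (1 - q ^ m * q) * r1 h -
      q⁻¹ * chi q (m + 1) * r2

/-- The rightmost site intertwines `f_n`. -/
lemma right_f (hq0 : q ≠ 0) (hq : ∀ k : ℕ, k ≠ 0 → q ^ k ≠ 1) {e : Bool}
    {a b i j : ℤ} (C m : ℤ) (ha : okz e a) (hb : okz e b) (hi : okz e i) (hj : okz e j) :
    chi q (m - 1) * SZ q e a (b - 1) C i j (m - 1) +
      ps q e ^ b * (chi q m * SZ q e (a - 1) b C i j m) =
    chi q m * SZ q e a b C (i + 1) j m +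
      ps q e ^ i * (chi q (m - 1) * SZ q e a b C i (j + 1) (m - 1)) := by
  obtain ⟨-, -, -, -, r5, -, -, -⟩ := SZ_rels hq0 hq C (m - 1) ha hb hi hj
  obtain ⟨-, -, -, -, -, r6, -, -⟩ := SZ_rels hq0 hq C m ha hb hi hj
  have hm : q ^ (m - 1) * q = q ^ m := by
    rw [← zpow_add_one₀ hq0, sub_add_cancel]
  rw [sub_add_cancel, hm] at r5
  rcases lt_or_ge (m - 1) 0 with h | h
  · rw [SZ_k_neg q e a b C i (j + 1) h] at r6 ⊢
    rw [SZ_k_neg q e a (b - 1) C i j h]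
    rcases lt_or_ge m 0 with h' | h'
    · rw [SZ_k_neg q e (a - 1) b C i j h', SZ_k_neg q e a b C (i + 1) j h']; ring
    · obtain rfl : m = 0 := by omega
      rw [zpow_zero] at r6
      linear_combination chi q 0 * r6
  · rw [chi_rec hq h]
    linear_combination chi q m * (1 - q ^ m) * r5 h + chi q m * r6

end loc

/-! ### Matrix elements of the whole chain -/

section glob

variable {q : ℂ} {n : ℕ} {ε : Fin n → Bool}

/-- The third index after `t` sites, when it starts at `N` and increases by `d s` across
site `s`. -/
def pth (d : Fin n → ℤ) (N : ℤ) (t : ℕ) : ℤ := N + ∑ s : Fin n, if (s : ℕ) < t then d s else 0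

lemma pth_zero (d : Fin n → ℤ) (N : ℤ) : pth d N 0 = N := by simp [pth]

lemma pth_succ (d : Fin n → ℤ) (N : ℤ) (t : Fin n) :
    pth d N ((t : ℕ) + 1) = pth d N t + d t := by
  have h : ∀ s : Fin n, (if (s : ℕ) < (t : ℕ) + 1 then d s else 0) =
      (if (s : ℕ) < t then d s else 0) + (if s = t then d s else 0) := by
    intro s
    by_cases h1 : (s : ℕ) < t
    · have h2 : s ≠ t := by rintro rfl; omega
      rw [if_pos h1, if_pos (by omega), if_neg h2, add_zero]
    · by_cases h2 : s = t
      · subst h2; simp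
      · have h3 : (s : ℕ) ≠ t := fun h => h2 (Fin.ext h)
        rw [if_neg h1, if_neg (by omega), if_neg h2, add_zero]
  unfold pth
  rw [Finset.sum_congr rfl fun s _ => h s, Finset.sum_add_distrib]
  simp [add_assoc]

lemma pth_add (d d' : Fin n → ℤ) (N M : ℤ) (t : ℕ) :
    pth (d + d') (N + M) t = pth d N t + pth d' M t := by
  unfold pth
  rw [add_add_add_comm, ← Finset.sum_add_distrib]
  congr 1
  refine Finset.sum_congr rfl fun s _ => ?_
  split_ifs <;> simp

lemma pth_single (u : Fin n) (y M : ℤ) (t : ℕ) :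
    pth (fun s => if s = u then y else 0) M t = M + if (u : ℕ) < t then y else 0 := by
  unfold pth
  have h : ∀ s : Fin n, (if (s : ℕ) < t then (if s = u then y else 0) else 0) =
      if s = u then (if (u : ℕ) < t then y else 0) else 0 := by
    intro s
    by_cases h : s = u
    · subst h; simp
    · simp [h]
  rw [Finset.sum_congr rfl fun s _ => h s]
  simp

/-- The coefficient of `z^N` in `S₀^{1,1}(z)^{a,b}_{i,j}`, for integer vectors and integer `N`.
The third index is determined along the chain by conservation, so no sum is left. -/
def bdZ (q : ℂ) (ε : Fin n → Bool) (a b i j : Fin n → ℤ) (N : ℤ) : ℂ :=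
  wB q N * chi q (pth (b - j) N n) *
    ∏ t : Fin n, SZ q (ε t) (a t) (b t) (pth (b - j) N t) (i t) (j t) (pth (b - j) N (t + 1))

/-- Two data agreeing at every site except `u` and its right neighbour `w`, with the same total
increment over these two sites, give matrix elements that differ only in two local factors. -/
lemma bdZ_split_mid {u w : Fin n} (huw : (u : ℕ) + 1 = w) (a b i j a2 b2 i2 j2 : Fin n → ℤ)
    (y N : ℤ)
    (h : ∀ t, t ≠ u → t ≠ w → a2 t = a t ∧ b2 t = b t ∧ i2 t = i t ∧ j2 t = j t)
    (hu : b2 u - j2 u = b u - j u + y) (hw : b2 w - j2 w = b w - j w - y) :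
    bdZ q ε a2 b2 i2 j2 N =
      (wB q N * chi q (pth (b - j) N n) *
        ∏ t ∈ (Finset.univ.erase u).erase w, SZ q (ε t) (a t) (b t) (pth (b - j) N t) (i t) (j t)
          (pth (b - j) N (t + 1))) *
      (SZ q (ε u) (a2 u) (b2 u) (pth (b - j) N u) (i2 u) (j2 u) (pth (b - j) N w + y) *
        SZ q (ε w) (a2 w) (b2 w) (pth (b - j) N w + y) (i2 w) (j2 w) (pth (b - j) N (w + 1))) := by
  have hne : w ≠ u := by rintro rfl; omega
  have hd : b2 - j2 = (b - j) + ((fun s => if s = u then y else 0) +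
      (fun s => if s = w then -y else 0)) := by
    funext t
    simp only [Pi.sub_apply, Pi.add_apply]
    by_cases h1 : t = u
    · subst h1
      rw [if_pos rfl, if_neg hne.symm, hu]; ring
    · by_cases h2 : t = w
      · subst h2
        rw [if_pos rfl, if_neg hne, hw]; ring
      · obtain ⟨-, e2, -, e4⟩ := h t h1 h2
        rw [if_neg h1, if_neg h2, e2, e4]; ring
  have hp : ∀ t : ℕ, pth (b2 - j2) N t = pth (b - j) N t + if t = w then y else 0 := by
    intro t
    have e1 := pth_add (b - j) ((fun s => if s = u then y else 0) +
      (fun s => if s = w then -y else 0)) N 0 t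
    have e2 := pth_add (fun s => if s = u then y else 0) (fun s => if s = w then -y else 0) 0 0 t
    rw [pth_single, pth_single] at e2
    simp only [add_zero] at e1 e2
    rw [hd, e1, e2]
    congr 1
    split_ifs <;> omega
  unfold bdZ
  have hwn : n ≠ w := fun h => absurd w.isLt (by omega)
  rw [hp n, if_neg hwn, add_zero, ← Finset.mul_prod_erase _ _ (Finset.mem_univ u),
    ← Finset.mul_prod_erase _ _ (Finset.mem_erase.2 ⟨hne, Finset.mem_univ w⟩)]
  have hrest : ∀ t ∈ (Finset.univ.erase u).erase w,
      SZ q (ε t) (a2 t) (b2 t) (pth (b2 - j2) N t) (i2 t) (j2 t) (pth (b2 - j2) N (t + 1)) =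
      SZ q (ε t) (a t) (b t) (pth (b - j) N t) (i t) (j t) (pth (b - j) N (t + 1)) := by
    intro t ht
    simp only [Finset.mem_erase, Finset.mem_univ, and_true] at ht
    obtain ⟨e1, e2, e3, e4⟩ := h t ht.2 ht.1
    have n1 : (t : ℕ) ≠ w := fun h => ht.1 (Fin.ext h)
    have n2 : (t : ℕ) + 1 ≠ w := fun h => ht.2 (Fin.ext (by omega))
    rw [e1, e2, e3, e4, hp, hp, if_neg n1, if_neg n2, add_zero, add_zero]
  rw [Finset.prod_congr rfl hrest, hp, hp, hp, hp, if_neg (by omega), if_pos huw, if_pos rfl,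
    if_neg (by omega), huw]
  ring

/-- The analogue of `bdZ_split_mid` for the leftmost site, where the starting index may move. -/
lemma bdZ_split_left {u : Fin n} (hu0 : (u : ℕ) = 0) (a b i j a2 b2 i2 j2 : Fin n → ℤ)
    (z k0 N M : ℤ) (h : ∀ t, t ≠ u → a2 t = a t ∧ b2 t = b t ∧ i2 t = i t ∧ j2 t = j t)
    (hu : b2 u - j2 u = b u - j u + (k0 - z)) (hM : M = N + z) :
    bdZ q ε a2 b2 i2 j2 M =
      (chi q (pth (b - j) N n + k0) *
        ∏ t ∈ Finset.univ.erase u, SZ q (ε t) (a t) (b t) (pth (b - j) N t + k0) (i t) (j t)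
          (pth (b - j) N (t + 1) + k0)) *
      (wB q M * SZ q (ε u) (a2 u) (b2 u) M (i2 u) (j2 u) (pth (b - j) N (u + 1) + k0)) := by
  subst hM
  have hd : b2 - j2 = (b - j) + (fun s => if s = u then k0 - z else 0) := by
    funext t
    simp only [Pi.sub_apply, Pi.add_apply]
    by_cases h1 : t = u
    · subst h1
      rw [if_pos rfl, hu]
    · obtain ⟨-, e2, -, e4⟩ := h t h1
      rw [if_neg h1, e2, e4]; ring
  have hp : ∀ t : ℕ, 0 < t → pth (b2 - j2) (N + z) t = pth (b - j) N t + k0 := by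
    intro t ht
    rw [hd, pth_add, pth_single, if_pos (by omega)]
    ring
  have hp0 : pth (b2 - j2) (N + z) u = N + z := by rw [hu0, pth_zero]
  have hn : 0 < n := by have := u.isLt; omega
  unfold bdZ
  rw [hp n hn, ← Finset.mul_prod_erase _ _ (Finset.mem_univ u), hp0, hp _ (Nat.succ_pos _)]
  have hrest : ∀ t ∈ Finset.univ.erase u,
      SZ q (ε t) (a2 t) (b2 t) (pth (b2 - j2) (N + z) t) (i2 t) (j2 t)
        (pth (b2 - j2) (N + z) (t + 1)) =
      SZ q (ε t) (a t) (b t) (pth (b - j) N t + k0) (i t) (j t) (pth (b - j) N (t + 1) + k0) := by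
    intro t ht
    simp only [Finset.mem_erase, Finset.mem_univ, and_true] at ht
    obtain ⟨e1, e2, e3, e4⟩ := h t ht
    have n1 : (t : ℕ) ≠ u := fun h => ht (Fin.ext h)
    rw [e1, e2, e3, e4, hp _ (by omega), hp _ (by omega)]
  rw [Finset.prod_congr rfl hrest]
  ring

/-- The analogue of `bdZ_split_mid` for the rightmost site, where the final index may move. -/
lemma bdZ_split_right {u : Fin n} (hun : (u : ℕ) + 1 = n) (a b i j a2 b2 i2 j2 : Fin n → ℤ)
    (y N : ℤ) (h : ∀ t, t ≠ u → a2 t = a t ∧ b2 t = b t ∧ i2 t = i t ∧ j2 t = j t)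
    (hu : b2 u - j2 u = b u - j u + y) :
    bdZ q ε a2 b2 i2 j2 N =
      (wB q N *
        ∏ t ∈ Finset.univ.erase u, SZ q (ε t) (a t) (b t) (pth (b - j) N t) (i t) (j t)
          (pth (b - j) N (t + 1))) *
      (chi q (pth (b - j) N n + y) *
        SZ q (ε u) (a2 u) (b2 u) (pth (b - j) N u) (i2 u) (j2 u) (pth (b - j) N n + y)) := by
  have hd : b2 - j2 = (b - j) + (fun s => if s = u then y else 0) := by
    funext t
    simp only [Pi.sub_apply, Pi.add_apply]
    by_cases h1 : t = u
    · subst h1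
      rw [if_pos rfl, hu]
    · obtain ⟨-, e2, -, e4⟩ := h t h1
      rw [if_neg h1, e2, e4]; ring
  have hp : ∀ t : ℕ, pth (b2 - j2) N t = pth (b - j) N t + if (u : ℕ) < t then y else 0 := by
    intro t
    have e1 := pth_add (b - j) (fun s => if s = u then y else 0) N 0 t
    rw [pth_single] at e1
    simp only [add_zero, zero_add] at e1
    rw [hd, e1]
  unfold bdZ
  rw [hp n, if_pos u.isLt, ← Finset.mul_prod_erase _ _ (Finset.mem_univ u), hp u,
    if_neg (lt_irrefl _), add_zero, hun, hp n, if_pos u.isLt]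
  have hrest : ∀ t ∈ Finset.univ.erase u,
      SZ q (ε t) (a2 t) (b2 t) (pth (b2 - j2) N t) (i2 t) (j2 t) (pth (b2 - j2) N (t + 1)) =
      SZ q (ε t) (a t) (b t) (pth (b - j) N t) (i t) (j t) (pth (b - j) N (t + 1)) := by
    intro t ht
    simp only [Finset.mem_erase, Finset.mem_univ, and_true] at ht
    obtain ⟨e1, e2, e3, e4⟩ := h t ht
    have n1 : (t : ℕ) ≠ u := fun h => ht (Fin.ext h)
    have := t.isLt
    rw [e1, e2, e3, e4, hp, hp, if_neg (by omega), if_neg (by omega), add_zero, add_zero]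
  rw [Finset.prod_congr rfl hrest]
  ring

section identities

variable {a b i j s : Fin n → ℤ}

lemma bdZ_mid_e (hq0 : q ≠ 0) (hq : ∀ k : ℕ, k ≠ 0 → q ^ k ≠ 1) {u w : Fin n}
    (huw : (u : ℕ) + 1 = w)
    (ha : ∀ t, okz (ε t) (a t)) (hb : ∀ t, okz (ε t) (b t)) (hi : ∀ t, okz (ε t) (i t))
    (hj : ∀ t, okz (ε t) (j t)) (hs : ∀ t, t ≠ u → t ≠ w → s t = 0) (hsu : s u = -1)
    (hsw : s w = 1) (N : ℤ) :
    qn q (a u + 1) * bdZ q ε (a - s) b i j N +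
      (ps q (ε u) ^ a u)⁻¹ * ps q (ε w) ^ a w * qn q (b u + 1) * bdZ q ε a (b - s) i j N =
    qn q (j u) * bdZ q ε a b i (j + s) N +
      qn q (i u) * ((ps q (ε u) ^ j u)⁻¹ * ps q (ε w) ^ j w) * bdZ q ε a b (i + s) j N := by
  have h1 : ∀ (x y x' y' : ℤ) t, t ≠ u → t ≠ w → (a + x • s) t = a t ∧ (b + y • s) t = b t ∧
      (i + x' • s) t = i t ∧ (j + y' • s) t = j t := by
    intro x y x' y' t h1 h2
    simp [hs t h1 h2]
  have A1 := bdZ_split_mid (q := q) (ε := ε) huw a b i j _ _ _ _ 0 N (h1 (-1) 0 0 0)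
    (by simp) (by simp)
  have A2 := bdZ_split_mid (q := q) (ε := ε) huw a b i j _ _ _ _ 1 N (h1 0 (-1) 0 0)
    (by simp [hsu]; ring) (by simp [hsw]; ring)
  have A3 := bdZ_split_mid (q := q) (ε := ε) huw a b i j _ _ _ _ 1 N (h1 0 0 0 1)
    (by simp [hsu]; ring) (by simp [hsw]; ring)
  have A4 := bdZ_split_mid (q := q) (ε := ε) huw a b i j _ _ _ _ 0 N (h1 0 0 1 0)
    (by simp) (by simp)
  simp only [neg_smul, one_smul, zero_smul, add_zero, Pi.add_apply, Pi.zero_apply, Pi.neg_apply, hsu, hsw,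
    sub_neg_eq_add, ← sub_eq_add_neg] at A1 A2 A3 A4
  rw [A1, A2, A3, A4]
  have key := mid_e hq0 hq (pth (b - j) N u) (pth (b - j) N w) (pth (b - j) N (w + 1))
    (ha u) (hb u) (hi u) (hj u) (ha w) (hb w) (hi w) (hj w)
  generalize wB q N * chi q (pth (b - j) N n) * _ = G
  linear_combination G * key

lemma bdZ_mid_f (hq0 : q ≠ 0) (hq : ∀ k : ℕ, k ≠ 0 → q ^ k ≠ 1) {u w : Fin n}
    (huw : (u : ℕ) + 1 = w)
    (ha : ∀ t, okz (ε t) (a t)) (hb : ∀ t, okz (ε t) (b t)) (hi : ∀ t, okz (ε t) (i t))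
    (hj : ∀ t, okz (ε t) (j t)) (hs : ∀ t, t ≠ u → t ≠ w → s t = 0) (hsu : s u = 1)
    (hsw : s w = -1) (N : ℤ) :
    qn q (b w + 1) * bdZ q ε a (b - s) i j N +
      qn q (a w + 1) * (ps q (ε u) ^ b u * (ps q (ε w) ^ b w)⁻¹) * bdZ q ε (a - s) b i j N =
    qn q (i w) * bdZ q ε a b (i + s) j N +
      ps q (ε u) ^ i u * (ps q (ε w) ^ i w)⁻¹ * qn q (j w) * bdZ q ε a b i (j + s) N := by
  have h1 : ∀ (x y x' y' : ℤ) t, t ≠ u → t ≠ w → (a + x • s) t = a t ∧ (b + y • s) t = b t ∧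
      (i + x' • s) t = i t ∧ (j + y' • s) t = j t := by
    intro x y x' y' t h1 h2
    simp [hs t h1 h2]
  have A1 := bdZ_split_mid (q := q) (ε := ε) huw a b i j _ _ _ _ 0 N (h1 (-1) 0 0 0)
    (by simp) (by simp)
  have A2 := bdZ_split_mid (q := q) (ε := ε) huw a b i j _ _ _ _ (-1) N (h1 0 (-1) 0 0)
    (by simp [hsu]; ring) (by simp [hsw]; ring)
  have A3 := bdZ_split_mid (q := q) (ε := ε) huw a b i j _ _ _ _ (-1) N (h1 0 0 0 1)
    (by simp [hsu]; ring) (by simp [hsw]; ring)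
  have A4 := bdZ_split_mid (q := q) (ε := ε) huw a b i j _ _ _ _ 0 N (h1 0 0 1 0)
    (by simp) (by simp)
  simp only [neg_smul, one_smul, zero_smul, add_zero, Pi.add_apply, Pi.zero_apply, Pi.neg_apply, hsu, hsw,
    sub_neg_eq_add, ← sub_eq_add_neg] at A1 A2 A3 A4
  rw [A1, A2, A3, A4]
  have key := mid_f hq0 hq (pth (b - j) N u) (pth (b - j) N w) (pth (b - j) N (w + 1))
    (ha u) (hb u) (hi u) (hj u) (ha w) (hb w) (hi w) (hj w)
  generalize wB q N * chi q (pth (b - j) N n) * _ = G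
  linear_combination G * key

lemma bdZ_left_e (hq0 : q ≠ 0) (hq : ∀ k : ℕ, k ≠ 0 → q ^ k ≠ 1) {u : Fin n} (hu0 : (u : ℕ) = 0)
    (ha : ∀ t, okz (ε t) (a t)) (hb : ∀ t, okz (ε t) (b t)) (hi : ∀ t, okz (ε t) (i t))
    (hj : ∀ t, okz (ε t) (j t)) (hs : ∀ t, t ≠ u → s t = 0) (hsu : s u = 1) (N : ℤ) :
    bdZ q ε (a - s) b i j (N - 1) - q * ps q (ε u) ^ a u * bdZ q ε a (b - s) i j N =
    bdZ q ε a b i (j + s) N - q * ps q (ε u) ^ j u * bdZ q ε a b (i + s) j (N - 1) := by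
  have h1 : ∀ (x y x' y' : ℤ) t, t ≠ u → (a + x • s) t = a t ∧ (b + y • s) t = b t ∧
      (i + x' • s) t = i t ∧ (j + y' • s) t = j t := by
    intro x y x' y' t h1
    simp [hs t h1]
  have A1 := bdZ_split_left (q := q) (ε := ε) hu0 a b i j _ _ _ _ (-1) (-1) N (N - 1)
    (h1 (-1) 0 0 0) (by simp) (by ring)
  have A2 := bdZ_split_left (q := q) (ε := ε) hu0 a b i j _ _ _ _ 0 (-1) N N
    (h1 0 (-1) 0 0) (by simp [hsu]; ring) (by ring)
  have A3 := bdZ_split_left (q := q) (ε := ε) hu0 a b i j _ _ _ _ 0 (-1) N N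
    (h1 0 0 0 1) (by simp [hsu]; ring) (by ring)
  have A4 := bdZ_split_left (q := q) (ε := ε) hu0 a b i j _ _ _ _ (-1) (-1) N (N - 1)
    (h1 0 0 1 0) (by simp) (by ring)
  simp only [neg_smul, one_smul, zero_smul, add_zero, Pi.add_apply, Pi.zero_apply, Pi.neg_apply, hsu,
    ← sub_eq_add_neg] at A1 A2 A3 A4
  rw [A1, A2, A3, A4]
  have key := left_e hq0 hq N (pth (b - j) N (u + 1) - 1) (ha u) (hb u) (hi u) (hj u)
  generalize chi q (pth (b - j) N n - 1) * _ = G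
  linear_combination G * key

lemma bdZ_left_f (hq0 : q ≠ 0) (hq : ∀ k : ℕ, k ≠ 0 → q ^ k ≠ 1) {u : Fin n} (hu0 : (u : ℕ) = 0)
    (ha : ∀ t, okz (ε t) (a t)) (hb : ∀ t, okz (ε t) (b t)) (hi : ∀ t, okz (ε t) (i t))
    (hj : ∀ t, okz (ε t) (j t)) (hs : ∀ t, t ≠ u → s t = 0) (hsu : s u = -1) (N : ℤ) :
    qn q (b u + 1) * bdZ q ε a (b - s) i j (N - 1) +
      qn q (a u + 1) * (ps q (ε u) ^ b u)⁻¹ * bdZ q ε (a - s) b i j N =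
    qn q (i u) * bdZ q ε a b (i + s) j N +
      (ps q (ε u) ^ i u)⁻¹ * qn q (j u) * bdZ q ε a b i (j + s) (N - 1) := by
  have h1 : ∀ (x y x' y' : ℤ) t, t ≠ u → (a + x • s) t = a t ∧ (b + y • s) t = b t ∧
      (i + x' • s) t = i t ∧ (j + y' • s) t = j t := by
    intro x y x' y' t h1
    simp [hs t h1]
  have A1 := bdZ_split_left (q := q) (ε := ε) hu0 a b i j _ _ _ _ 0 0 N N
    (h1 (-1) 0 0 0) (by simp) (by ring)
  have A2 := bdZ_split_left (q := q) (ε := ε) hu0 a b i j _ _ _ _ (-1) 0 N (N - 1)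
    (h1 0 (-1) 0 0) (by simp [hsu]; ring) (by ring)
  have A3 := bdZ_split_left (q := q) (ε := ε) hu0 a b i j _ _ _ _ (-1) 0 N (N - 1)
    (h1 0 0 0 1) (by simp [hsu]; ring) (by ring)
  have A4 := bdZ_split_left (q := q) (ε := ε) hu0 a b i j _ _ _ _ 0 0 N N
    (h1 0 0 1 0) (by simp) (by ring)
  simp only [neg_smul, one_smul, zero_smul, add_zero, Pi.add_apply, Pi.zero_apply, Pi.neg_apply, hsu,
    sub_neg_eq_add, ← sub_eq_add_neg] at A1 A2 A3 A4
  rw [A1, A2, A3, A4]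
  have key := left_f hq0 hq N (pth (b - j) N (u + 1)) (ha u) (hb u) (hi u) (hj u)
  generalize chi q (pth (b - j) N n) * _ = G
  linear_combination G * key

lemma bdZ_right_e (hq0 : q ≠ 0) (hq : ∀ k : ℕ, k ≠ 0 → q ^ k ≠ 1) {u : Fin n}
    (hun : (u : ℕ) + 1 = n)
    (ha : ∀ t, okz (ε t) (a t)) (hb : ∀ t, okz (ε t) (b t)) (hi : ∀ t, okz (ε t) (i t))
    (hj : ∀ t, okz (ε t) (j t)) (hs : ∀ t, t ≠ u → s t = 0) (hsu : s u = -1) (N : ℤ) :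
    qn q (a u + 1) * bdZ q ε (a - s) b i j N -
      q⁻¹ * (ps q (ε u) ^ a u)⁻¹ * qn q (b u + 1) * bdZ q ε a (b - s) i j N =
    qn q (j u) * bdZ q ε a b i (j + s) N -
      q⁻¹ * qn q (i u) * (ps q (ε u) ^ j u)⁻¹ * bdZ q ε a b (i + s) j N := by
  have h1 : ∀ (x y x' y' : ℤ) t, t ≠ u → (a + x • s) t = a t ∧ (b + y • s) t = b t ∧
      (i + x' • s) t = i t ∧ (j + y' • s) t = j t := by
    intro x y x' y' t h1
    simp [hs t h1]
  have A1 := bdZ_split_right (q := q) (ε := ε) hun a b i j _ _ _ _ 0 N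
    (h1 (-1) 0 0 0) (by simp)
  have A2 := bdZ_split_right (q := q) (ε := ε) hun a b i j _ _ _ _ 1 N
    (h1 0 (-1) 0 0) (by simp [hsu]; ring)
  have A3 := bdZ_split_right (q := q) (ε := ε) hun a b i j _ _ _ _ 1 N
    (h1 0 0 0 1) (by simp [hsu]; ring)
  have A4 := bdZ_split_right (q := q) (ε := ε) hun a b i j _ _ _ _ 0 N
    (h1 0 0 1 0) (by simp)
  simp only [neg_smul, one_smul, zero_smul, add_zero, Pi.add_apply, Pi.zero_apply, Pi.neg_apply, hsu,
    sub_neg_eq_add, ← sub_eq_add_neg] at A1 A2 A3 A4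
  rw [A1, A2, A3, A4]
  have key := right_e hq0 hq (pth (b - j) N u) (pth (b - j) N n) (ha u) (hb u) (hi u) (hj u)
  generalize wB q N * _ = G
  linear_combination G * key

lemma bdZ_right_f (hq0 : q ≠ 0) (hq : ∀ k : ℕ, k ≠ 0 → q ^ k ≠ 1) {u : Fin n}
    (hun : (u : ℕ) + 1 = n)
    (ha : ∀ t, okz (ε t) (a t)) (hb : ∀ t, okz (ε t) (b t)) (hi : ∀ t, okz (ε t) (i t))
    (hj : ∀ t, okz (ε t) (j t)) (hs : ∀ t, t ≠ u → s t = 0) (hsu : s u = 1) (N : ℤ) :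
    bdZ q ε a (b - s) i j N + ps q (ε u) ^ b u * bdZ q ε (a - s) b i j N =
    bdZ q ε a b (i + s) j N + ps q (ε u) ^ i u * bdZ q ε a b i (j + s) N := by
  have h1 : ∀ (x y x' y' : ℤ) t, t ≠ u → (a + x • s) t = a t ∧ (b + y • s) t = b t ∧
      (i + x' • s) t = i t ∧ (j + y' • s) t = j t := by
    intro x y x' y' t h1
    simp [hs t h1]
  have A1 := bdZ_split_right (q := q) (ε := ε) hun a b i j _ _ _ _ 0 N
    (h1 (-1) 0 0 0) (by simp)
  have A2 := bdZ_split_right (q := q) (ε := ε) hun a b i j _ _ _ _ (-1) N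
    (h1 0 (-1) 0 0) (by simp [hsu]; ring)
  have A3 := bdZ_split_right (q := q) (ε := ε) hun a b i j _ _ _ _ (-1) N
    (h1 0 0 0 1) (by simp [hsu]; ring)
  have A4 := bdZ_split_right (q := q) (ε := ε) hun a b i j _ _ _ _ 0 N
    (h1 0 0 1 0) (by simp)
  simp only [neg_smul, one_smul, zero_smul, add_zero, Pi.add_apply, Pi.zero_apply, Pi.neg_apply, hsu,
    ← sub_eq_add_neg] at A1 A2 A3 A4
  rw [A1, A2, A3, A4]
  have key := right_f hq0 hq (pth (b - j) N u) (pth (b - j) N n) (ha u) (hb u) (hi u) (hj u)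
  generalize wB q N * _ = G
  linear_combination G * key

end identities

end glob

/-! ### Support and identification of the boundary solution -/

section support

variable {q : ℂ} {n : ℕ} {ε : Fin n → Bool}

lemma Sg_supp {e : Bool} {a b c i j k : ℕ} (h : Sg q e a b c i j k ≠ 0) :
    a + b = i + j ∧ b + c = j + k := by
  cases e
  · by_contra h1
    exact h (by simp [Sg, R3, h1])
  · by_contra h1
    apply h
    simp only [Sg, L3, if_true]
    split_ifs <;> first | rfl | omega

lemma Sg_true_le {a b c i j k : ℕ} (h : Sg q true a b c i j k ≠ 0) :
    a ≤ 1 ∧ b ≤ 1 ∧ i ≤ 1 ∧ j ≤ 1 := by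
  by_contra h1
  apply h
  simp only [Sg, L3, if_true]
  split_ifs <;> first | rfl | omega

lemma SZ_supp {e : Bool} {a b c i j k : ℤ} (h : SZ q e a b c i j k ≠ 0) :
    okz e a ∧ okz e b ∧ okz e i ∧ okz e j ∧ a + b = i + j ∧ b + c = j + k ∧ 0 ≤ c ∧ 0 ≤ k := by
  unfold SZ at h
  split_ifs at h with h0
  · have h1 := Sg_supp h
    have h2 : e = true → a ≤ 1 ∧ b ≤ 1 ∧ i ≤ 1 ∧ j ≤ 1 := by
      rintro rfl
      have := Sg_true_le h
      omega
    unfold okz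
    refine ⟨⟨by omega, fun h => (h2 h).1⟩, ⟨by omega, fun h => (h2 h).2.1⟩,
      ⟨by omega, fun h => (h2 h).2.2.1⟩, ⟨by omega, fun h => (h2 h).2.2.2⟩, ?_⟩
    omega
  · exact absurd rfl h

/-- An integer vector labelling a basis vector of `𝒲`. -/
def InR (ε : Fin n → Bool) (a : Fin n → ℤ) : Prop := ∀ t, okz (ε t) (a t)

lemma bdZ_supp {a b i j : Fin n → ℤ} {N : ℤ} (h : bdZ q ε a b i j N ≠ 0) :
    InR ε a ∧ InR ε b ∧ InR ε i ∧ InR ε j ∧ a + b = i + j := by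
  have h1 : ∀ t, SZ q (ε t) (a t) (b t) (pth (b - j) N t) (i t) (j t) (pth (b - j) N (t + 1)) ≠ 0 :=
    fun t => Finset.prod_ne_zero_iff.1 (right_ne_zero_of_mul h) t (Finset.mem_univ t)
  exact ⟨fun t => (SZ_supp (h1 t)).1, fun t => (SZ_supp (h1 t)).2.1,
    fun t => (SZ_supp (h1 t)).2.2.1, fun t => (SZ_supp (h1 t)).2.2.2.1,
    funext fun t => (SZ_supp (h1 t)).2.2.2.2.1⟩

lemma bdZ_neg [NeZero n] (a b i j : Fin n → ℤ) {N : ℤ} (hN : N < 0) : bdZ q ε a b i j N = 0 := by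
  unfold bdZ
  rw [Finset.prod_eq_zero (Finset.mem_univ (0 : Fin n)), mul_zero]
  apply SZ_c_neg
  rw [show ((0 : Fin n) : ℕ) = 0 from rfl, pth_zero]
  exact hN

/-- A chain with nonzero weight follows the path prescribed by conservation. -/
lemma chain_eq_pth {a b i j : Fin n → ℕ} {c : Fin (n + 1) → ℕ}
    (h : ∀ t : Fin n, Sg q (ε t) (a t) (b t) (c t.castSucc) (i t) (j t) (c t.succ) ≠ 0)
    (t : Fin (n + 1)) :
    (c t : ℤ) = pth ((fun t => (b t : ℤ)) - fun t => (j t : ℤ)) (c 0) t := by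
  induction t using Fin.induction with
  | zero => rw [Fin.val_zero, pth_zero]
  | succ t ih =>
    have h1 := (Sg_supp (h t)).2
    rw [Fin.val_succ, pth_succ]
    rw [Fin.val_castSucc] at ih
    rw [← ih, Pi.sub_apply]
    omega

/-- The sum over the intermediate indices in the matrix element of `S₀^{1,1}(z)` has at most
one nonzero term. -/
lemma bdCoef_eq [NeZero n] (a b i j : Fin n → ℕ) (c0 : ℕ) :
    bdCoef q ε a b i j c0 =
      bdZ q ε (fun t => (a t : ℤ)) (fun t => (b t : ℤ)) (fun t => (i t : ℤ)) (fun t => (j t : ℤ))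
        c0 := by
  set d : Fin n → ℤ := (fun t => (b t : ℤ)) - fun t => (j t : ℤ) with hd
  set cs : Fin (n + 1) → ℕ := fun t => (pth d c0 t).toNat with hcs
  have hcs0 : cs 0 = c0 := by simp [hcs, pth_zero]
  unfold bdCoef
  rw [finsum_eq_single _ cs]
  · rw [if_pos hcs0]
    unfold bdZ
    rw [← hd]
    have hlast : cs (Fin.last n) = (pth d c0 n).toNat := by simp [hcs]
    rw [hlast]
    unfold wB chi
    rw [Int.toNat_natCast]
    have hprod : ∏ t : Fin n, Sg q (ε t) (a t) (b t) (cs t.castSucc) (i t) (j t) (cs t.succ) =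
        ∏ t : Fin n, SZ q (ε t) (a t) (b t) (pth d c0 t) (i t) (j t) (pth d c0 (t + 1)) := by
      have key : (∀ t : Fin (n + 1), 0 ≤ pth d c0 t) →
          ∏ t : Fin n, Sg q (ε t) (a t) (b t) (cs t.castSucc) (i t) (j t) (cs t.succ) =
          ∏ t : Fin n, SZ q (ε t) (a t) (b t) (pth d c0 t) (i t) (j t) (pth d c0 (t + 1)) := by
        intro hp
        refine Finset.prod_congr rfl fun t _ => ?_
        have e1 := hp t.castSucc
        have e2 := hp t.succ
        rw [Fin.val_castSucc] at e1
        rw [Fin.val_succ] at e2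
        unfold SZ
        rw [if_pos ⟨by omega, by omega, e1, by omega, by omega, e2⟩]
        simp only [Int.toNat_natCast, hcs, Fin.val_castSucc, Fin.val_succ]
      by_cases h1 : ∏ t : Fin n,
          Sg q (ε t) (a t) (b t) (cs t.castSucc) (i t) (j t) (cs t.succ) = 0
      · by_contra h2
        rw [h1] at h2
        refine h2 (h1.symm.trans (key fun t => ?_))
        have h3 : ∀ t : Fin n, _ ≠ _ := fun t =>
          Finset.prod_ne_zero_iff.1 (Ne.symm h2) t (Finset.mem_univ t)
        induction t using Fin.cases with
        | zero => rw [Fin.val_zero, pth_zero]; omega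
        | succ t => rw [Fin.val_succ]; exact (SZ_supp (h3 t)).2.2.2.2.2.2.2
      · refine key fun t => ?_
        have := chain_eq_pth (fun t => Finset.prod_ne_zero_iff.1 h1 t (Finset.mem_univ t)) t
        rw [hcs0, ← hd] at this
        rw [← this]
        omega
    rw [hprod, div_eq_mul_inv, div_eq_mul_inv, mul_inv]
    simp only [mul_assoc]
  · intro c hc
    split_ifs with h0
    · by_contra h1
      apply hc
      funext t
      have := chain_eq_pth (fun t =>
        Finset.prod_ne_zero_iff.1 (right_ne_zero_of_mul h1) t (Finset.mem_univ t)) t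
      rw [h0, ← hd] at this
      simp only [hcs]
      omega
    · rfl

end support

/-! ### Weighted shifts and matrix elements on `𝒲⊗𝒲` -/

section operators

variable {L : Type} [Field L] {n : ℕ} {ε : Fin n → Bool}

/-- A basis label of `𝒲` as an integer vector. -/
def toZ (m : Idx ε) : Fin n → ℤ := fun t => (m.1 t : ℤ)

lemma toZ_inR (m : Idx ε) : InR ε (toZ m) := fun t =>
  ⟨Int.natCast_nonneg _, fun h => by have := m.2 t h; simp only [toZ]; omega⟩

lemma toZ_inj {m m' : Idx ε} (h : toZ m = toZ m') : m = m' :=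
  Subtype.ext (funext fun t => Int.ofNat_inj.1 (congrFun h t))

lemma inR_exists {a : Fin n → ℤ} (h : InR ε a) : ∃ m : Idx ε, toZ m = a :=
  ⟨⟨fun t => (a t).toNat, fun t ht => Int.toNat_le.2 ((h t).2 ht)⟩,
    funext fun t => Int.toNat_of_nonneg (h t).1⟩

lemma inR_iff (a : Fin n → ℤ) :
    InR ε a ↔ (∀ t, 0 ≤ a t) ∧ Ok ε (fun t => (a t).toNat) := by
  constructor
  · intro h
    exact ⟨fun t => (h t).1, fun t ht => Int.toNat_le.2 ((h t).2 ht)⟩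
  · rintro ⟨h1, h2⟩ t
    exact ⟨h1 t, fun ht => Int.toNat_le.1 (h2 t ht)⟩

lemma ket_toZ (m : Idx ε) : ket L ε (toZ m) = Finsupp.single m 1 := by
  unfold ket
  rw [dif_pos ((inR_iff _).1 (toZ_inR m))]
  congr 1

lemma ket_out {a : Fin n → ℤ} (h : ¬ InR ε a) : ket L ε a = 0 :=
  dif_neg fun h' => h ((inR_iff _).2 h')

lemma kk_toZ (m m' : Idx ε) : kk L ε (toZ m) (toZ m') = Finsupp.single (m, m') 1 := by
  unfold kk
  rw [dif_pos ⟨(inR_iff _).1 (toZ_inR m), (inR_iff _).1 (toZ_inR m')⟩]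
  congr 1

lemma kk_out {a b : Fin n → ℤ} (h : ¬ (InR ε a ∧ InR ε b)) : kk L ε a b = 0 :=
  dif_neg fun h' => h ⟨(inR_iff _).2 h'.1, (inR_iff _).2 h'.2⟩

lemma kk_apply (a b : Fin n → ℤ) (x y : Idx ε) :
    kk L ε a b (x, y) = if a = toZ x ∧ b = toZ y then 1 else 0 := by
  classical
  by_cases h : InR ε a ∧ InR ε b
  · obtain ⟨m, rfl⟩ := inR_exists h.1
    obtain ⟨m', rfl⟩ := inR_exists h.2
    rw [kk_toZ, Finsupp.single_apply]
    refine if_congr ?_ rfl rfl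
    rw [Prod.mk.injEq]
    exact ⟨fun h => ⟨by rw [h.1], by rw [h.2]⟩, fun h => ⟨toZ_inj h.1, toZ_inj h.2⟩⟩
  · rw [kk_out h, if_neg]
    · rfl
    · rintro ⟨rfl, rfl⟩
      exact h ⟨toZ_inR x, toZ_inR y⟩

lemma tens_ket (α β : L) (a b : Fin n → ℤ) :
    tens L (α • ket L ε a) (β • ket L ε b) = (α * β) • kk L ε a b := by
  by_cases ha : InR ε a
  · by_cases hb : InR ε b
    · obtain ⟨m, rfl⟩ := inR_exists ha
      obtain ⟨m', rfl⟩ := inR_exists hb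
      rw [ket_toZ, ket_toZ, kk_toZ]
      unfold tens
      rw [Finsupp.smul_single, Finsupp.smul_single, Finsupp.smul_single,
        Finsupp.sum_single_index, Finsupp.sum_single_index]
      · simp
      · simp
      · simp
    · rw [ket_out hb, kk_out fun h => hb h.2]
      simp [tens]
  · rw [ket_out ha, kk_out fun h => ha h.1]
    simp [tens]

lemma mkEnd_single {α : Type} (v : α → (α →₀ L)) (m : α) :
    mkEnd L v (Finsupp.single m 1) = v m := by
  simp [mkEnd]

/-- `A` is a weighted shift of the basis: `A|m⟩ = f(m) |m + s⟩`. -/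
def IsMono (A : W L ε →ₗ[L] W L ε) (f : (Fin n → ℤ) → L) (s : Fin n → ℤ) : Prop :=
  ∀ m : Idx ε, A (Finsupp.single m 1) = f (toZ m) • ket L ε (toZ m + s)

lemma isMono_id : IsMono (LinearMap.id : W L ε →ₗ[L] W L ε) (fun _ => 1) 0 := by
  intro m
  rw [add_zero, ket_toZ, one_smul, LinearMap.id_apply]

lemma opT_single {A B : W L ε →ₗ[L] W L ε} {f g : (Fin n → ℤ) → L} {s s' : Fin n → ℤ}
    (hA : IsMono A f s) (hB : IsMono B g s') (i j : Idx ε) :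
    opT L A B (Finsupp.single (i, j) 1) =
      (f (toZ i) * g (toZ j)) • kk L ε (toZ i + s) (toZ j + s') := by
  unfold opT
  rw [mkEnd_single, hA, hB, tens_ket]

/-- The coordinates of a vector of `𝒲⊗𝒲`, extended by zero to all integer vectors. -/
def evz (v : WW L ε) (a b : Fin n → ℤ) : L :=
  v.sum fun p c => if toZ p.1 = a ∧ toZ p.2 = b then c else 0

lemma evz_single (p : Idx ε × Idx ε) (c : L) (a b : Fin n → ℤ) :
    evz (Finsupp.single p c) a b = if toZ p.1 = a ∧ toZ p.2 = b then c else 0 := by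
  unfold evz
  rw [Finsupp.sum_single_index]
  simp

lemma evz_add (v w : WW L ε) (a b : Fin n → ℤ) : evz (v + w) a b = evz v a b + evz w a b := by
  unfold evz
  rw [Finsupp.sum_add_index']
  · simp
  · intro p c d
    split_ifs <;> simp

lemma evz_toZ (v : WW L ε) (x y : Idx ε) : evz v (toZ x) (toZ y) = v (x, y) := by
  classical
  induction v using Finsupp.induction_linear with
  | zero => simp [evz]
  | add v w hv hw => rw [evz_add, hv, hw, Finsupp.add_apply]
  | single p c =>
    rw [evz_single, Finsupp.single_apply]
    refine if_congr ?_ rfl rfl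
    exact ⟨fun h => Prod.ext (toZ_inj h.1) (toZ_inj h.2), fun h => by rw [h]; exact ⟨rfl, rfl⟩⟩

lemma evz_out (v : WW L ε) {a b : Fin n → ℤ} (h : ¬ (InR ε a ∧ InR ε b)) : evz v a b = 0 := by
  unfold evz
  refine Finset.sum_eq_zero fun p _ => if_neg ?_
  rintro ⟨rfl, rfl⟩
  exact h ⟨toZ_inR _, toZ_inR _⟩

/-- The matrix coefficients of `(A⊗B)v` for weighted shifts `A` and `B`. -/
lemma opT_apply {A B : W L ε →ₗ[L] W L ε} {f g : (Fin n → ℤ) → L} {s s' : Fin n → ℤ}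
    (hA : IsMono A f s) (hB : IsMono B g s') (v : WW L ε) (x y : Idx ε) :
    opT L A B v (x, y) =
      f (toZ x - s) * g (toZ y - s') * evz v (toZ x - s) (toZ y - s') := by
  induction v using Finsupp.induction_linear with
  | zero => simp [evz]
  | add v w hv hw => rw [map_add, Finsupp.add_apply, hv, hw, evz_add, mul_add]
  | single p c =>
    obtain ⟨i, j⟩ := p
    have e : (Finsupp.single (i, j) c : WW L ε) = c • Finsupp.single (i, j) 1 := by
      rw [Finsupp.smul_single, smul_eq_mul, mul_one]
    rw [evz_single, e, map_smul, opT_single hA hB, Finsupp.smul_apply, Finsupp.smul_apply,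
      kk_apply]
    simp only [smul_eq_mul, ← eq_sub_iff_add_eq]
    split_ifs with h
    · rw [h.1, h.2]; ring
    · ring

/-- A linear map sends a ket pair with an out-of-range label to zero, so matrix elements that
vanish out of range determine it on all ket pairs. -/
lemma map_kk_apply {T : WW L ε →ₗ[L] WW L ε} {M : (Fin n → ℤ) → (Fin n → ℤ) → L}
    {x y : Idx ε} (h : ∀ i j : Idx ε, T (Finsupp.single (i, j) 1) (x, y) = M (toZ i) (toZ j))
    (h0 : ∀ i j, ¬ (InR ε i ∧ InR ε j) → M i j = 0) (i j : Fin n → ℤ) :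
    T (kk L ε i j) (x, y) = M i j := by
  by_cases hij : InR ε i ∧ InR ε j
  · obtain ⟨m, rfl⟩ := inR_exists hij.1
    obtain ⟨m', rfl⟩ := inR_exists hij.2
    rw [kk_toZ, h]
  · rw [kk_out hij, map_zero, h0 _ _ hij]
    rfl

lemma end_ext {S T : WW L ε →ₗ[L] WW L ε}
    (h : ∀ i j x y : Idx ε, S (Finsupp.single (i, j) 1) (x, y) =
      T (Finsupp.single (i, j) 1) (x, y)) : S = T := by
  refine Finsupp.lhom_ext' fun p => LinearMap.ext_ring ?_
  obtain ⟨i, j⟩ := p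
  ext ⟨x, y⟩
  exact h i j x y

end operators

section series

variable {q pc : ℂ} {n : ℕ} {ε : Fin n → Bool}

/-- The power series `Σ_{N≥0} F(N) z^N` of a function on the integers. -/
def mkZ (F : ℤ → ℂ) : K := mkS fun N => F N

lemma mkZ_smul (c : ℂ) (F : ℤ → ℂ) : cK c * mkZ F = mkZ fun N => c * F N := by
  unfold mkZ mkS cK
  rw [← HahnSeries.ofPowerSeries_C (Γ := ℤ), ← map_mul]
  congr 1
  ext m
  simp

lemma mkZ_add (F G : ℤ → ℂ) : mkZ F + mkZ G = mkZ fun N => F N + G N := by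
  unfold mkZ mkS
  rw [← map_add]
  congr 1

lemma mkZ_zero : mkZ (fun _ => 0) = 0 := by
  unfold mkZ mkS
  rw [show (PowerSeries.mk fun _ : ℕ => (0 : ℂ)) = 0 from rfl, map_zero]

lemma zK_eq : zK = HahnSeries.ofPowerSeries ℤ ℂ PowerSeries.X := by
  unfold zK mkS
  congr 1
  ext m
  rw [PowerSeries.coeff_mk, PowerSeries.coeff_X]

lemma zK_ne : zK ≠ 0 := by
  rw [zK_eq]
  intro h
  exact PowerSeries.X_ne_zero (HahnSeries.ofPowerSeries_injective (h.trans (map_zero _).symm))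

lemma zK_mul (F : ℤ → ℂ) (hF : F (-1) = 0) : zK * mkZ F = mkZ fun N => F (N - 1) := by
  rw [zK_eq]
  unfold mkZ mkS
  rw [← map_mul]
  congr 1
  ext m
  cases m with
  | zero => simp [hF]
  | succ m => simp [PowerSeries.coeff_succ_X_mul]

/-- The matrix elements of `S̃₀^{1,1}(z)`. -/
def Smat (q pc : ℂ) (ε : Fin n → Bool) (a b i j : Fin n → ℤ) : K :=
  cK (pc ^ (∑ t, j t - ∑ t, a t)) * mkZ (bdZ q ε a b i j)

lemma Smat_supp {a b i j : Fin n → ℤ}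
    (h : ¬ (InR ε a ∧ InR ε b ∧ InR ε i ∧ InR ε j ∧ a + b = i + j)) :
    Smat q pc ε a b i j = 0 := by
  have : bdZ q ε a b i j = fun _ => 0 := by
    funext N
    by_contra h1
    exact h (bdZ_supp h1)
  rw [Smat, this, mkZ_zero, mul_zero]

lemma isMono_Kdiag (s : ℤ) : IsMono (Kdiag pc ε s) (fun m => cK (pc ^ (s * ∑ t, m t))) 0 := by
  intro m
  rw [add_zero, ket_toZ]
  exact mkEnd_single _ _

lemma S0bd_apply [NeZero n] (i j x y : Idx ε) :
    S0bd q ε (Finsupp.single (i, j) 1) (x, y) = mkZ (bdZ q ε (toZ x) (toZ y) (toZ i) (toZ j)) := by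
  unfold S0bd
  rw [mkEnd_single, Finsupp.finsetSum_apply]
  simp only [Finsupp.smul_apply, kk_apply, smul_eq_mul, mul_ite, mul_one, mul_zero]
  by_cases h : toZ x + toZ y = toZ i + toZ j
  · have h' : ∀ t, x.1 t + y.1 t = i.1 t + j.1 t := fun t => by
      have := congrFun h t
      simp only [toZ, Pi.add_apply] at this
      omega
    rw [Finset.sum_eq_single x.1]
    · rw [if_pos]
      · unfold mkZ
        congr 1
        funext N
        rw [bdCoef_eq]
        have e : (fun t => ((i.1 t + j.1 t - x.1 t : ℕ) : ℤ)) = toZ y := by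
          funext t
          have := h' t
          simp only [toZ]
          omega
        rw [e]
        rfl
      · refine ⟨rfl, funext fun t => ?_⟩
        have := h' t
        simp only [toZ]
        omega
    · intro a _ ha
      rw [if_neg]
      rintro ⟨h1, -⟩
      exact ha (funext fun t => Int.ofNat_inj.1 (congrFun h1 t))
    · intro hx
      refine absurd (Fintype.mem_piFinset.2 fun t => ?_) hx
      have := h' t
      rw [Finset.mem_range]
      omega
  · have : bdZ q ε (toZ x) (toZ y) (toZ i) (toZ j) = fun _ => 0 := by
      funext N
      by_contra h1
      exact h (bdZ_supp h1).2.2.2.2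
    rw [this, mkZ_zero]
    refine Finset.sum_eq_zero fun a _ => if_neg ?_
    rintro ⟨h1, h2⟩
    apply h
    funext t
    have e1 := congrFun h1 t
    have e2 := congrFun h2 t
    simp only [toZ, Pi.add_apply] at e1 e2 ⊢
    omega

lemma S0bdT_apply [NeZero n] (hpc : pc ≠ 0) (i j x y : Idx ε) :
    S0bdT q pc ε (Finsupp.single (i, j) 1) (x, y) =
      Smat q pc ε (toZ x) (toZ y) (toZ i) (toZ j) := by
  unfold S0bdT
  rw [LinearMap.comp_apply, LinearMap.comp_apply, opT_single isMono_id (isMono_Kdiag 1),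
    opT_apply (isMono_Kdiag (-1)) isMono_id, sub_zero, sub_zero, evz_toZ, add_zero, add_zero,
    kk_toZ, map_smul, Finsupp.smul_apply, S0bd_apply, smul_eq_mul]
  unfold Smat
  rw [sub_eq_neg_add, zpow_add₀ hpc, map_mul, one_mul, mul_one, one_mul, neg_one_mul, mul_assoc]

lemma S0bdT_kk [NeZero n] (hpc : pc ≠ 0) (i j : Fin n → ℤ) (x y : Idx ε) :
    S0bdT q pc ε (kk K ε i j) (x, y) = Smat q pc ε (toZ x) (toZ y) i j :=
  map_kk_apply (M := fun i j => Smat q pc ε (toZ x) (toZ y) i j)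
    (fun i j => S0bdT_apply hpc i j x y)
    (fun _ _ h => Smat_supp fun h' => h ⟨h'.2.2.1, h'.2.2.2.1⟩) i j

lemma S0bdT_evz [NeZero n] (hpc : pc ≠ 0) (i j : Idx ε) (a b : Fin n → ℤ) :
    evz (S0bdT q pc ε (Finsupp.single (i, j) 1)) a b = Smat q pc ε a b (toZ i) (toZ j) := by
  by_cases h : InR ε a ∧ InR ε b
  · obtain ⟨x, rfl⟩ := inR_exists h.1
    obtain ⟨y, rfl⟩ := inR_exists h.2
    rw [evz_toZ, S0bdT_apply hpc]
  · rw [evz_out _ h, Smat_supp fun h' => h ⟨h'.1, h'.2.1⟩]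

/-- Matrix elements of `(A⊗B) S̃₀^{1,1}(z)` for weighted shifts `A` and `B`. -/
lemma opT_S [NeZero n] (hpc : pc ≠ 0) {A B : W K ε →ₗ[K] W K ε} {f g : (Fin n → ℤ) → K}
    {s s' : Fin n → ℤ} (hA : IsMono A f s) (hB : IsMono B g s') (i j x y : Idx ε) :
    opT K A B (S0bdT q pc ε (Finsupp.single (i, j) 1)) (x, y) =
      f (toZ x - s) * g (toZ y - s') *
        Smat q pc ε (toZ x - s) (toZ y - s') (toZ i) (toZ j) := by
  rw [opT_apply hA hB, S0bdT_evz hpc]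

/-- Matrix elements of `S̃₀^{1,1}(z) (A⊗B)` for weighted shifts `A` and `B`. -/
lemma S_opT [NeZero n] (hpc : pc ≠ 0) {A B : W K ε →ₗ[K] W K ε} {f g : (Fin n → ℤ) → K}
    {s s' : Fin n → ℤ} (hA : IsMono A f s) (hB : IsMono B g s') (i j x y : Idx ε) :
    S0bdT q pc ε (opT K A B (Finsupp.single (i, j) 1)) (x, y) =
      f (toZ i) * g (toZ j) * Smat q pc ε (toZ x) (toZ y) (toZ i + s) (toZ j + s') := by
  rw [opT_single hA hB, map_smul, Finsupp.smul_apply, S0bdT_kk hpc, smul_eq_mul]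

end series

/-! ### Commutation with the generators -/

section generators

variable {q pc : ℂ} {n : ℕ} {ε : Fin n → Bool}

lemma qnum_eq (q : ℂ) (m : ℕ) : qnum q m = qn q m := by
  simp [qnum, qn]

lemma av_val (m : Fin n → ℕ) (u : Fin n) : av m u = m u := by
  simp [av]

lemma qc_val (q : ℂ) (ε : Fin n → Bool) (u : Fin n) : qc q ε u = ps q (ε u) := by
  simp [qc, ps]

lemma dlt_self (u : Fin n) : (dlt (u : ℕ) : Fin n → ℤ) u = 1 := if_pos rfl

lemma dlt_ne {u t : Fin n} (h : t ≠ u) : (dlt (u : ℕ) : Fin n → ℤ) t = 0 :=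
  if_neg fun h' => h (Fin.ext h')

lemma sum_dlt (u : Fin n) : ∑ t, (dlt (u : ℕ) : Fin n → ℤ) t = 1 := by
  rw [Finset.sum_eq_single u (fun t _ h => dlt_ne h) (fun h => absurd (Finset.mem_univ _) h),
    dlt_self]

section monos

variable {u w : Fin n} {r : Fin (n + 1)} {x : K}

lemma isMono_eB_left (hr : (r : ℕ) = 0) (hu : (u : ℕ) = 0) :
    IsMono (eB q cK ε x r) (fun _ => x) (dlt u) := by
  intro m
  unfold eB
  rw [mkEnd_single, if_pos hr, hu]
  rfl

lemma isMono_eB_right (hr : (r : ℕ) = n) (hu : (u : ℕ) + 1 = n) :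
    IsMono (eB q cK ε x r) (fun m => cK (qn q (m u))) (-dlt u) := by
  intro m
  unfold eB
  rw [mkEnd_single, if_neg (by omega), if_pos hr, show n - 1 = (u : ℕ) by omega, av_val, qnum_eq]
  rfl

lemma isMono_eB_mid (hr : (r : ℕ) = w) (huw : (u : ℕ) + 1 = w) :
    IsMono (eB q cK ε x r) (fun m => cK (qn q (m u))) (-dlt u + dlt w) := by
  intro m
  unfold eB
  have := w.isLt
  rw [mkEnd_single, if_neg (by omega), if_neg (by omega), show (r : ℕ) - 1 = (u : ℕ) by omega,
    av_val, qnum_eq, hr, ← add_assoc]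
  rfl

lemma isMono_fB_left (hr : (r : ℕ) = 0) (hu : (u : ℕ) = 0) :
    IsMono (fB q cK ε x r) (fun m => x⁻¹ * cK (qn q (m u))) (-dlt u) := by
  intro m
  unfold fB
  rw [mkEnd_single, if_pos hr, ← hu, av_val, qnum_eq]
  rfl

lemma isMono_fB_right (hr : (r : ℕ) = n) (hu : (u : ℕ) + 1 = n) :
    IsMono (fB q cK ε x r) (fun _ => 1) (dlt u) := by
  intro m
  unfold fB
  rw [mkEnd_single, if_neg (by omega), if_pos hr, show n - 1 = (u : ℕ) by omega, one_smul]
  rfl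

lemma isMono_fB_mid (hr : (r : ℕ) = w) (huw : (u : ℕ) + 1 = w) :
    IsMono (fB q cK ε x r) (fun m => cK (qn q (m w))) (dlt u - dlt w) := by
  intro m
  unfold fB
  have := w.isLt
  rw [mkEnd_single, if_neg (by omega), if_neg (by omega), show (r : ℕ) - 1 = (u : ℕ) by omega,
    hr, av_val, qnum_eq, ← add_sub_assoc]
  rfl

lemma isMono_kB_left (s : ℤ) (hr : (r : ℕ) = 0) (hu : (u : ℕ) = 0) :
    IsMono (kB q pc cK ε s r) (fun m => cK ((pc⁻¹ * ps q (ε u) ^ m u) ^ s)) 0 := by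
  intro m
  unfold kB
  rw [mkEnd_single, if_pos hr, ← hu, av_val, qc_val, add_zero, ket_toZ]
  rfl

lemma isMono_kB_right (s : ℤ) (hr : (r : ℕ) = n) (hu : (u : ℕ) + 1 = n) :
    IsMono (kB q pc cK ε s r) (fun m => cK ((pc * (ps q (ε u) ^ m u)⁻¹) ^ s)) 0 := by
  intro m
  unfold kB
  rw [mkEnd_single, if_neg (by omega), if_pos hr, show n - 1 = (u : ℕ) by omega, av_val, qc_val,
    add_zero, ket_toZ, zpow_neg]
  rfl

lemma isMono_kB_mid (s : ℤ) (hr : (r : ℕ) = w) (huw : (u : ℕ) + 1 = w) :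
    IsMono (kB q pc cK ε s r)
      (fun m => cK (((ps q (ε u) ^ m u)⁻¹ * ps q (ε w) ^ m w) ^ s)) 0 := by
  intro m
  unfold kB
  have := w.isLt
  rw [mkEnd_single, if_neg (by omega), if_neg (by omega), show (r : ℕ) - 1 = (u : ℕ) by omega,
    hr, av_val, av_val, qc_val, qc_val, add_zero, ket_toZ, zpow_neg]
  rfl

end monos

/-- A four-term relation may be checked on the coefficients of `z^N`. -/
lemma series_rel {c₁ c₂ c₃ c₄ : ℂ} {F₁ F₂ F₃ F₄ : ℤ → ℂ}
    (h : ∀ N, c₁ * F₁ N + c₂ * F₂ N = c₃ * F₃ N + c₄ * F₄ N) :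
    cK c₁ * mkZ F₁ + cK c₂ * mkZ F₂ = cK c₃ * mkZ F₃ + cK c₄ * mkZ F₄ := by
  simp only [mkZ_smul, mkZ_add]
  exact congrArg mkZ (funext h)

/-- The factor of `S̃₀^{1,1}(z)^{a,b}_{i,j}` produced by the gauge transformation. -/
def gf (pc : ℂ) (a j : Fin n → ℤ) : K := cK (pc ^ (∑ t, j t - ∑ t, a t))

lemma Smat_eq (a b i j : Fin n → ℤ) :
    Smat q pc ε a b i j = gf pc a j * mkZ (bdZ q ε a b i j) := rfl

lemma gf_sub (hpc : pc ≠ 0) (a j s : Fin n → ℤ) :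
    gf pc (a - s) j = cK (pc ^ (∑ t, s t)) * gf pc a j := by
  unfold gf
  rw [← map_mul, ← zpow_add₀ hpc]
  congr 2
  simp only [Pi.sub_apply, Finset.sum_sub_distrib]
  ring

lemma gf_add (hpc : pc ≠ 0) (a j s : Fin n → ℤ) :
    gf pc a (j + s) = cK (pc ^ (∑ t, s t)) * gf pc a j := by
  unfold gf
  rw [← map_mul, ← zpow_add₀ hpc]
  congr 2
  simp only [Pi.add_apply, Finset.sum_add_distrib]
  ring

lemma z_bdZ [NeZero n] (a b i j : Fin n → ℤ) :
    zK * mkZ (bdZ q ε a b i j) = mkZ fun N => bdZ q ε a b i j (N - 1) :=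
  zK_mul _ (bdZ_neg _ _ _ _ (by norm_num))

variable {u w : Fin n} {r : Fin (n + 1)}

lemma comm_e_mid [NeZero n] (hq0 : q ≠ 0) (hq : ∀ k : ℕ, k ≠ 0 → q ^ k ≠ 1) (hpc : pc ≠ 0)
    (hr : (r : ℕ) = w) (huw : (u : ℕ) + 1 = w) :
    dEB' q pc cK ε zK 1 r ∘ₗ S0bdT q pc ε = S0bdT q pc ε ∘ₗ dEB q pc cK ε zK 1 r := by
  have hne : w ≠ u := by rintro rfl; omega
  refine end_ext fun i j x y => ?_
  unfold dEB dEB'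
  set s : Fin n → ℤ := -dlt u + dlt w with hs
  have hsu : s u = -1 := by simp [hs, dlt_self, dlt_ne hne.symm]
  have hsw : s w = 1 := by simp [hs, dlt_self, dlt_ne hne]
  have hss : ∑ t, s t = 0 := by simp [hs, Finset.sum_add_distrib, sum_dlt]
  have hs0 : ∀ t, t ≠ u → t ≠ w → s t = 0 := by
    intro t h1 h2
    simp [hs, dlt_ne h1, dlt_ne h2]
  have M1 : IsMono (eB q cK ε zK r) _ s := isMono_eB_mid hr huw
  have M2 : IsMono (eB q cK ε 1 r) _ s := isMono_eB_mid hr huw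
  have M3 := isMono_kB_mid (q := q) (pc := pc) (ε := ε) 1 hr huw
  simp only [LinearMap.comp_apply, LinearMap.add_apply, map_add, Finsupp.add_apply]
  rw [opT_S hpc M1 isMono_id, opT_S hpc M3 M2, S_opT hpc isMono_id M2, S_opT hpc M1 M3]
  simp only [sub_zero, add_zero]
  simp only [Smat_eq, gf_sub hpc, gf_add hpc, hss, zpow_zero, zpow_one, map_one,
    one_mul, mul_one, Pi.sub_apply, hsu, sub_neg_eq_add]
  have key := series_rel (bdZ_mid_e hq0 hq huw (toZ_inR x) (toZ_inR y) (toZ_inR i) (toZ_inR j)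
    hs0 hsu hsw)
  simp only [map_mul] at key ⊢
  linear_combination gf pc (toZ x) (toZ j) * key

lemma comm_f_mid [NeZero n] (hq0 : q ≠ 0) (hq : ∀ k : ℕ, k ≠ 0 → q ^ k ≠ 1) (hpc : pc ≠ 0)
    (hr : (r : ℕ) = w) (huw : (u : ℕ) + 1 = w) :
    dFB' q pc cK ε zK 1 r ∘ₗ S0bdT q pc ε = S0bdT q pc ε ∘ₗ dFB q pc cK ε zK 1 r := by
  have hne : w ≠ u := by rintro rfl; omega
  refine end_ext fun i j x y => ?_
  unfold dFB dFB'
  set s : Fin n → ℤ := dlt u - dlt w with hs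
  have hsu : s u = 1 := by simp [hs, dlt_self, dlt_ne hne.symm]
  have hsw : s w = -1 := by simp [hs, dlt_self, dlt_ne hne]
  have hss : ∑ t, s t = 0 := by simp [hs, Finset.sum_sub_distrib, sum_dlt]
  have hs0 : ∀ t, t ≠ u → t ≠ w → s t = 0 := by
    intro t h1 h2
    simp [hs, dlt_ne h1, dlt_ne h2]
  have M1 : IsMono (fB q cK ε zK r) _ s := isMono_fB_mid hr huw
  have M2 : IsMono (fB q cK ε 1 r) _ s := isMono_fB_mid hr huw
  have M3 := isMono_kB_mid (q := q) (pc := pc) (ε := ε) (-1) hr huw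
  simp only [LinearMap.comp_apply, LinearMap.add_apply, map_add, Finsupp.add_apply]
  rw [opT_S hpc isMono_id M2, opT_S hpc M1 M3, S_opT hpc M1 isMono_id, S_opT hpc M3 M2]
  simp only [sub_zero, add_zero]
  simp only [Smat_eq, gf_sub hpc, gf_add hpc, hss, zpow_zero, zpow_neg_one,
    map_one, one_mul, mul_one, Pi.sub_apply, hsw, sub_neg_eq_add, mul_inv, inv_inv]
  have key := series_rel (bdZ_mid_f hq0 hq huw (toZ_inR x) (toZ_inR y) (toZ_inR i) (toZ_inR j)
    hs0 hsu hsw)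
  simp only [map_mul] at key ⊢
  linear_combination gf pc (toZ x) (toZ j) * key

lemma comm_e_left [NeZero n] (hq0 : q ≠ 0) (hq : ∀ k : ℕ, k ≠ 0 → q ^ k ≠ 1) (hpc : pc ≠ 0)
    (hpq : pc ^ 2 = -q⁻¹) (hr : (r : ℕ) = 0) (hu : (u : ℕ) = 0) :
    dEB' q pc cK ε zK 1 r ∘ₗ S0bdT q pc ε = S0bdT q pc ε ∘ₗ dEB q pc cK ε zK 1 r := by
  refine end_ext fun i j x y => ?_
  unfold dEB dEB'
  set s : Fin n → ℤ := dlt u with hs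
  have hsu : s u = 1 := dlt_self u
  have hs0 : ∀ t, t ≠ u → s t = 0 := fun t ht => dlt_ne ht
  have hss : ∑ t, s t = 1 := sum_dlt u
  have M1 : IsMono (eB q cK ε zK r) _ s := isMono_eB_left hr hu
  have M2 : IsMono (eB q cK ε 1 r) _ s := isMono_eB_left hr hu
  have M3 := isMono_kB_left (q := q) (pc := pc) (ε := ε) 1 hr hu
  simp only [LinearMap.comp_apply, LinearMap.add_apply, map_add, Finsupp.add_apply]
  rw [opT_S hpc M1 isMono_id, opT_S hpc M3 M2, S_opT hpc isMono_id M2, S_opT hpc M1 M3]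
  have hk : pc⁻¹ = -q * pc := by
    have : q * pc ^ 2 = -1 := by rw [hpq]; field_simp
    field_simp
    linear_combination this
  have key := series_rel (c₁ := pc) (c₂ := pc⁻¹ * ps q (ε u) ^ toZ x u) (c₃ := pc)
    (c₄ := pc⁻¹ * ps q (ε u) ^ toZ j u)
    (F₁ := fun N => bdZ q ε (toZ x - s) (toZ y) (toZ i) (toZ j) (N - 1))
    (F₂ := bdZ q ε (toZ x) (toZ y - s) (toZ i) (toZ j))
    (F₃ := bdZ q ε (toZ x) (toZ y) (toZ i) (toZ j + s))
    (F₄ := fun N => bdZ q ε (toZ x) (toZ y) (toZ i + s) (toZ j) (N - 1))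
    fun N => by
      have := bdZ_left_e hq0 hq hu (toZ_inR x) (toZ_inR y) (toZ_inR i) (toZ_inR j)
        hs0 hsu N
      rw [hk]
      linear_combination pc * this
  rw [← z_bdZ, ← z_bdZ] at key
  simp only [sub_zero, add_zero]
  simp only [Smat_eq, gf_sub hpc, gf_add hpc, hss, zpow_one,
    one_mul, mul_one]
  linear_combination gf pc (toZ x) (toZ j) * key

lemma comm_f_left [NeZero n] (hq0 : q ≠ 0) (hq : ∀ k : ℕ, k ≠ 0 → q ^ k ≠ 1) (hpc : pc ≠ 0)
    (hr : (r : ℕ) = 0) (hu : (u : ℕ) = 0) :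
    dFB' q pc cK ε zK 1 r ∘ₗ S0bdT q pc ε = S0bdT q pc ε ∘ₗ dFB q pc cK ε zK 1 r := by
  refine end_ext fun i j x y => ?_
  unfold dFB dFB'
  set s : Fin n → ℤ := -dlt u with hs
  have hsu : s u = -1 := by simp [hs, dlt_self]
  have hss : ∑ t, s t = -1 := by simp [hs, sum_dlt]
  have hs0 : ∀ t, t ≠ u → s t = 0 := by
    intro t h1
    simp [hs, dlt_ne h1]
  have M1 : IsMono (fB q cK ε zK r) _ s := isMono_fB_left hr hu
  have M2 : IsMono (fB q cK ε 1 r) _ s := isMono_fB_left hr hu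
  have M3 := isMono_kB_left (q := q) (pc := pc) (ε := ε) (-1) hr hu
  simp only [LinearMap.comp_apply, LinearMap.add_apply, map_add, Finsupp.add_apply]
  rw [opT_S hpc isMono_id M2, opT_S hpc M1 M3, S_opT hpc M1 isMono_id, S_opT hpc M3 M2]
  have key := series_rel (bdZ_left_f hq0 hq hu (toZ_inR x) (toZ_inR y) (toZ_inR i) (toZ_inR j)
    hs0 hsu)
  rw [← z_bdZ, ← z_bdZ] at key
  simp only [sub_zero, add_zero]
  simp only [Smat_eq, gf_sub hpc, gf_add hpc, hss, zpow_neg_one,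
    one_mul, mul_one, Pi.sub_apply, hsu, sub_neg_eq_add, mul_inv, inv_inv, inv_one]
  have hcp : cK pc * cK pc⁻¹ = 1 := by rw [← map_mul, mul_inv_cancel₀ hpc, map_one]
  -- the relation holds after clearing the factor `z⁻¹` of `f₀`
  refine mul_left_cancel₀ zK_ne ?_
  have hz : zK * zK⁻¹ = 1 := mul_inv_cancel₀ zK_ne
  simp only [map_mul] at key ⊢
  generalize zK⁻¹ = zi at *
  generalize cK pc⁻¹ = pi at *
  generalize mkZ (bdZ q ε (toZ x - s) (toZ y) (toZ i) (toZ j)) = A at *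
  generalize mkZ (bdZ q ε (toZ x) (toZ y - s) (toZ i) (toZ j)) = B at *
  generalize mkZ (bdZ q ε (toZ x) (toZ y) (toZ i + s) (toZ j)) = C at *
  generalize mkZ (bdZ q ε (toZ x) (toZ y) (toZ i) (toZ j + s)) = D at *
  generalize gf pc (toZ x) (toZ j) = g at *
  generalize cK pc = p at *
  generalize cK (qn q (toZ x u + 1)) = e1 at *
  generalize cK (ps q (ε u) ^ toZ y u)⁻¹ = e2 at *
  generalize cK (ps q (ε u) ^ toZ i u)⁻¹ = e3 at *
  generalize cK (qn q (toZ i u)) = e4 at *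
  generalize cK (qn q (toZ j u)) = e5 at *
  linear_combination g * key + (p * pi * e1 * e2 * g * A - e4 * g * C) * hz +
    (e1 * e2 * g * A - zK * e3 * e5 * g * D) * hcp

lemma comm_e_right [NeZero n] (hq0 : q ≠ 0) (hq : ∀ k : ℕ, k ≠ 0 → q ^ k ≠ 1) (hpc : pc ≠ 0)
    (hpq : pc ^ 2 = -q⁻¹) (hr : (r : ℕ) = n) (hu : (u : ℕ) + 1 = n) :
    dEB' q pc cK ε zK 1 r ∘ₗ S0bdT q pc ε = S0bdT q pc ε ∘ₗ dEB q pc cK ε zK 1 r := by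
  refine end_ext fun i j x y => ?_
  unfold dEB dEB'
  set s : Fin n → ℤ := -dlt u with hs
  have hsu : s u = -1 := by simp [hs, dlt_self]
  have hss : ∑ t, s t = -1 := by simp [hs, sum_dlt]
  have hs0 : ∀ t, t ≠ u → s t = 0 := by
    intro t h1
    simp [hs, dlt_ne h1]
  have M1 : IsMono (eB q cK ε zK r) _ s := isMono_eB_right hr hu
  have M2 : IsMono (eB q cK ε 1 r) _ s := isMono_eB_right hr hu
  have M3 := isMono_kB_right (q := q) (pc := pc) (ε := ε) 1 hr hu
  simp only [LinearMap.comp_apply, LinearMap.add_apply, map_add, Finsupp.add_apply]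
  rw [opT_S hpc M1 isMono_id, opT_S hpc M3 M2, S_opT hpc isMono_id M2, S_opT hpc M1 M3]
  have hk : pc = -q⁻¹ * pc⁻¹ := by
    rw [← hpq, pow_two, mul_inv_cancel_right₀ hpc]
  have key := series_rel (c₁ := pc⁻¹ * qn q (toZ x u + 1))
    (c₂ := pc * (ps q (ε u) ^ toZ x u)⁻¹ * qn q (toZ y u + 1)) (c₃ := pc⁻¹ * qn q (toZ j u))
    (c₄ := pc * qn q (toZ i u) * (ps q (ε u) ^ toZ j u)⁻¹)
    (F₁ := bdZ q ε (toZ x - s) (toZ y) (toZ i) (toZ j))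
    (F₂ := bdZ q ε (toZ x) (toZ y - s) (toZ i) (toZ j))
    (F₃ := bdZ q ε (toZ x) (toZ y) (toZ i) (toZ j + s))
    (F₄ := bdZ q ε (toZ x) (toZ y) (toZ i + s) (toZ j))
    fun N => by
      have := bdZ_right_e hq0 hq hu (toZ_inR x) (toZ_inR y) (toZ_inR i) (toZ_inR j) hs0 hsu N
      linear_combination pc⁻¹ * this +
        (bdZ q ε (toZ x) (toZ y - s) (toZ i) (toZ j) N * (ps q (ε u) ^ toZ x u)⁻¹ *
            qn q (toZ y u + 1) -
          bdZ q ε (toZ x) (toZ y) (toZ i + s) (toZ j) N * (ps q (ε u) ^ toZ j u)⁻¹ *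
            qn q (toZ i u)) * hk
  simp only [sub_zero, add_zero]
  simp only [Smat_eq, gf_sub hpc, gf_add hpc, hss, zpow_one, zpow_neg_one,
    one_mul, mul_one, Pi.sub_apply, hsu, sub_neg_eq_add]
  simp only [map_mul] at key ⊢
  linear_combination gf pc (toZ x) (toZ j) * key

lemma comm_f_right [NeZero n] (hq0 : q ≠ 0) (hq : ∀ k : ℕ, k ≠ 0 → q ^ k ≠ 1) (hpc : pc ≠ 0)
    (hr : (r : ℕ) = n) (hu : (u : ℕ) + 1 = n) :
    dFB' q pc cK ε zK 1 r ∘ₗ S0bdT q pc ε = S0bdT q pc ε ∘ₗ dFB q pc cK ε zK 1 r := by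
  refine end_ext fun i j x y => ?_
  unfold dFB dFB'
  set s : Fin n → ℤ := dlt u with hs
  have hsu : s u = 1 := dlt_self u
  have hs0 : ∀ t, t ≠ u → s t = 0 := fun t ht => dlt_ne ht
  have hss : ∑ t, s t = 1 := sum_dlt u
  have M1 : IsMono (fB q cK ε zK r) _ s := isMono_fB_right hr hu
  have M2 : IsMono (fB q cK ε 1 r) _ s := isMono_fB_right hr hu
  have M3 := isMono_kB_right (q := q) (pc := pc) (ε := ε) (-1) hr hu
  simp only [LinearMap.comp_apply, LinearMap.add_apply, map_add, Finsupp.add_apply]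
  rw [opT_S hpc isMono_id M2, opT_S hpc M1 M3, S_opT hpc M1 isMono_id, S_opT hpc M3 M2]
  have key := series_rel (c₁ := 1) (c₂ := ps q (ε u) ^ toZ y u) (c₃ := 1)
    (c₄ := ps q (ε u) ^ toZ i u)
    (F₁ := bdZ q ε (toZ x) (toZ y - s) (toZ i) (toZ j))
    (F₂ := bdZ q ε (toZ x - s) (toZ y) (toZ i) (toZ j))
    (F₃ := bdZ q ε (toZ x) (toZ y) (toZ i + s) (toZ j))
    (F₄ := bdZ q ε (toZ x) (toZ y) (toZ i) (toZ j + s))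
    fun N => by
    have := bdZ_right_f hq0 hq hu (toZ_inR x) (toZ_inR y) (toZ_inR i) (toZ_inR j)
      hs0 hsu N
    rw [one_mul, one_mul]
    exact this
  have hcp : cK pc * cK pc⁻¹ = 1 := by rw [← map_mul, mul_inv_cancel₀ hpc, map_one]
  simp only [sub_zero, add_zero]
  simp only [Smat_eq, gf_sub hpc, gf_add hpc, hss, zpow_one, zpow_neg_one,
    one_mul, mul_one, mul_inv, inv_inv]
  simp only [map_mul, map_one] at key ⊢
  linear_combination gf pc (toZ x) (toZ j) * key +
    (cK (ps q (ε u) ^ toZ y u) * gf pc (toZ x) (toZ j) *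
        mkZ (bdZ q ε (toZ x - s) (toZ y) (toZ i) (toZ j)) -
      cK (ps q (ε u) ^ toZ i u) * gf pc (toZ x) (toZ j) *
        mkZ (bdZ q ε (toZ x) (toZ y) (toZ i) (toZ j + s))) * hcp

/-- Diagonal operators commute with `S̃₀^{1,1}(z)` as soon as their eigenvalues on `|a⟩⊗|b⟩`
depend only on `a + b`. -/
lemma comm_diag [NeZero n] (hpc : pc ≠ 0) {A : W K ε →ₗ[K] W K ε} {f : (Fin n → ℤ) → K}
    (hA : IsMono A f 0)
    (hf : ∀ a b i j : Fin n → ℤ, a + b = i + j → f a * f b = f i * f j) :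
    opT K A A ∘ₗ S0bdT q pc ε = S0bdT q pc ε ∘ₗ opT K A A := by
  refine end_ext fun i j x y => ?_
  rw [LinearMap.comp_apply, LinearMap.comp_apply, opT_S hpc hA hA, S_opT hpc hA hA, sub_zero,
    sub_zero, add_zero, add_zero]
  by_cases h : toZ x + toZ y = toZ i + toZ j
  · rw [hf _ _ _ _ h]
  · rw [Smat_supp fun h' => h h'.2.2.2.2, mul_zero, mul_zero]

lemma ps_ne (hq0 : q ≠ 0) (e : Bool) : ps q e ≠ 0 := by
  unfold ps
  split_ifs
  · exact neg_ne_zero.2 (inv_ne_zero hq0)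
  · exact hq0

lemma comm_k [NeZero n] (hq0 : q ≠ 0) (hpc : pc ≠ 0) (s : ℤ) (r : Fin (n + 1)) :
    dKB q pc cK ε s r ∘ₗ S0bdT q pc ε = S0bdT q pc ε ∘ₗ dKB q pc cK ε s r := by
  have hn : 0 < n := Nat.pos_of_ne_zero (NeZero.ne n)
  have hpow : ∀ (u : Fin n) (a b i j : Fin n → ℤ), a + b = i + j →
      ps q (ε u) ^ a u * ps q (ε u) ^ b u = ps q (ε u) ^ i u * ps q (ε u) ^ j u := by
    intro u a b i j h
    rw [← zpow_add₀ (ps_ne hq0 _), ← zpow_add₀ (ps_ne hq0 _)]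
    congr 1
    exact congrFun h u
  have hpow' : ∀ (u : Fin n) (a b i j : Fin n → ℤ), a + b = i + j →
      (ps q (ε u) ^ a u)⁻¹ * (ps q (ε u) ^ b u)⁻¹ =
        (ps q (ε u) ^ i u)⁻¹ * (ps q (ε u) ^ j u)⁻¹ := by
    intro u a b i j h
    rw [← mul_inv, ← mul_inv, hpow u a b i j h]
  unfold dKB
  rcases Nat.eq_zero_or_pos (r : ℕ) with hr | hr
  · refine comm_diag hpc (isMono_kB_left (u := ⟨0, hn⟩) s hr rfl) fun a b i j h => ?_
    simp only [← map_mul, ← mul_zpow]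
    congr 2
    linear_combination pc⁻¹ * pc⁻¹ * hpow _ a b i j h
  rcases eq_or_ne (r : ℕ) n with hrn | hrn
  · refine comm_diag hpc (isMono_kB_right (u := ⟨n - 1, by omega⟩) s hrn
      (by simp only; omega)) fun a b i j h => ?_
    simp only [← map_mul, ← mul_zpow]
    congr 2
    linear_combination pc * pc * hpow' _ a b i j h
  · have := r.isLt
    refine comm_diag hpc (isMono_kB_mid (u := ⟨r - 1, by omega⟩) (w := ⟨r, by omega⟩) s rfl
      (by simp only; omega)) fun a b i j h => ?_
    simp only [← map_mul, ← mul_zpow]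
    congr 2
    rw [mul_mul_mul_comm, hpow' _ a b i j h, hpow _ a b i j h, mul_mul_mul_comm]

end generators

/-- the gauge-transformed boundary solution commutes with the
type-B generalized quantum group action, at `x = z`, `y = 1`. -/
theorem statement_1 (q qh : ℂ) (hq0 : q ≠ 0) (hqh : qh ^ 2 = q)
    (hq : ∀ k : ℕ, k ≠ 0 → q ^ k ≠ 1)
    (n : ℕ) [NeZero n] (ε : Fin n → Bool) (r : Fin (n + 1)) :
    dEB' q (Complex.I * qh⁻¹) cK ε zK 1 r ∘ₗ S0bdT q (Complex.I * qh⁻¹) ε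
        = S0bdT q (Complex.I * qh⁻¹) ε ∘ₗ dEB q (Complex.I * qh⁻¹) cK ε zK 1 r ∧
    dFB' q (Complex.I * qh⁻¹) cK ε zK 1 r ∘ₗ S0bdT q (Complex.I * qh⁻¹) ε
        = S0bdT q (Complex.I * qh⁻¹) ε ∘ₗ dFB q (Complex.I * qh⁻¹) cK ε zK 1 r ∧
    ∀ s : ℤ, s = 1 ∨ s = -1 →
      dKB q (Complex.I * qh⁻¹) cK ε s r ∘ₗ S0bdT q (Complex.I * qh⁻¹) ε
        = S0bdT q (Complex.I * qh⁻¹) ε ∘ₗ dKB q (Complex.I * qh⁻¹) cK ε s r := by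
  have hqh0 : qh ≠ 0 := by
    rintro rfl
    exact hq0 (by rw [← hqh]; norm_num)
  have hpc : Complex.I * qh⁻¹ ≠ 0 := mul_ne_zero Complex.I_ne_zero (inv_ne_zero hqh0)
  have hpq : (Complex.I * qh⁻¹) ^ 2 = -q⁻¹ := by
    rw [mul_pow, Complex.I_sq, inv_pow, hqh, neg_one_mul]
  have hn : 0 < n := Nat.pos_of_ne_zero (NeZero.ne n)
  have hrn := r.isLt
  rcases Nat.eq_zero_or_pos (r : ℕ) with h0 | h0
  · exact ⟨comm_e_left (u := ⟨0, hn⟩) hq0 hq hpc hpq h0 rfl,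
      comm_f_left (u := ⟨0, hn⟩) hq0 hq hpc h0 rfl, fun s _ => comm_k hq0 hpc s r⟩
  rcases eq_or_ne (r : ℕ) n with h1 | h1
  · have hu : n - 1 + 1 = n := by omega
    exact ⟨comm_e_right (u := ⟨n - 1, by omega⟩) hq0 hq hpc hpq h1 hu,
      comm_f_right (u := ⟨n - 1, by omega⟩) hq0 hq hpc h1 hu, fun s _ => comm_k hq0 hpc s r⟩
  · have huw : (r : ℕ) - 1 + 1 = r := by omega
    exact ⟨comm_e_mid (u := ⟨r - 1, by omega⟩) (w := ⟨r, by omega⟩) hq0 hq hpc rfl huw,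
      comm_f_mid (u := ⟨r - 1, by omega⟩) (w := ⟨r, by omega⟩) hq0 hq hpc rfl huw,
      fun s _ => comm_k hq0 hpc s r⟩

end TetraGQ
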